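/- arXiv:1806.02183 — 2 statements merged into one kernel-verified Lean document; each statement's English description precedes it below -/
import Mathlib

section
/- Let q be a prime power, k = 𝔽̄_q, and let C be the Dickson–Guralnick–Zieve curve with function field k(C). Then the set of Galois points for C equals the set of 𝔽_q-rational points of the projective plane: Δ(C) = ℙ²(𝔽_q). In particular, the number of Galois points for C is exactly q² + q + 1. -/
/-!
Write `v^q` for the Frobenius conjugate of a point or line `v`. The points `Q` with `D₁(Q) = 0` and
`D₂(Q) ≠ 0` are smooth points of the curve, with tangent line through `Q^q` and `Q^(q³)`: the
derivative of `D₁` sees only its first column. A linear form through `Q` vanishes to order at least two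
at `Q` if it is the tangent form (`IsDGZ.ramified`), and is a uniformizer otherwise
(`IsDGZ.unramified`).

Galois points are rational. If `P = [v]` is a Galois point, the Galois group acts transitively on the
places above a given place of `k(ℙ¹)`, so the projection from `P` cannot have both a ramified and an
unramified place over the same point (`not_isGalois_of_ramified_of_unramified`). For every non-rational
`P`, two such places lie on some line through `P`.
* If `P` is off the curve, or on a line over `𝔽_q` but not defined over `𝔽_(q²)`, a root count in a
  pencil of lines (`exists_line`) gives a line through `P` that is tangent at a point `Q` and passes
  through `Q^q` without being tangent there.
* If `P = Q^q` is on the curve, not on a line over `𝔽_q`, and not defined over `𝔽_(q³)`, the tangent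
  line at `Q` passes through `P` and `Q^(q³)`, and is not tangent at the latter point.
* If `P` is on the curve, not on a line over `𝔽_q`, but defined over `𝔽_(q³)`, the line through `P` and
  `P^q` meets the curve at `P` with multiplicity at least `q + 1`, and is not tangent at `P^q`.
* If `P` is defined over `𝔽_(q²)`, the curve has a local equation `ν^(q-1) = α^q`, up to units, at `P`
  and at `P^q`. The line through these two points, divided by another line through `P`, is a
  uniformizer at `P` and vanishes to order at least two at `P^q`.

Rational points are Galois. If `P` is rational, take `t = a / b` for linear forms `a, b` over `𝔽_q`
vanishing at `P`. As `D₁` is multiplied by a constant under linear substitutions over `𝔽_q`, each of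
the `q³` quotients `l / b`, with `l` a linear form over `𝔽_q`, is a root of the same trinomial of
degree `q³` over `k(t)`. Thus `k(C)` is the splitting field of a separable polynomial over `k(t)`.

The number of Galois points is then the number of points of `ℙ²(𝔽_q)`.
-/

open MvPolynomial

/-- The algebraic closure `k = 𝔽̄_q` of `𝔽_q`, `q = p^n`. -/
noncomputable abbrev DGZ_k (p n : ℕ) [Fact p.Prime] : Type :=
  AlgebraicClosure (GaloisField p n)

/-- The determinant `D₁ = det [[x, x^q, x^{q³}], [y, y^q, y^{q³}], [z, z^q, z^{q³}]]`
over the finite field `𝔽_q` with `q = p^n`. -/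
noncomputable def DGZ_D1 (p n : ℕ) [Fact p.Prime] : MvPolynomial (Fin 3) (GaloisField p n) :=
  Matrix.det (Matrix.of fun i j : Fin 3 =>
    (X i : MvPolynomial (Fin 3) (GaloisField p n)) ^ (![1, p ^ n, (p ^ n) ^ 3] j))

/-- The determinant `D₂ = det [[x, x^q, x^{q²}], [y, y^q, y^{q²}], [z, z^q, z^{q²}]]`
over the finite field `𝔽_q` with `q = p^n`. -/
noncomputable def DGZ_D2 (p n : ℕ) [Fact p.Prime] : MvPolynomial (Fin 3) (GaloisField p n) :=
  Matrix.det (Matrix.of fun i j : Fin 3 =>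
    (X i : MvPolynomial (Fin 3) (GaloisField p n)) ^ (![1, p ^ n, (p ^ n) ^ 2] j))

/-- The defining polynomial of the DGZ curve, regarded over the algebraic closure `k = 𝔽̄_q`. -/
noncomputable def DGZ_Fbar (p n : ℕ) [Fact p.Prime]
    (F : MvPolynomial (Fin 3) (GaloisField p n)) :
    MvPolynomial (Fin 3) (DGZ_k p n) :=
  MvPolynomial.map (algebraMap (GaloisField p n) (AlgebraicClosure (GaloisField p n))) F

/-- The dehomogenization `f(X, Y) = F(X, Y, 1) ∈ k[X, Y]` of the defining polynomial of the
DGZ curve. -/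
noncomputable def DGZ_affine (p n : ℕ) [Fact p.Prime]
    (F : MvPolynomial (Fin 3) (GaloisField p n)) : MvPolynomial (Fin 2) (DGZ_k p n) :=
  MvPolynomial.aeval ![X 0, X 1, 1] (DGZ_Fbar p n F)

/-- `P = [v] ∈ ℙ²(k)` is a Galois point for the DGZ curve `C`.  Here the function field
`k(C)` is presented as a field `L` with a `k`-algebra map `φ : k[X,Y] → L` (to be assumed
to have kernel `(F(X,Y,1))` and fraction-generating image), a linear form `a₀x + a₁y + a₂z`
vanishing at `P` restricts on the chart `z = 1` to `φ(a₀X + a₁Y + a₂)`, and `P` is a Galois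
point if for any two linearly independent linear forms `L₁, L₂` vanishing at `P` the
extension `k(C) / k(L₁/L₂)` is Galois. -/
def DGZ_IsGaloisPoint (p n : ℕ) [Fact p.Prime]
    (L : Type) [Field L] [Algebra (DGZ_k p n) L]
    (φ : MvPolynomial (Fin 2) (DGZ_k p n) →ₐ[DGZ_k p n] L)
    (v : Fin 3 → DGZ_k p n) : Prop :=
  ∀ a b : Fin 3 → DGZ_k p n,
    (∑ i : Fin 3, a i * v i = 0) → (∑ i : Fin 3, b i * v i = 0) →
    LinearIndependent (DGZ_k p n) ![a, b] →
    IsGalois ↥(IntermediateField.adjoin (DGZ_k p n)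
      {φ (C (a 0) * X 0 + C (a 1) * X 1 + C (a 2)) /
        φ (C (b 0) * X 0 + C (b 1) * X 1 + C (b 2))}) L

/-! ### Conjugacy of places in Galois extensions -/

/-- A valuation ring of the fraction field dominating a Dedekind domain `B` at a nonzero prime `M`
is the localization `B_M`. -/
theorem mem_valuationSubring_iff_fraction {B L : Type*} [CommRing B] [IsDedekindDomain B] [Field L]
    [Algebra B L] [IsFractionRing B L] (V : ValuationSubring L)
    (hB : ∀ b : B, V.valuation (algebraMap B L b) ≤ 1)
    (M : Ideal B) [M.IsPrime] (hM : ∀ b : B, b ∈ M ↔ V.valuation (algebraMap B L b) < 1)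
    (hM0 : M ≠ ⊥) (z : L) :
    V.valuation z ≤ 1 ↔ ∃ b c : B, c ∉ M ∧ z * algebraMap B L c = algebraMap B L b := by
  have hinj : Function.Injective (algebraMap B L) := IsFractionRing.injective B L
  have hunit : ∀ c : B, c ∉ M → V.valuation (algebraMap B L c) = 1 := fun c hc =>
    le_antisymm (hB c) (not_lt.1 fun h => hc ((hM c).2 h))
  constructor
  · intro hz
    obtain ⟨b, c, hc, rfl⟩ := IsFractionRing.div_surjective (A := B) z
    have hc0 : algebraMap B L c ≠ 0 := fun h =>
      nonZeroDivisors.ne_zero hc (hinj (by simpa using h))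
    have : IsDiscreteValuationRing (Localization.AtPrime M) :=
      IsLocalization.AtPrime.isDiscreteValuationRing_of_dedekind_domain B hM0 _
    have key : ∀ b c : B, algebraMap B (Localization.AtPrime M) b ∣ algebraMap B _ c →
        ∃ s d : B, s ∉ M ∧ c * s = b * d := by
      rintro b c ⟨w, hw⟩
      obtain ⟨d, s, rfl⟩ := IsLocalization.exists_mk'_eq M.primeCompl w
      refine ⟨s, d, s.2, ?_⟩
      have hinj' : Function.Injective (algebraMap B (Localization.AtPrime M)) :=
        IsLocalization.injective _ M.primeCompl_le_nonZeroDivisors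
      apply hinj'
      rw [map_mul, map_mul, hw, mul_assoc, IsLocalization.mk'_spec]
    rcases ValuationRing.dvd_total (algebraMap B (Localization.AtPrime M) c)
      (algebraMap B _ b) with h | h
    · obtain ⟨s, d, hs, h⟩ := key _ _ h
      refine ⟨d, s, hs, ?_⟩
      rw [div_mul_eq_mul_div, div_eq_iff hc0, ← map_mul, ← map_mul, h, mul_comm]
    · obtain ⟨s, d, hs, h⟩ := key _ _ h
      refine ⟨s, d, fun hd => ?_, ?_⟩
      · have h1 : V.valuation (algebraMap B L c) * V.valuation (algebraMap B L s) =
            V.valuation (algebraMap B L b) * V.valuation (algebraMap B L d) := by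
          rw [← map_mul, ← map_mul, ← map_mul, ← map_mul, h]
        rw [hunit s hs, mul_one] at h1
        rw [map_div₀, h1] at hz
        have hd1 := (hM d).1 hd
        have hc0' : V.valuation (algebraMap B L c) ≠ 0 := (map_ne_zero _).2 hc0
        rw [h1] at hc0'
        have hb0 := left_ne_zero_of_mul hc0'
        have hdd0 := right_ne_zero_of_mul hc0'
        rw [div_le_one₀ (zero_lt_iff.2 hc0')] at hz
        have : V.valuation (algebraMap B L b) * V.valuation (algebraMap B L d) <
            V.valuation (algebraMap B L b) * 1 := mul_lt_mul_of_pos_left hd1 (zero_lt_iff.2 hb0)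
        rw [mul_one] at this
        exact absurd hz (not_le.2 this)
      · rw [div_mul_eq_mul_div, div_eq_iff hc0, ← map_mul, ← map_mul, ← h, mul_comm]
  · rintro ⟨b, c, hc, h⟩
    have := congrArg V.valuation h
    rw [map_mul, hunit c hc, mul_one] at this
    rw [this]; exact hB b

open scoped Pointwise in
/-- Two places of a finite Galois extension lying over the same nonzero prime of `A` are conjugate
under the Galois group. -/
theorem exists_gal_conj {A K L : Type*} [CommRing A] [IsDedekindDomain A] [Field K] [Algebra A K]
    [IsFractionRing A K] [Field L] [Algebra K L] [Algebra A L] [IsScalarTower A K L]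
    [FiniteDimensional K L] [IsGalois K L] (V₀ V₁ : ValuationSubring L)
    (h₀ : ∀ a : A, V₀.valuation (algebraMap A L a) ≤ 1)
    (h₁ : ∀ a : A, V₁.valuation (algebraMap A L a) ≤ 1)
    (h : ∀ a : A, V₀.valuation (algebraMap A L a) < 1 ↔ V₁.valuation (algebraMap A L a) < 1)
    (s : A) (hs0 : s ≠ 0) (hs : V₀.valuation (algebraMap A L s) < 1) :
    ∃ g : L ≃ₐ[K] L, ∀ z : L, V₁.valuation z ≤ 1 ↔ V₀.valuation (g z) ≤ 1 := by
  let B := integralClosure A L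
  have : IsDedekindDomain B := integralClosure.isDedekindDomain A K L
  have : IsFractionRing B L := integralClosure.isFractionRing_of_finite_extension K L
  let := IsIntegralClosure.MulSemiringAction A K L B
  have : Algebra.IsInvariant A B Gal(L/K) := Algebra.isInvariant_of_isGalois A K L B
  have hsmul : ∀ (g : Gal(L/K)) (b : B), algebraMap B L (g • b) = g (algebraMap B L b) :=
    fun g b => algebraMap_galRestrictHom_apply A K L B g b
  have : SMulCommClass Gal(L/K) A B := ⟨fun g a b => by
    apply IsFractionRing.injective B L
    rw [hsmul, Algebra.smul_def, Algebra.smul_def, map_mul, map_mul, map_mul, hsmul]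
    congr 1
    rw [← IsScalarTower.algebraMap_apply A B L, IsScalarTower.algebraMap_apply A K L]
    exact g.commutes _⟩
  -- a valuation ring containing `A` contains its integral closure `B`
  have hV : ∀ V : ValuationSubring L, (∀ a : A, V.valuation (algebraMap A L a) ≤ 1) →
      ∀ b : B, V.valuation (algebraMap B L b) ≤ 1 := by
    intro V hV b
    have hle : (algebraMap A L).range ≤ V.toSubring := by
      rintro _ ⟨a, rfl⟩
      exact (V.valuation_le_one_iff _).1 (hV a)
    rw [V.valuation_le_one_iff]
    have hi : IsIntegral A (b : L) := b.2
    let : Algebra A V := (RingHom.codRestrict (algebraMap A L) V.toSubring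
      (fun a => hle ⟨a, rfl⟩)).toAlgebra
    have : IsScalarTower A V L := IsScalarTower.of_algebraMap_eq fun a => rfl
    have hi' : IsIntegral V (b : L) := hi.tower_top
    obtain ⟨y, hy⟩ := IsIntegrallyClosed.isIntegral_iff.1 hi'
    change (b : L) ∈ V
    rw [← hy]; exact y.2
  -- the centre of `V` on `B`
  let M : ∀ V : ValuationSubring L, (∀ a : A, V.valuation (algebraMap A L a) ≤ 1) → Ideal B :=
    fun V hA =>
    { carrier := {b | V.valuation (algebraMap B L b) < 1}
      add_mem' := fun {x y} hx hy => by
        simp only [Set.mem_ofPred_eq, map_add] at *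
        exact (V.valuation.map_add_lt hx hy)
      zero_mem' := by simp
      smul_mem' := fun c x hx => by
        simp only [Set.mem_ofPred_eq, smul_eq_mul, map_mul] at *
        exact mul_lt_one_of_nonneg_of_lt_one_right (hV V hA c) zero_le hx }
  have hMp : ∀ V hA, (M V hA).IsPrime := fun V hA => by
    refine ⟨?_, ?_⟩
    · rw [Ideal.ne_top_iff_one]
      intro h1
      have : V.valuation (algebraMap B L 1) < 1 := h1
      simp at this
    · intro x y hxy
      by_contra! hc
      have h1 : V.valuation (algebraMap B L x) = 1 := le_antisymm (hV V hA x) (not_lt.1 hc.1)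
      have h2 : V.valuation (algebraMap B L y) = 1 := le_antisymm (hV V hA y) (not_lt.1 hc.2)
      have : V.valuation (algebraMap B L (x * y)) < 1 := hxy
      rw [map_mul, map_mul, h1, h2, mul_one] at this
      exact lt_irrefl _ this
  have hsne : algebraMap A B s ≠ 0 := by
    intro h0
    have : algebraMap A L s = 0 := by
      rw [IsScalarTower.algebraMap_apply A B L, h0, map_zero]
    rw [IsScalarTower.algebraMap_apply A K L] at this
    have := (map_eq_zero _).1 this
    exact hs0 (IsFractionRing.injective A K (by simpa using this))
  have hM0 : M V₀ h₀ ≠ ⊥ := by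
    rw [Submodule.ne_bot_iff]
    exact ⟨algebraMap A B s, hs, hsne⟩
  have hM1 : M V₁ h₁ ≠ ⊥ := by
    rw [Submodule.ne_bot_iff]
    exact ⟨algebraMap A B s, (h s).1 hs, hsne⟩
  have := hMp V₀ h₀
  have := hMp V₁ h₁
  obtain ⟨g, hg⟩ := Algebra.IsInvariant.exists_smul_of_under_eq A B Gal(L/K)
    (M V₁ h₁) (M V₀ h₀) (by
      ext a
      exact (h a).symm)
  refine ⟨g, fun z => ?_⟩
  rw [mem_valuationSubring_iff_fraction V₁ (hV V₁ h₁) (M V₁ h₁) (fun _ => Iff.rfl) hM1,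
    mem_valuationSubring_iff_fraction V₀ (hV V₀ h₀) (M V₀ h₀) (fun _ => Iff.rfl) hM0]
  constructor
  · rintro ⟨b, c, hc, hbc⟩
    refine ⟨g • b, g • c, ?_, ?_⟩
    · rw [hg, Ideal.smul_mem_pointwise_smul_iff]; exact hc
    · rw [hsmul, hsmul, ← hbc, map_mul]
  · rintro ⟨b, c, hc, hbc⟩
    refine ⟨g⁻¹ • b, g⁻¹ • c, ?_, ?_⟩
    · rw [hg, Ideal.mem_pointwise_smul_iff_inv_smul_mem] at hc; exact hc
    · rw [hsmul, hsmul, ← hbc, map_mul]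
      congr 1
      exact (g.symm_apply_apply z).symm

theorem finiteDimensional_of_isAlgebraic {k L : Type*} [Field k] [Field L] [Algebra k L]
    (y : Fin 2 → L) (hfrac : ∀ z : L, ∃ a b : MvPolynomial (Fin 2) k,
      aeval y b ≠ 0 ∧ z = aeval y a / aeval y b)
    (K : IntermediateField k L) [Algebra.IsAlgebraic K L] : FiniteDimensional K L := by
  have hfin := IntermediateField.finiteDimensional_adjoin (K := K) (S := Set.range y)
    (fun x _ => (Algebra.IsAlgebraic.isAlgebraic (R := K) x).isIntegral)
  have htop : IntermediateField.adjoin K (Set.range y) = ⊤ := by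
    rw [eq_top_iff]
    intro z _
    obtain ⟨a, b, -, rfl⟩ := hfrac z
    have : ∀ a : MvPolynomial (Fin 2) k, aeval y a ∈ IntermediateField.adjoin K (Set.range y) := by
      intro a
      induction a using MvPolynomial.induction_on with
      | C c =>
        rw [aeval_C]
        have := (IntermediateField.adjoin K (Set.range y)).algebraMap_mem (algebraMap k K c)
        rwa [← IsScalarTower.algebraMap_apply] at this
      | add p q hp hq => rw [map_add]; exact add_mem hp hq
      | mul_X p i hp =>
        rw [map_mul, aeval_X]
        exact mul_mem hp (IntermediateField.subset_adjoin _ _ ⟨i, rfl⟩)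
    exact div_mem (this a) (this b)
  rw [htop] at hfin
  exact Module.Finite.equiv (IntermediateField.topEquiv (F := K) (E := L)).toLinearEquiv

open Polynomial IntermediateField.algebraAdjoinAdjoin in
/-- Let `s` vanish at two places of `L`, to order at least two at `V₀` and as a uniformizer at
`V₁`. Both places lie over `s = 0`, so they would be conjugate if `L` were Galois over `k(s)`, and
the orders of vanishing of `s` would agree. -/
theorem not_isGalois_of_ramified_of_unramified {k L : Type*} [Field k] [Field L] [Algebra k L]
    (s : L) (hs : s ≠ 0) [hG : IsGalois (IntermediateField.adjoin k {s}) L]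
    [FiniteDimensional (IntermediateField.adjoin k {s}) L]
    (V₀ V₁ : ValuationSubring L)
    (hk₀ : ∀ c : k, V₀.valuation (algebraMap k L c) ≤ 1)
    (hk₁ : ∀ c : k, V₁.valuation (algebraMap k L c) ≤ 1)
    (t : L) (ht : V₀.valuation t < 1) (hst : V₀.valuation s ≤ V₀.valuation t ^ 2)
    (hs₁ : V₁.valuation s < 1) (hgen : ∀ z, V₁.valuation z < 1 → V₁.valuation z ≤ V₁.valuation s) :
    False := by
  classical
  let A := Algebra.adjoin k {s}
  have hp_all : ∀ z ∈ A, ∃ p : k[X], Polynomial.aeval s p = z := by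
    intro z hz
    have hz' : z ∈ Algebra.adjoin k {s} := hz
    rw [Algebra.adjoin_singleton_eq_range_aeval] at hz'
    exact hz'
  have : IsPrincipalIdealRing A := by
    have hsurj : Function.Surjective ((Polynomial.aeval s : k[X] →ₐ[k] L).codRestrict A
        fun p => aeval_mem_adjoin_singleton k s) := by
      rintro ⟨z, hz⟩
      obtain ⟨p, hp⟩ := hp_all z hz
      exact ⟨p, Subtype.ext hp⟩
    exact IsPrincipalIdealRing.of_surjective _ hsurj
  have hs₀ : V₀.valuation s < 1 := by
    refine lt_of_le_of_lt hst ?_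
    exact pow_lt_one₀ zero_le ht two_ne_zero
  have hval : ∀ V : ValuationSubring L, (∀ c : k, V.valuation (algebraMap k L c) ≤ 1) →
      V.valuation s < 1 → ∀ p : k[X], V.valuation (Polynomial.aeval s p) ≤ 1 ∧
        (V.valuation (Polynomial.aeval s p) < 1 ↔ p.coeff 0 = 0) := by
    intro V hk hs p
    have h1 : ∀ p : k[X], V.valuation (Polynomial.aeval s p) ≤ 1 := by
      intro p
      induction p using Polynomial.induction_on' with
      | add p q hp hq => rw [map_add]; exact (V.valuation.map_add_le hp hq)
      | monomial n c =>
        rw [Polynomial.aeval_monomial, map_mul, map_pow]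
        exact mul_le_one' (hk c) (pow_le_one' hs.le n)
    refine ⟨h1 p, ?_⟩
    have hX : V.valuation (Polynomial.aeval s (p.divX * Polynomial.X)) < 1 := by
      rw [map_mul, map_mul, Polynomial.aeval_X]
      exact mul_lt_one_of_nonneg_of_lt_one_right (h1 _) zero_le hs
    constructor
    · intro h
      by_contra hc
      have h2 : V.valuation (algebraMap k L (p.coeff 0)) < 1 := by
        have : algebraMap k L (p.coeff 0) = Polynomial.aeval s p - Polynomial.aeval s (p.divX * Polynomial.X) := by
          have h2 := congrArg (Polynomial.aeval s) p.divX_mul_X_add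
          rw [map_add, Polynomial.aeval_C] at h2
          rw [← h2, add_sub_cancel_left]
        rw [this]
        exact V.valuation.map_sub_lt h hX
      have h3 := hk (p.coeff 0)⁻¹
      have : V.valuation (algebraMap k L (p.coeff 0)) *
          V.valuation (algebraMap k L (p.coeff 0)⁻¹) = 1 := by
        rw [← map_mul, ← map_mul, mul_inv_cancel₀ hc, map_one, map_one]
      exact absurd this (mul_lt_one_of_nonneg_of_lt_one_left zero_le h2 h3).ne
    · intro h
      rw [← p.divX_mul_X_add, h, Polynomial.C_0, add_zero]; exact hX
  obtain ⟨g, hg⟩ := exists_gal_conj (A := A) (K := IntermediateField.adjoin k {s}) V₀ V₁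
    (fun a => by obtain ⟨p, hp⟩ := hp_all a a.2; change V₀.valuation (a : L) ≤ 1
                 rw [← hp]; exact (hval V₀ hk₀ hs₀ p).1)
    (fun a => by obtain ⟨p, hp⟩ := hp_all a a.2; change V₁.valuation (a : L) ≤ 1
                 rw [← hp]; exact (hval V₁ hk₁ hs₁ p).1)
    (fun a => by
      obtain ⟨p, hp⟩ := hp_all a a.2
      change V₀.valuation (a : L) < 1 ↔ V₁.valuation (a : L) < 1
      rw [← hp, (hval V₀ hk₀ hs₀ p).2, (hval V₁ hk₁ hs₁ p).2])
    ⟨s, Algebra.self_mem_adjoin_singleton k s⟩ (fun h => hs (congrArg Subtype.val h)) hs₀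
  have hgs : g s = s :=
    g.commutes ⟨s, IntermediateField.mem_adjoin_simple_self k s⟩
  -- `g⁻¹ t` has positive valuation at `V₁`, hence is divisible there by `s = g s`; applying `g`, `t` is
  -- divisible by `s` at `V₀`
  have ht0 : t ≠ 0 := by
    rintro rfl
    rw [map_zero, zero_pow two_ne_zero, le_zero_iff, map_eq_zero] at hst
    exact hs hst
  have hlt : V₁.valuation (g.symm t) < 1 := by
    by_contra! hc
    have h1 : V₁.valuation (g.symm t)⁻¹ ≤ 1 := by
      rw [map_inv₀]; exact inv_le_one_of_one_le₀ hc
    rw [hg, map_inv₀, AlgEquiv.apply_symm_apply, map_inv₀] at h1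
    exact absurd ht (not_lt.2 ((inv_le_one₀ (zero_lt_iff.2 ((_root_.map_ne_zero _).2 ht0))).1 h1))
  have hle : V₁.valuation (g.symm t / s) ≤ 1 := by
    rw [map_div₀, div_le_one₀ (zero_lt_iff.2 ((_root_.map_ne_zero _).2 hs))]
    exact hgen _ hlt
  rw [hg, map_div₀, hgs, AlgEquiv.apply_symm_apply, map_div₀,
    div_le_one₀ (zero_lt_iff.2 ((_root_.map_ne_zero _).2 hs))] at hle
  have := hle.trans hst
  rw [sq] at this
  have h2 : V₀.valuation t * V₀.valuation t < V₀.valuation t * 1 :=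
    mul_lt_mul_of_pos_left ht (zero_lt_iff.2 ((_root_.map_ne_zero _).2 ht0))
  rw [mul_one] at h2
  exact absurd this (not_le.2 h2)

/-! ### Places centred at points -/

/-- Every point `c` of the affine variety with generic point `y` is the centre of a place of `L`. -/
theorem exists_valuationSubring_center {k L ι : Type*} [Field k] [Field L] [Algebra k L]
    (y : ι → L) (c : ι → k) (h : ∀ f : MvPolynomial ι k, aeval y f = 0 → eval c f = 0) :
    ∃ V : ValuationSubring L, (∀ a : k, V.valuation (algebraMap k L a) ≤ 1) ∧
      ∀ i, V.valuation (y i - algebraMap k L (c i)) < 1 := by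
  let A : Subring L := (aeval (R := k) y).range.toSubring
  let e : MvPolynomial ι k →+* A := (aeval (R := k) y).rangeRestrict.toRingHom
  have he : Function.Surjective e := (aeval (R := k) y).rangeRestrict_surjective
  let I : Ideal A := (RingHom.ker (eval c)).map e
  have hI : I ≠ ⊤ := by
    rw [Ideal.ne_top_iff_one]
    intro h1
    obtain ⟨f, hf, hf1⟩ := (Ideal.mem_map_iff_of_surjective e he).1 h1
    have : aeval y (f - 1) = 0 := by
      have : aeval y f = (1 : L) := congrArg Subtype.val hf1
      rw [map_sub, this, map_one, sub_self]
    have := h _ this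
    rw [map_sub, map_one, (RingHom.mem_ker).1 hf] at this
    simp at this
  obtain ⟨V, hAV, hIV⟩ := Ideal.image_subset_nonunits_valuationSubring I hI
  refine ⟨V, fun a => ?_, fun i => ?_⟩
  · rw [V.valuation_le_one_iff]
    exact hAV ⟨C a, by simp⟩
  · have : y i - algebraMap k L (c i) = A.subtype (e (X i - C (c i))) := by
      change _ = aeval y (X i - C (c i))
      simp
    rw [this]
    apply hIV
    refine ⟨_, Ideal.mem_map_of_mem e ?_, rfl⟩
    rw [RingHom.mem_ker]; simp

/-- If `s` generates the maximal ideal `m` modulo `m²`, then `s` is a uniformizer at every place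
centred at `m`: by Nakayama's lemma `s` generates the maximal ideal of the local ring, and by Krull's
intersection theorem every element of the local ring is a unit times a power of `s`. -/
theorem valuation_le_of_cotangent {k L : Type*} [Field k] [Field L] [Algebra k L]
    (A : Subalgebra k L) [IsNoetherianRing A] (m : Ideal A) (V : ValuationSubring L)
    (hk : ∀ a : k, V.valuation (algebraMap k L a) ≤ 1)
    (hm : ∀ a ∈ m, V.valuation (a : L) < 1)
    (hdec : ∀ a : A, ∃ c : k, a - algebraMap k A c ∈ m)
    (hfrac : ∀ z : L, ∃ a b : A, b ≠ 0 ∧ z = a / b)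
    (s : A) (hs : s ∈ m) (h : m ≤ Ideal.span {s} ⊔ m * m) (z : L) (hz : V.valuation z < 1) :
    V.valuation z ≤ V.valuation (s : L) := by
  have hunit : ∀ u : A, u ∉ m → V.valuation (u : L) = 1 := by
    intro u hu
    obtain ⟨c, hc⟩ := hdec u
    have hc0 : c ≠ 0 := by rintro rfl; simp at hc; exact hu hc
    have h1 : V.valuation (algebraMap k L c) = 1 := by
      apply le_antisymm (hk c)
      by_contra! hlt
      have : V.valuation (algebraMap k L c) * V.valuation (algebraMap k L c⁻¹) = 1 := by
        rw [← map_mul, ← map_mul, mul_inv_cancel₀ hc0, map_one, map_one]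
      exact absurd this (mul_lt_one_of_nonneg_of_lt_one_left zero_le hlt (hk _)).ne
    have h2 := hm _ hc
    have : (u : L) = ((u - algebraMap k A c : A) : L) + algebraMap k L c := by
      simp
    rw [this, Valuation.map_add_eq_of_lt_right, h1]
    rw [h1]; exact h2
  have hmtop : m ≠ ⊤ := by
    rw [Ideal.ne_top_iff_one]
    intro h1
    simpa using hm 1 h1
  obtain ⟨r, hr1, hr⟩ := Submodule.exists_sub_one_mem_and_smul_le_of_fg_of_le_sup
    (I := m) (N := Ideal.span {s}) (N' := m) (P := m) (IsNoetherian.noetherian m) le_rfl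
    (by rwa [smul_eq_mul])
  have hmul : ∀ a ∈ m, ∃ b, r * a = s * b := by
    intro a ha
    have := hr (Submodule.smul_mem_pointwise_smul a r m ha)
    obtain ⟨b, hb⟩ := Ideal.mem_span_singleton.1 this
    exact ⟨b, hb⟩
  have hrm : r ∉ m := fun hrm => hmtop ((Ideal.eq_top_iff_one m).2 (by
    have := sub_mem hrm hr1; simpa using this))
  have main : ∀ n : ℕ, ∀ a : A, a ∉ m ^ n → ∃ j : ℕ, V.valuation (a : L) = V.valuation (s : L) ^ j := by
    intro n
    induction n with
    | zero => intro a ha; simp at ha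
    | succ n ih =>
      intro a ha
      by_cases ham : a ∈ m
      · obtain ⟨b, hb⟩ := hmul a ham
        have hbn : b ∉ m ^ n := by
          intro hbn
          apply ha
          have h1 : r * a ∈ m ^ (n + 1) := by
            rw [hb, pow_succ']; exact Ideal.mul_mem_mul hs hbn
          have hcop : IsCoprime (Ideal.span {r}) m := by
            rw [Ideal.isCoprime_iff_exists]
            exact ⟨r, Ideal.mem_span_singleton_self r, 1 - r, by
              have := m.neg_mem hr1; simpa using this, by ring⟩
          obtain ⟨x, hx, w, hw, hxw⟩ := Ideal.isCoprime_iff_exists.1 (hcop.pow_right (n := n + 1))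
          obtain ⟨x', rfl⟩ := Ideal.mem_span_singleton'.1 hx
          have : a = x' * (r * a) + a * w := by
            linear_combination (-a) * hxw
          rw [this]
          exact add_mem (Ideal.mul_mem_left _ _ h1) (Ideal.mul_mem_left _ _ hw)
        obtain ⟨j, hj⟩ := ih b hbn
        refine ⟨j + 1, ?_⟩
        have := congrArg (fun t : A => V.valuation (t : L)) hb
        simp only [MulMemClass.coe_mul, map_mul] at this
        rw [hunit r hrm, one_mul, hj] at this
        rw [this, pow_succ']
      · exact ⟨0, by rw [hunit a ham, pow_zero]⟩
  have main' : ∀ a : A, a ≠ 0 → ∃ j : ℕ, V.valuation (a : L) = V.valuation (s : L) ^ j := by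
    intro a ha
    have hk := Ideal.iInf_pow_eq_bot_of_isDomain m hmtop
    have : a ∉ ⨅ i : ℕ, m ^ i := by rw [hk]; simpa using ha
    rw [Submodule.mem_iInf] at this
    push Not at this
    obtain ⟨n, hn⟩ := this
    exact main n a hn
  by_cases hz0 : z = 0
  · rw [hz0, map_zero]; exact zero_le
  obtain ⟨a, b, hb, rfl⟩ := hfrac z
  have ha : a ≠ 0 := by rintro rfl; simp at hz0
  obtain ⟨i, hi⟩ := main' a ha
  obtain ⟨j, hj⟩ := main' b hb
  have hs1 := hm s hs
  have hb0 : V.valuation (b : L) ≠ 0 := by simpa using hb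
  rw [map_div₀, div_lt_one₀ (zero_lt_iff.2 hb0), hi, hj] at hz
  have hij : j + 1 ≤ i := by
    by_contra! hlt
    exact absurd hz (not_lt.2 (pow_le_pow_right_of_le_one' hs1.le (by omega)))
  rw [map_div₀, div_le_iff₀ (zero_lt_iff.2 hb0), hi, hj, ← pow_succ']
  exact pow_le_pow_right_of_le_one' hs1.le hij

/-- The polynomial form of `valuation_le_of_cotangent`: near the point `c` of the curve with generic
point `y`, the polynomial `S` is a uniformizer as soon as both coordinate functions are multiples of
`S` modulo the square of the maximal ideal of `c`. -/
theorem valuation_le_of_span {k L : Type*} [Field k] [Field L] [Algebra k L]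
    (y : Fin 2 → L) (c : Fin 2 → k)
    (hfrac : ∀ z : L, ∃ a b : MvPolynomial (Fin 2) k, aeval y b ≠ 0 ∧ z = aeval y a / aeval y b)
    (V : ValuationSubring L) (hk : ∀ a : k, V.valuation (algebraMap k L a) ≤ 1)
    (hV : ∀ i, V.valuation (y i - algebraMap k L (c i)) < 1)
    (S : MvPolynomial (Fin 2) k) (hS : eval c S = 0)
    (h : ∀ i, ∃ u : MvPolynomial (Fin 2) k, ∃ w ∈ RingHom.ker (eval c) * RingHom.ker (eval c),
      aeval y (X i - C (c i) - u * S - w) = 0) (z : L) (hz : V.valuation z < 1) :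
    V.valuation z ≤ V.valuation (aeval y S) := by
  let A := (aeval (R := k) y).range
  let e : MvPolynomial (Fin 2) k →ₐ[k] A := (aeval (R := k) y).rangeRestrict
  have he : Function.Surjective e := (aeval (R := k) y).rangeRestrict_surjective
  have hee : ∀ f, ((e f : A) : L) = aeval (R := k) y f := fun f => rfl
  have : IsNoetherianRing A := isNoetherianRing_of_surjective _ _ e.toRingHom he
  have hker : RingHom.ker (eval c) = Ideal.span (Set.range fun i => X i - C (c i)) := by
    apply le_antisymm
    · intro f hf
      have key : ∀ f : MvPolynomial (Fin 2) k,
          f - C (eval c f) ∈ Ideal.span (Set.range fun i => X i - C (c i)) := by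
        intro f
        induction f using MvPolynomial.induction_on with
        | C a => simp
        | add p q hp hq =>
          have := add_mem hp hq
          rw [map_add, map_add]; convert this using 1; ring
        | mul_X p i hp =>
          have h1 : (X i - C (c i) : MvPolynomial (Fin 2) k) ∈
            Ideal.span (Set.range fun i => X i - C (c i)) := Ideal.subset_span ⟨i, rfl⟩
          have := add_mem (Ideal.mul_mem_left _ p h1) (Ideal.mul_mem_left _ (C (c i)) hp)
          convert this using 1
          rw [map_mul, map_mul, eval_X]; ring
      have := key f
      rwa [(RingHom.mem_ker).1 hf, map_zero, sub_zero] at this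
    · rw [Ideal.span_le]
      rintro _ ⟨i, rfl⟩
      simp [RingHom.mem_ker]
  let m : Ideal A := (RingHom.ker (eval c)).map e
  have hval : ∀ f, V.valuation (aeval (R := k) y f) ≤ 1 := by
    intro f
    induction f using MvPolynomial.induction_on with
    | C a => rw [aeval_C]; exact hk a
    | add p q hp hq => rw [map_add]; exact V.valuation.map_add_le hp hq
    | mul_X p i hp =>
      rw [map_mul, map_mul, aeval_X]
      refine mul_le_one' hp ?_
      have := V.valuation.map_add_le (hV i).le (hk (c i))
      rwa [sub_add_cancel] at this
  have hmem : ∀ f ∈ RingHom.ker (eval c), V.valuation (aeval y f) < 1 := by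
    intro f hf
    rw [hker] at hf
    induction hf using Submodule.span_induction with
    | mem x hx =>
      obtain ⟨i, rfl⟩ := hx
      simpa using hV i
    | zero => simp
    | add x y _ _ hx hy => rw [map_add]; exact V.valuation.map_add_lt hx hy
    | smul a x _ hx =>
      rw [smul_eq_mul, map_mul, map_mul]
      exact mul_lt_one_of_nonneg_of_lt_one_right (hval a) zero_le hx
  have := valuation_le_of_cotangent A m V hk ?_ ?_ ?_ (e S) (Ideal.mem_map_of_mem e hS) ?_ z hz
  · exact this
  · intro a ha
    obtain ⟨f, hf, rfl⟩ := (Ideal.mem_map_iff_of_surjective e he).1 ha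
    exact hmem f hf
  · intro a
    obtain ⟨f, rfl⟩ := he a
    refine ⟨eval c f, ?_⟩
    have h1 : f - C (eval c f) ∈ RingHom.ker (eval c) := by simp [RingHom.mem_ker]
    have := Ideal.mem_map_of_mem e h1
    rw [map_sub] at this
    convert this using 2
    exact (e.commutes _).symm
  · intro z
    obtain ⟨a, b, hb, rfl⟩ := hfrac z
    exact ⟨e a, e b, fun h => hb (congrArg Subtype.val h), rfl⟩
  · change (RingHom.ker (eval c)).map e ≤ _
    rw [Ideal.map_le_iff_le_comap]
    nth_rewrite 1 [hker]
    rw [Ideal.span_le]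
    rintro _ ⟨i, rfl⟩
    obtain ⟨u, w, hw, huw⟩ := h i
    change e (X i - C (c i)) ∈ Ideal.span {e S} ⊔ m * m
    have h0 : e (X i - C (c i) - u * S - w) = 0 := Subtype.ext huw
    have : e (X i - C (c i)) = e u * e S + e w := by
      have h1 : e (X i - C (c i) - u * S - w) = e (X i - C (c i)) - e u * e S - e w := by
        rw [map_sub, map_sub _ _ (u * S), map_mul]
      rw [h1] at h0
      linear_combination h0
    rw [this]
    refine Submodule.add_mem_sup (Ideal.mem_span_singleton'.2 ⟨_, rfl⟩) ?_
    rw [← Ideal.map_mul]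
    exact Ideal.mem_map_of_mem e hw

/-! ### Linear algebra of triples -/

/-- The determinant of the matrix with rows `u`, `v`, `w`. -/
def tri {R : Type*} [CommRing R] (u v w : Fin 3 → R) : R :=
  u 0 * (v 1 * w 2 - v 2 * w 1) - u 1 * (v 0 * w 2 - v 2 * w 0) + u 2 * (v 0 * w 1 - v 1 * w 0)

/-- The pairing of a linear form with a vector, both given by their coordinates. -/
def dt {R : Type*} [CommRing R] (u v : Fin 3 → R) : R := u 0 * v 0 + u 1 * v 1 + u 2 * v 2

/-- The cross product: the line through two points, or the intersection point of two lines. -/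
def cr {R : Type*} [CommRing R] (u v : Fin 3 → R) : Fin 3 → R :=
  ![u 1 * v 2 - u 2 * v 1, u 2 * v 0 - u 0 * v 2, u 0 * v 1 - u 1 * v 0]

/-- A ring homomorphism applied to each coordinate. -/
def fr {R S : Type*} [CommRing R] [CommRing S] (σ : R →+* S) (v : Fin 3 → R) : Fin 3 → S :=
  fun i => σ (v i)

section CommRing

variable {R S : Type*} [CommRing R] [CommRing S] (σ : R →+* S)

@[simp] theorem fr_apply (v : Fin 3 → R) (i : Fin 3) : fr σ v i = σ (v i) := rfl

theorem tri_fr (u v w : Fin 3 → R) : tri (fr σ u) (fr σ v) (fr σ w) = σ (tri u v w) := by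
  simp [tri]

theorem dt_fr (u v : Fin 3 → R) : dt (fr σ u) (fr σ v) = σ (dt u v) := by simp [dt]

theorem cr_fr (u v : Fin 3 → R) : cr (fr σ u) (fr σ v) = fr σ (cr u v) := by
  funext i; fin_cases i <;> simp [cr]

theorem fr_smul (c : R) (v : Fin 3 → R) : fr σ (c • v) = σ c • fr σ v := by
  funext i; simp

theorem fr_add (u v : Fin 3 → R) : fr σ (u + v) = fr σ u + fr σ v := by
  funext i; simp

theorem fr_fr {T : Type*} [CommRing T] (ρ : S →+* T) (v : Fin 3 → R) :
    fr ρ (fr σ v) = fr (ρ.comp σ) v := rfl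

theorem fr_eq_zero {k S : Type*} [Field k] [CommRing S] [Nontrivial S] (σ : k →+* S)
    {v : Fin 3 → k} : fr σ v = 0 ↔ v = 0 := by
  constructor
  · intro h
    funext i
    have := congrFun h i
    simpa using this
  · rintro rfl; funext i; simp

/-- The value of `D₁` at `x`, with `σ` in the role of the `q`-power Frobenius. -/
def d1 (σ : R →+* R) (x : Fin 3 → R) : R := tri x (fr σ x) (fr σ (fr σ (fr σ x)))

/-- The value of `D₂` at `x`, with `σ` in the role of the `q`-power Frobenius. -/
def d2 (σ : R →+* R) (x : Fin 3 → R) : R := tri x (fr σ x) (fr σ (fr σ x))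

theorem dt_cr (u v w : Fin 3 → R) : dt u (cr v w) = tri u v w := by
  simp [dt, cr, tri]; ring

theorem cr_dt (u v w : Fin 3 → R) : dt (cr u v) w = tri u v w := by
  simp [dt, cr, tri]; ring

theorem dt_comm (u v : Fin 3 → R) : dt u v = dt v u := by simp [dt]; ring

theorem tri_rotate (u v w : Fin 3 → R) : tri u v w = tri v w u := by simp [tri]; ring

theorem tri_swap (u v w : Fin 3 → R) : tri u v w = -tri v u w := by simp [tri]; ring

theorem tri_swap' (u v w : Fin 3 → R) : tri u v w = -tri u w v := by simp [tri]; ring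

@[simp] theorem tri_self₁₂ (u v : Fin 3 → R) : tri u u v = 0 := by simp [tri]; ring
@[simp] theorem tri_self₂₃ (u v : Fin 3 → R) : tri u v v = 0 := by simp [tri]; ring
@[simp] theorem tri_self₁₃ (u v : Fin 3 → R) : tri u v u = 0 := by simp [tri]; ring

theorem tri_add₁ (u u' v w : Fin 3 → R) : tri (u + u') v w = tri u v w + tri u' v w := by
  simp [tri]; ring
theorem tri_add₂ (u v v' w : Fin 3 → R) : tri u (v + v') w = tri u v w + tri u v' w := by
  simp [tri]; ring
theorem tri_add₃ (u v w w' : Fin 3 → R) : tri u v (w + w') = tri u v w + tri u v w' := by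
  simp [tri]; ring
theorem tri_smul₁ (c : R) (u v w : Fin 3 → R) : tri (c • u) v w = c * tri u v w := by
  simp [tri]; ring
theorem tri_smul₂ (c : R) (u v w : Fin 3 → R) : tri u (c • v) w = c * tri u v w := by
  simp [tri]; ring
theorem tri_smul₃ (c : R) (u v w : Fin 3 → R) : tri u v (c • w) = c * tri u v w := by
  simp [tri]; ring
theorem dt_add₁ (u u' v : Fin 3 → R) : dt (u + u') v = dt u v + dt u' v := by simp [dt]; ring
theorem dt_add₂ (u v v' : Fin 3 → R) : dt u (v + v') = dt u v + dt u v' := by simp [dt]; ring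
theorem dt_sub₂ (u v v' : Fin 3 → R) : dt u (v - v') = dt u v - dt u v' := by simp [dt]; ring
theorem dt_smul₁ (c : R) (u v : Fin 3 → R) : dt (c • u) v = c * dt u v := by simp [dt]; ring
theorem dt_smul₂ (c : R) (u v : Fin 3 → R) : dt u (c • v) = c * dt u v := by simp [dt]; ring

theorem cr_cr (a b u w : Fin 3 → R) : cr (cr a b) (cr u w) = tri a b w • u - tri a b u • w := by
  funext i; fin_cases i <;> simp [cr, tri] <;> ring

theorem cr_cr' (a b u w : Fin 3 → R) : cr (cr a b) (cr u w) = tri a u w • b - tri b u w • a := by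
  funext i; fin_cases i <;> simp [cr, tri] <;> ring

theorem cr_cr_left (u e n : Fin 3 → R) : cr (cr u e) n = dt u n • e - dt e n • u := by
  funext i; fin_cases i <;> simp [cr, dt] <;> ring

theorem cr_smul₁ (c : R) (u v : Fin 3 → R) : cr (c • u) v = c • cr u v := by
  funext i; fin_cases i <;> simp [cr] <;> ring
theorem cr_smul₂ (c : R) (u v : Fin 3 → R) : cr u (c • v) = c • cr u v := by
  funext i; fin_cases i <;> simp [cr] <;> ring
theorem cr_add₂ (u v w : Fin 3 → R) : cr u (v + w) = cr u v + cr u w := by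
  funext i; fin_cases i <;> simp [cr] <;> ring
theorem cr_add₁ (u v w : Fin 3 → R) : cr (u + v) w = cr u w + cr v w := by
  funext i; fin_cases i <;> simp [cr] <;> ring
@[simp] theorem cr_self (u : Fin 3 → R) : cr u u = 0 := by
  funext i; fin_cases i <;> simp [cr] <;> ring
theorem cr_anti (u v : Fin 3 → R) : cr u v = (-1 : R) • cr v u := by
  funext i; fin_cases i <;> simp [cr] <;> ring

/-- Cramer's rule. -/
theorem cramer (u v w x : Fin 3 → R) :
    tri u v w • x = tri x v w • u + tri u x w • v + tri u v x • w := by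
  funext i; fin_cases i <;> simp [tri] <;> ring

/-- Cramer's rule for the dual basis: a vector is recovered from the values of three linear forms. -/
theorem cramer_dual (u v w x : Fin 3 → R) :
    tri u v w • x = dt u x • cr v w + dt v x • cr w u + dt w x • cr u v := by
  funext i; fin_cases i <;> simp [tri, dt, cr] <;> ring

end CommRing

section Field

variable {k : Type*} [Field k]

theorem tri_eq_zero_of_dt {m u v w : Fin 3 → k} (hm : m ≠ 0) (hu : dt m u = 0) (hv : dt m v = 0)
    (hw : dt m w = 0) : tri u v w = 0 := by
  have h := cramer_dual u v w m
  rw [dt_comm u, dt_comm v, dt_comm w, hu, hv, hw] at h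
  simp only [zero_smul, add_zero] at h
  exact (smul_eq_zero.1 h).resolve_right hm

theorem exists_eq_smul {u v : Fin 3 → k} (hu : u ≠ 0) (h : cr u v = 0) : ∃ c : k, v = c • u := by
  obtain ⟨i, hi⟩ := Function.ne_iff.1 hu
  refine ⟨v i / u i, ?_⟩
  have h0 := congrFun h 0
  have h1 := congrFun h 1
  have h2 := congrFun h 2
  simp [cr] at h0 h1 h2
  funext j
  have hi' : u i ≠ 0 := hi
  rw [Pi.smul_apply, smul_eq_mul, div_mul_eq_mul_div, eq_div_iff hi']
  fin_cases i <;> fin_cases j <;> simp <;> grind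

theorem exists_dt_ne_zero {u : Fin 3 → k} (hu : u ≠ 0) :
    ∃ i : Fin 3, dt u (Pi.single i 1) ≠ 0 ∧ u i ≠ 0 := by
  obtain ⟨i, hi⟩ := Function.ne_iff.1 hu
  have hi' : u i ≠ 0 := hi
  refine ⟨i, ?_, hi⟩
  fin_cases i <;> simpa [dt, Pi.single_apply] using hi'

theorem exists_tri_ne_zero {u v : Fin 3 → k} (h : cr u v ≠ 0) :
    ∃ i : Fin 3, tri u v (Pi.single i 1) ≠ 0 := by
  obtain ⟨i, hi, -⟩ := exists_dt_ne_zero h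
  exact ⟨i, by rwa [cr_dt] at hi⟩

theorem fr_single {S : Type*} [CommRing S] (σ : k →+* S) (i : Fin 3) :
    fr σ (Pi.single i 1) = Pi.single i 1 := by
  funext j; simp only [fr_apply, Pi.single_apply]; split_ifs <;> simp

theorem exists_eq_add {u v w : Fin 3 → k} (h : cr u v ≠ 0) (hw : tri u v w = 0) :
    ∃ a b : k, w = a • u + b • v := by
  obtain ⟨i, hi⟩ := exists_tri_ne_zero h
  have hc := cramer u v (Pi.single i 1) w
  rw [hw, zero_smul, add_zero] at hc
  refine ⟨(tri u v (Pi.single i 1))⁻¹ * tri w v (Pi.single i 1),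
    (tri u v (Pi.single i 1))⁻¹ * tri u w (Pi.single i 1), ?_⟩
  rw [mul_smul, mul_smul, ← smul_add, ← hc, smul_smul, inv_mul_cancel₀ hi, one_smul]

theorem linearIndependent_of_cr {a b : Fin 3 → k} (h : cr a b ≠ 0) :
    LinearIndependent k ![a, b] := by
  rw [LinearIndependent.pair_iff]
  intro s t hst
  have h1 : t • cr a b = 0 := by
    have := congrArg (cr a) hst
    rw [cr_add₂, cr_smul₂, cr_smul₂, cr_self, smul_zero, zero_add] at this
    rw [this]; funext i; fin_cases i <;> simp [cr]
  have h2 : s • cr a b = 0 := by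
    have := congrArg (fun z => cr z b) hst
    simp only [cr_add₁, cr_smul₁, cr_self, smul_zero, add_zero] at this
    rw [this]; funext i; fin_cases i <;> simp [cr]
  exact ⟨(smul_eq_zero.1 h2).resolve_right h, (smul_eq_zero.1 h1).resolve_right h⟩

theorem cr_ne_zero_of_tri {u v w : Fin 3 → k} (h : tri u v w ≠ 0) : cr u v ≠ 0 := by
  rintro h0; apply h; rw [← cr_dt, h0]; simp [dt]

theorem cr_ne_zero_of_linearIndependent {a b : Fin 3 → k} (h : LinearIndependent k ![a, b]) :
    cr a b ≠ 0 := by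
  intro h0
  have ha : a ≠ 0 := h.ne_zero 0
  obtain ⟨c, hc⟩ := exists_eq_smul ha h0
  rw [LinearIndependent.pair_iff] at h
  have := (h (-c) 1 (by rw [hc]; module)).2
  exact one_ne_zero this

end Field

/-! ### Lines through a point -/

section Pencil

open Polynomial

/-- A polynomial `P` with only simple roots has a root at which a given nonzero polynomial of
smaller degree does not vanish. -/
theorem exists_root_of_degree {k : Type*} [Field k] [IsAlgClosed k] (P H : k[X]) (hH : H ≠ 0)
    (hdeg : H.natDegree < P.natDegree)
    (hsep : ∀ r, P.eval r = 0 → (derivative P).eval r ≠ 0) :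
    ∃ r, P.eval r = 0 ∧ H.eval r ≠ 0 := by
  classical
  by_contra! hc
  have hP : P ≠ 0 := by rintro rfl; simp at hdeg
  have hnd : P.roots.Nodup := by
    rw [Multiset.nodup_iff_count_le_one]
    intro r
    rw [count_roots]
    by_contra! h
    have h2 := (one_lt_rootMultiplicity_iff_isRoot hP).1 h
    exact hsep r h2.1 h2.2
  have hle : P.roots ≤ H.roots := by
    rw [Multiset.le_iff_subset hnd]
    intro r hr
    rw [mem_roots hP] at hr
    rw [mem_roots hH]
    exact hc r hr
  have h1 := Multiset.card_le_card hle
  have h2 := H.card_roots'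
  have h3 : P.roots.card = P.natDegree := ((IsAlgClosed.splits P).natDegree_eq_card_roots).symm
  omega

theorem le_natDegree_add {k : Type*} [Field k] (N : ℕ) (A B : k[X]) (hA : A.natDegree < N)
    (hB : B ≠ 0) : N ≤ (A + Polynomial.X ^ N * B).natDegree := by
  have hd : (Polynomial.X ^ N * B).natDegree = N + B.natDegree := by
    rw [natDegree_mul (pow_ne_zero _ Polynomial.X_ne_zero) hB, natDegree_X_pow]
  rw [natDegree_add_eq_right_of_natDegree_lt (by omega)]
  omega

variable {k : Type*} [Field k]

theorem dt_fr_of_cr (σ : k →+* k) {m v : Fin 3 → k} (hm : m ≠ 0) (h : cr m (fr σ m) = 0)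
    (hv : dt m v = 0) : dt (fr σ m) v = 0 ∧ dt (fr σ (fr σ m)) v = 0 ∧
      dt (fr σ (fr σ (fr σ m))) v = 0 := by
  obtain ⟨c, hc⟩ := exists_eq_smul hm h
  refine ⟨?_, ?_, ?_⟩ <;> simp [hc, fr_smul, dt_smul₁, hv]

theorem dt_of_tri_pair (a b u w v : Fin 3 → k) (l : k) (hab : cr a b = l • v) (hl : l ≠ 0)
    (h1 : tri a u w = 0) (h2 : tri b u w = 0) (huw : cr u w ≠ 0) : dt u v = 0 ∧ dt w v = 0 := by
  have h := cr_cr' a b u w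
  rw [h1, h2, zero_smul, zero_smul, sub_zero, cr_cr] at h
  have hu : tri a b u = 0 := by
    by_contra hne
    apply huw
    have := congrArg (cr u) h
    have e : cr u (tri a b w • u - tri a b u • w) = -(tri a b u • cr u w) := by
      funext i; fin_cases i <;> simp [cr] <;> ring
    rw [e] at this
    have h0 : cr u (0 : Fin 3 → k) = 0 := by funext i; fin_cases i <;> simp [cr]
    rw [h0, neg_eq_zero] at this
    exact (smul_eq_zero.1 this).resolve_left hne
  have hw : tri a b w = 0 := by
    rw [hu, zero_smul, sub_zero] at h
    rcases smul_eq_zero.1 h with h | h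
    · exact h
    · exfalso; apply huw; rw [h]; funext i; fin_cases i <;> simp [cr]
  rw [← cr_dt, hab, dt_smul₁] at hu hw
  exact ⟨by rw [dt_comm]; exact (mul_eq_zero.1 hu).resolve_left hl,
    by rw [dt_comm]; exact (mul_eq_zero.1 hw).resolve_left hl⟩

variable (p n : ℕ) [Fact p.Prime] [CharP k p]

/-- The Frobenius homomorphism `x ↦ x ^ q`, where `q = p ^ n`. -/
noncomputable abbrev frob (R : Type*) [CommRing R] [ExpChar R p] : R →+* R :=
  iterateFrobenius R p n

/-- The generic member `a + X • b` of the pencil spanned by `a` and `b`. -/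
noncomputable def pline (a b : Fin 3 → k) : Fin 3 → k[X] := fun i => Polynomial.C (a i) + Polynomial.X * Polynomial.C (b i)

theorem natDegree_tri_le (u v w : Fin 3 → k[X]) (A B D : ℕ) (hu : ∀ i, (u i).natDegree ≤ A)
    (hv : ∀ i, (v i).natDegree ≤ B) (hw : ∀ i, (w i).natDegree ≤ D) :
    (tri u v w).natDegree ≤ A + B + D := by
  have h : ∀ i j l, (u i * (v j * w l)).natDegree ≤ A + B + D := fun i j l => by
    refine natDegree_mul_le.trans ?_
    have := natDegree_mul_le (p := v j) (q := w l)
    have := hu i; have := hv j; have := hw l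
    omega
  have h' : ∀ i j l, (u i * (w l * v j)).natDegree ≤ A + B + D := fun i j l => by
    rw [mul_comm (w l)]; exact h i j l
  have e : tri u v w = u 0 * (v 1 * w 2) - u 0 * (w 1 * v 2) - (u 1 * (v 0 * w 2) -
      u 1 * (w 0 * v 2)) + (u 2 * (v 0 * w 1) - u 2 * (w 0 * v 1)) := by simp [tri]; ring
  rw [e]
  exact natDegree_add_le_of_degree_le (natDegree_sub_le_of_le (natDegree_sub_le_of_le (h _ _ _)
    (h' _ _ _) |>.trans (max_self _).le) (natDegree_sub_le_of_le (h _ _ _) (h' _ _ _) |>.trans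
    (max_self _).le) |>.trans (max_self _).le) (natDegree_sub_le_of_le (h _ _ _) (h' _ _ _)
    |>.trans (max_self _).le)

theorem frob_pline (f : ℕ) (u v : Fin 3 → k) (w : Fin 3 → k[X])
    (hw : w = fun i => Polynomial.C (u i) + Polynomial.X ^ f * Polynomial.C (v i)) :
    fr (frob p n k[X]) w =
      fun i => Polynomial.C (frob p n k (u i)) + Polynomial.X ^ (f * p ^ n) * Polynomial.C (frob p n k (v i)) := by
  rw [hw]; funext i
  simp only [fr_apply, map_add, map_mul]
  simp [iterateFrobenius_def, pow_mul]

theorem eval_frob (r : k) (f : k[X]) : (frob p n k[X] f).eval r = frob p n k (f.eval r) := by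
  simp [iterateFrobenius_def]

theorem derivative_frob (hn : 0 < n) (f : k[X]) : derivative (frob p n k[X] f) = 0 := by
  simp [iterateFrobenius_def, derivative_pow, (Nat.pos_iff_ne_zero.1 hn)]

/-- Among the lines `m = a + r • b` through the point `v`, there is one with
`det (m, m^(q²), m^(q³)) = 0` and `det (m, m^q, m^(q²)) ≠ 0`. Both determinants are polynomials in
`r`: the first has simple roots by `h1` and degree at least `q³` by `h3`, while the second is nonzero
by `h2` and has degree at most `1 + q + q²`. -/
theorem exists_line (hn : 0 < n) [IsAlgClosed k] (v a b : Fin 3 → k) (l : k) (hl : l ≠ 0)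
    (hab : cr a b = l • v)
    (h1 : ∀ m, m ≠ 0 → dt m v = 0 → (∃ r : k, m = a + r • b) →
      dt (fr (frob p n k) (fr (frob p n k) m)) v = 0 →
      dt (fr (frob p n k) (fr (frob p n k) (fr (frob p n k) m))) v = 0 → False)
    (h2 : dt (fr (frob p n k) a) v = 0 → dt (fr (frob p n k) (fr (frob p n k) a)) v = 0 → False)
    (h3 : tri (pline a b) (fr (frob p n k[X]) (fr (frob p n k[X]) (pline a b)))
      (fun i => Polynomial.C (fr (frob p n k) (fr (frob p n k) (fr (frob p n k) b)) i)) ≠ 0) (hv : v ≠ 0) :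
    ∃ m, dt m v = 0 ∧ d2 (frob p n k) m ≠ 0 ∧
      tri m (fr (frob p n k) (fr (frob p n k) m))
        (fr (frob p n k) (fr (frob p n k) (fr (frob p n k) m))) = 0 := by
  set σ := frob p n k with hσ
  set F := frob p n k[X] with hF
  set M := pline a b with hM
  have hσi : Function.Injective σ := σ.injective
  have hq : 2 ≤ p ^ n := (Fact.out : p.Prime).two_le.trans (Nat.le_self_pow hn.ne' p)
  have hcr0 : ∀ z : Fin 3 → k, cr 0 z = 0 := fun z => by funext i; fin_cases i <;> simp [cr]
  have hlv : l • v ≠ 0 := smul_ne_zero hl hv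
  have ha0 : a ≠ 0 := by rintro rfl; rw [hcr0] at hab; exact hlv hab.symm
  have hdt : ∀ m : Fin 3 → k, l * dt m v = tri m a b := fun m => by
    rw [← dt_cr, hab, dt_smul₂]
  have hm0 : ∀ r : k, a + r • b ≠ 0 := by
    intro r h
    have := congrArg (fun z => cr z b) h
    simp only [cr_add₁, cr_smul₁, cr_self, smul_zero, add_zero, hcr0, hab] at this
    exact hlv this
  have hmv : ∀ r : k, dt (a + r • b) v = 0 := by
    intro r
    have := hdt (a + r • b)
    rw [tri_add₁, tri_smul₁] at this
    simp at this
    exact this.resolve_left hl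
  have hM1 : M = fun i => Polynomial.C (a i) + Polynomial.X ^ 1 * Polynomial.C (b i) := by rw [hM]; funext i; simp [pline]
  have hFM : fr F M = fun i => Polynomial.C (σ (a i)) + Polynomial.X ^ (1 * p ^ n) * Polynomial.C (σ (b i)) := by
    exact frob_pline p n 1 a b M hM1
  have hFFM : fr F (fr F M) = fun i => Polynomial.C (σ (σ (a i))) + Polynomial.X ^ (1 * p ^ n * p ^ n) *
      Polynomial.C (σ (σ (b i))) := by
    exact frob_pline p n (1 * p ^ n) (fun i => σ (a i)) (fun i => σ (b i)) _ hFM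
  have hFFFM : fr F (fr F (fr F M)) = fun i => Polynomial.C (σ (σ (σ (a i)))) +
      Polynomial.X ^ (1 * p ^ n * p ^ n * p ^ n) * Polynomial.C (σ (σ (σ (b i)))) := by
    exact frob_pline p n (1 * p ^ n * p ^ n) (fun i => σ (σ (a i))) (fun i => σ (σ (b i))) _ hFFM
  have heM : ∀ r : k, fr (evalRingHom r) M = a + r • b := by
    intro r; rw [hM]; funext i; simp [pline]; ring
  have hcomm : ∀ (r : k) (w : Fin 3 → k[X]), fr (evalRingHom r) (fr F w) =
      fr σ (fr (evalRingHom r) w) := by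
    intro r w; funext i; exact eval_frob p n r (w i)
  have hder : ∀ f : k[X], derivative (F f) = 0 := by
    exact derivative_frob p n hn
  have hderM : ∀ i, derivative (M i) = Polynomial.C (b i) := by
    intro i; rw [hM]; simp [pline]
  have hdertri : ∀ u w : Fin 3 → k[X], derivative (tri M (fr F u) (fr F w)) =
      tri (fun i => Polynomial.C (b i)) (fr F u) (fr F w) := by
    intro u w
    simp only [tri, derivative_add, derivative_sub, derivative_mul, fr_apply, hder, hderM]
    ring
  have hevC : ∀ (r : k) (w : Fin 3 → k), fr (evalRingHom r) (fun i => Polynomial.C (w i)) = w := by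
    intro r w; funext i; simp
  have hevtri : ∀ (u v w : Fin 3 → k[X]) (r : k), (tri u v w).eval r =
      tri (fr (evalRingHom r) u) (fr (evalRingHom r) v) (fr (evalRingHom r) w) := by
    intro u v w r; simp [tri]
  have hcrne : ∀ m, m ≠ 0 → cr (fr σ m) (fr σ (fr σ m)) = 0 → cr m (fr σ m) = 0 := by
    intro m hm h
    rw [cr_fr] at h
    exact (fr_eq_zero σ).1 h
  set G := tri M (fr F (fr F M)) (fr F (fr F (fr F M))) with hG
  set H := tri M (fr F M) (fr F (fr F M)) with hH
  have hC0 : ∀ (c d : k) (f : ℕ), (Polynomial.C c + Polynomial.X ^ f * Polynomial.C d).natDegree ≤ f := by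
    intro c d f
    compute_degree
  -- `G` has degree at least `q ^ 3`, while `H` has degree at most `1 + q + q ^ 2`
  have hGdeg : (p ^ n) ^ 3 ≤ G.natDegree := by
    have hsplit : G = tri M (fr F (fr F M)) (fun i => Polynomial.C (fr σ (fr σ (fr σ a)) i)) +
        Polynomial.X ^ ((p ^ n) ^ 3) * tri M (fr F (fr F M)) (fun i => Polynomial.C (fr σ (fr σ (fr σ b)) i)) := by
      rw [hG, hFFFM, ← smul_eq_mul, smul_eq_mul, ← tri_smul₃, ← tri_add₃]
      congr 1
    rw [hsplit]
    apply le_natDegree_add _ _ _ _ h3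
    have := natDegree_tri_le M (fr F (fr F M)) (fun i => Polynomial.C (fr σ (fr σ (fr σ a)) i)) 1
      (1 * p ^ n * p ^ n) 0 (fun i => by rw [hM1]; exact hC0 _ _ _)
      (fun i => by rw [hFFM]; exact hC0 _ _ _) (fun i => by simp)
    refine lt_of_le_of_lt this ?_
    nlinarith
  have hHdeg : H.natDegree < G.natDegree := by
    have := natDegree_tri_le M (fr F M) (fr F (fr F M)) 1 (1 * p ^ n)
      (1 * p ^ n * p ^ n) (fun i => by rw [hM1]; exact hC0 _ _ _)
      (fun i => by rw [hFM]; exact hC0 _ _ _)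
      (fun i => by rw [hFFM]; exact hC0 _ _ _)
    refine lt_of_le_of_lt this (lt_of_lt_of_le ?_ hGdeg)
    nlinarith
  -- otherwise `H` and its derivative vanish at `0`, and `a ^ q`, `a ^ (q ^ 2)` both pass through `v`
  have hH0 : H ≠ 0 := by
    intro h0
    have e1 : tri a (fr σ a) (fr σ (fr σ a)) = 0 := by
      have := hevtri M (fr F M) (fr F (fr F M)) 0
      rw [← hH, h0, hcomm, hcomm, hcomm, heM, zero_smul, add_zero] at this
      simpa using this.symm
    have e2 : tri b (fr σ a) (fr σ (fr σ a)) = 0 := by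
      have h := hdertri M (fr F M)
      rw [← hH, h0, derivative_zero] at h
      have := hevtri (fun i => Polynomial.C (b i)) (fr F M) (fr F (fr F M)) 0
      rw [← h, hcomm, hcomm, hcomm, heM, zero_smul, add_zero, hevC] at this
      simpa using this.symm
    have hav : dt a v = 0 := by simpa using hmv 0
    by_cases hc : cr (fr σ a) (fr σ (fr σ a)) = 0
    · obtain ⟨g1, g2, -⟩ := dt_fr_of_cr σ ha0 (hcrne a ha0 hc) hav
      exact h2 g1 g2
    · obtain ⟨g1, g2⟩ := dt_of_tri_pair a b _ _ v l hab hl e1 e2 hc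
      exact h2 g1 g2
  -- a multiple root `r` of `G` would make `m = a + r • b` violate `h1`
  obtain ⟨r, hr1, hr2⟩ := exists_root_of_degree G H hH0 hHdeg (by
    intro r hr hr'
    rw [hG, hevtri, hcomm, hcomm, hcomm, hcomm, hcomm, heM] at hr
    rw [hG, hdertri, hevtri, hcomm, hcomm, hcomm, hcomm, hcomm, heM, hevC] at hr'
    set m := a + r • b with hm
    have hbm : tri a (fr σ (fr σ m)) (fr σ (fr σ (fr σ m))) = 0 := by
      nth_rewrite 1 [hm] at hr
      rwa [tri_add₁, tri_smul₁, hr', mul_zero, add_zero] at hr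
    by_cases hc : cr (fr σ (fr σ m)) (fr σ (fr σ (fr σ m))) = 0
    · rw [cr_fr] at hc
      obtain ⟨-, g1, g2⟩ := dt_fr_of_cr σ (hm0 r) (hcrne m (hm0 r) ((fr_eq_zero σ).1 hc)) (hmv r)
      exact h1 m (hm0 r) (hmv r) ⟨r, rfl⟩ g1 g2
    · obtain ⟨g1, g2⟩ := dt_of_tri_pair a b _ _ v l hab hl hbm hr' hc
      exact h1 m (hm0 r) (hmv r) ⟨r, rfl⟩ g1 g2)
  rw [hG, hevtri, hcomm, hcomm, hcomm, hcomm, hcomm, heM] at hr1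
  rw [hH, hevtri, hcomm, hcomm, hcomm, heM] at hr2
  exact ⟨a + r • b, hmv r, hr2, hr1⟩

end Pencil

section PencilExistence

open Polynomial

variable {k : Type*} [Field k] (p n : ℕ) [Fact p.Prime] [CharP k p]

theorem pline_ne_zero (hn : 0 < n) (a b b' : Fin 3 → k)
    (h : tri b (fr (frob p n k) (fr (frob p n k) b)) b' = 0 →
      tri a (fr (frob p n k) (fr (frob p n k) b)) b' = 0 → False) :
    tri (pline a b) (fr (frob p n k[X]) (fr (frob p n k[X]) (pline a b)))
      (fun i => Polynomial.C (b' i)) ≠ 0 := by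
  intro h0
  have hq : 2 ≤ p ^ n := (Fact.out : p.Prime).two_le.trans (Nat.le_self_pow hn.ne' p)
  have hM1 : pline a b = fun i => Polynomial.C (a i) + Polynomial.X ^ 1 * Polynomial.C (b i) := by funext i; simp [pline]
  have hFM := frob_pline p n 1 a b _ hM1
  have hFFM := frob_pline p n (1 * p ^ n) (fun i => frob p n k (a i)) (fun i => frob p n k (b i)) _
    hFM
  set a2 : Fin 3 → k := fr (frob p n k) (fr (frob p n k) a) with ha2
  set b2 : Fin 3 → k := fr (frob p n k) (fr (frob p n k) b) with hb2
  have hsplit : tri (pline a b) (fr (frob p n k[X]) (fr (frob p n k[X]) (pline a b)))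
      (fun i => Polynomial.C (b' i)) = tri (pline a b) (fun i => Polynomial.C (a2 i)) (fun i => Polynomial.C (b' i)) +
        Polynomial.X ^ (1 * p ^ n * p ^ n) * tri (pline a b) (fun i => Polynomial.C (b2 i)) (fun i => Polynomial.C (b' i)) := by
    rw [hFFM, ← tri_smul₂, ← tri_add₂]
    rfl
  have hC0 : ∀ (c d : k) (f : ℕ), (Polynomial.C c + Polynomial.X ^ f * Polynomial.C d).natDegree ≤ f := by
    intro c d f
    compute_degree
  have hB : tri (pline a b) (fun i => Polynomial.C (b2 i)) (fun i => Polynomial.C (b' i)) = 0 := by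
    by_contra hB
    have := le_natDegree_add (1 * p ^ n * p ^ n) _ _ (lt_of_le_of_lt
      (natDegree_tri_le (pline a b) (fun i => Polynomial.C (a2 i)) (fun i => Polynomial.C (b' i)) 1 0 0
        (fun i => by rw [hM1]; exact hC0 _ _ _) (by simp) (by simp)) (by nlinarith)) hB
    rw [← hsplit, h0, natDegree_zero] at this
    nlinarith
  have hev : ∀ r : k, tri (a + r • b) b2 b' = 0 := by
    intro r
    have := congrArg (Polynomial.eval r) hB
    have e : ∀ i, (pline a b i).eval r = (a + r • b) i := by intro i; simp [pline]; ring
    rw [Polynomial.eval_zero] at this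
    rw [← this]
    simp only [tri, Polynomial.eval_add, Polynomial.eval_sub, Polynomial.eval_mul, e, Polynomial.eval_C]
  have h1 : tri a b2 b' = 0 := by simpa using hev 0
  have h2 : tri b b2 b' = 0 := by
    have := hev 1
    rwa [tri_add₁, h1, one_smul, zero_add] at this
  exact h h2 h1

/-- The conclusion of `exists_line` for a point `v` at which neither `D₁` nor `D₂` vanishes. -/
theorem exists_line_of_d1 (hn : 0 < n) [IsAlgClosed k] (v : Fin 3 → k)
    (h1 : d1 (frob p n k) v ≠ 0) (h2 : d2 (frob p n k) v ≠ 0) :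
    ∃ m, dt m v = 0 ∧ d2 (frob p n k) m ≠ 0 ∧
      tri m (fr (frob p n k) (fr (frob p n k) m))
        (fr (frob p n k) (fr (frob p n k) (fr (frob p n k) m))) = 0 := by
  set σ := frob p n k with hσ
  have hv : v ≠ 0 := by rintro rfl; apply h1; simp [d1, tri]
  set a := cr v (fr σ v) with ha
  set b := cr v (fr σ (fr σ v)) with hb
  have hab : cr a b = d2 σ v • v := by
    rw [ha, hb, cr_cr, tri_self₁₃, zero_smul, sub_zero]; rfl
  have hlv : d2 σ v • v ≠ 0 := smul_ne_zero h2 hv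
  have ha0 : a ≠ 0 := by
    intro h; rw [h] at hab; apply hlv; rw [← hab]; funext i; fin_cases i <;> simp [cr]
  have hb0 : b ≠ 0 := by
    intro h; rw [h] at hab; apply hlv; rw [← hab]; funext i; fin_cases i <;> simp [cr]
  have hav : dt a v = 0 := by rw [ha, cr_dt, tri_self₁₃]
  have hbv : dt b v = 0 := by rw [hb, cr_dt, tri_self₁₃]
  have H1 : ∀ m, m ≠ 0 → dt m v = 0 → dt (fr σ (fr σ m)) v = 0 →
      dt (fr σ (fr σ (fr σ m))) v = 0 → False := by
    intro m hm g0 g2 g3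
    refine h1 (tri_eq_zero_of_dt (m := fr σ (fr σ (fr σ m))) ?_ g3 ?_ ?_)
    · simpa [fr_eq_zero] using hm
    · rw [dt_fr, g2, map_zero]
    · rw [dt_fr, dt_fr, dt_fr, g0, map_zero, map_zero, map_zero]
  refine exists_line p n hn v a b _ h2 hab (fun m hm g0 _ g2 g3 => H1 m hm g0 g2 g3) ?_ ?_ hv
  · intro g1 g2
    refine h2 (tri_eq_zero_of_dt (m := fr σ (fr σ a)) ?_ g2 ?_ ?_)
    · simpa [fr_eq_zero] using ha0
    · rw [dt_fr, g1, map_zero]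
    · rw [dt_fr, dt_fr, hav, map_zero, map_zero]
  · apply pline_ne_zero p n hn
    intro g1 g2
    by_cases hc : cr (fr σ (fr σ b)) (fr σ (fr σ (fr σ b))) = 0
    · rw [cr_fr, cr_fr, fr_eq_zero, fr_eq_zero] at hc
      obtain ⟨-, e1, e2⟩ := dt_fr_of_cr σ hb0 hc hbv
      exact H1 b hb0 hbv e1 e2
    · obtain ⟨e1, e2⟩ := dt_of_tri_pair a b _ _ v _ hab h2 g2 g1 hc
      exact H1 b hb0 hbv e1 e2

theorem exists_frob_smul [IsAlgClosed k] (hn : 0 < n) (c : k) (hc : c ≠ 0) :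
    ∃ t : k, t ≠ 0 ∧ frob p n k t = c * t := by
  have hq : 2 ≤ p ^ n := (Fact.out : p.Prime).two_le.trans (Nat.le_self_pow hn.ne' p)
  obtain ⟨t, ht⟩ := IsAlgClosed.exists_pow_nat_eq c (n := p ^ n - 1) (by omega)
  refine ⟨t, ?_, ?_⟩
  · rintro rfl; rw [zero_pow (by omega)] at ht; exact hc ht.symm
  · rw [iterateFrobenius_def, ← ht, ← pow_succ]; congr 1; omega

/-- The conclusion of `exists_line` for a point `v` lying on a line defined over `𝔽_q`, but not
defined over `𝔽_q` or `𝔽_(q²)` itself. -/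
theorem exists_line_of_d2 (hn : 0 < n) [IsAlgClosed k] (v : Fin 3 → k)
    (h2 : d2 (frob p n k) v = 0) (hv1 : cr v (fr (frob p n k) v) ≠ 0)
    (hv2 : cr v (fr (frob p n k) (fr (frob p n k) v)) ≠ 0) :
    ∃ m, dt m v = 0 ∧ d2 (frob p n k) m ≠ 0 ∧
      tri m (fr (frob p n k) (fr (frob p n k) m))
        (fr (frob p n k) (fr (frob p n k) (fr (frob p n k) m))) = 0 := by
  set σ := frob p n k with hσ
  have hv : v ≠ 0 := by rintro rfl; apply hv1; funext i; fin_cases i <;> simp [cr]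
  obtain ⟨α, β, hαβ⟩ := exists_eq_add hv1 h2
  have hα : α ≠ 0 := by
    rintro rfl
    rw [zero_smul, zero_add] at hαβ
    have : cr (fr σ v) (fr σ (fr σ v)) = 0 := by rw [hαβ, cr_smul₂, cr_self, smul_zero]
    rw [cr_fr, fr_eq_zero] at this
    exact hv1 this
  have hβ : β ≠ 0 := by
    rintro rfl
    rw [zero_smul, add_zero] at hαβ
    apply hv2; rw [hαβ, cr_smul₂, cr_self, smul_zero]
  -- the line through `v` and its conjugates is rational: rescale its coefficients to be fixed
  obtain ⟨t, ht0, ht⟩ := exists_frob_smul p n hn ((-α)⁻¹) (by simpa using hα)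
  rw [← hσ] at ht
  set N := cr v (fr σ v) with hN
  have hΦN : fr σ N = (-α) • N := by
    rw [hN, ← cr_fr, hαβ, cr_add₂, cr_smul₂, cr_smul₂, cr_self, smul_zero, add_zero,
      cr_anti (fr σ v) v, smul_smul]
    congr 1; ring
  set N0 := t • N with hN0
  have hΦN0 : fr σ N0 = N0 := by
    rw [hN0, fr_smul, hΦN, ht, smul_smul]
    congr 1
    field_simp
  have hN00 : N0 ≠ 0 := smul_ne_zero ht0 hv1
  obtain ⟨i, hi, -⟩ := exists_dt_ne_zero hN00
  set e : Fin 3 → k := Pi.single i 1 with he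
  have hΦe : fr σ e = e := fr_single σ i
  have hNe : tri v (fr σ v) e ≠ 0 := by
    intro h; apply hi; rw [hN0, dt_smul₁, hN, cr_dt, h, mul_zero]
  set a := cr v e with ha
  have hvN0 : dt v N0 = 0 := by rw [hN0, dt_smul₂, hN, dt_cr, tri_self₁₂, mul_zero]
  have hab : cr a N0 = (-dt N0 e) • v := by
    rw [ha, cr_cr_left, hvN0, zero_smul, zero_sub, dt_comm, neg_smul]
  have hl : -dt N0 e ≠ 0 := neg_ne_zero.2 hi
  have htri : ∀ A B : Fin 3 → k, tri (cr A e) (cr B e) N0 = tri A B e * dt N0 e := by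
    intro A B
    rw [← cr_dt, cr_cr, tri_self₂₃, zero_smul, zero_sub, ← neg_smul, dt_smul₁, tri_swap' A e B,
      dt_comm, neg_neg]
  have hΦa : fr σ a = cr (fr σ v) e := by rw [ha, ← cr_fr, hΦe]
  have hΦΦa : fr σ (fr σ a) = cr (fr σ (fr σ v)) e := by rw [hΦa, ← cr_fr, hΦe]
  have k1 : tri a (fr σ a) N0 ≠ 0 := by
    rw [hΦa, ha, htri]; exact mul_ne_zero hNe hi
  have k2 : tri a (fr σ (fr σ a)) N0 ≠ 0 := by
    rw [hΦΦa, ha, htri, hαβ, tri_add₂, tri_smul₂, tri_smul₂, tri_self₁₂, mul_zero, zero_add]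
    exact mul_ne_zero (mul_ne_zero hβ hNe) hi
  have hdt : ∀ m : Fin 3 → k, dt m v = 0 → tri a m N0 = 0 := fun m hm => by
    rw [tri_swap, ← dt_cr, hab, dt_smul₂, hm, mul_zero, neg_zero]
  refine exists_line p n hn v a N0 _ hl hab ?_ (fun h _ => k1 (hdt _ h)) ?_ hv
  · rintro m - - ⟨r, rfl⟩ g2 -
    apply k2
    have := hdt _ g2
    rwa [← hσ, fr_add, fr_add, fr_smul, fr_smul, hΦN0, hΦN0, tri_add₂, tri_smul₂, tri_self₂₃,
      mul_zero, add_zero] at this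
  · intro h
    apply k2
    have := congrArg (Polynomial.eval 0) h
    rw [← hσ, hΦN0, hΦN0, hΦN0] at this
    have e1 : ∀ i, (pline a N0 i).eval 0 = a i := by intro i; simp [pline]
    rw [Polynomial.eval_zero] at this
    rw [← this]
    simp only [tri, fr_apply, Polynomial.eval_add, Polynomial.eval_sub, Polynomial.eval_mul, eval_frob, e1, Polynomial.eval_C]
    rfl

/-- The intersection point `Q` of the lines `m` and `m^q` satisfies `D₂(Q) ≠ 0` and `D₁(Q) = 0` as
soon as `det (m, m^q, m^(q²)) ≠ 0` and `det (m, m^(q²), m^(q³)) = 0`. -/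
theorem good_of_line {k : Type*} [CommRing k] (σ : k →+* k) (m : Fin 3 → k) :
    d2 σ (cr m (fr σ m)) = d2 σ m * σ (d2 σ m) ∧
    d1 σ (cr m (fr σ m)) = d2 σ m * σ (tri m (fr σ (fr σ m)) (fr σ (fr σ (fr σ m)))) := by
  have key : ∀ a b c d e : Fin 3 → k, tri (cr a b) (cr b c) (cr d e) = tri a b c * tri b d e := by
    intro a b c d e
    rw [← cr_dt, cr_cr, tri_self₂₃, zero_smul, sub_zero, dt_smul₁, dt_cr]
  constructor
  · rw [d2, ← cr_fr, ← cr_fr, key, tri_fr]; rfl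
  · rw [d1, ← cr_fr, ← cr_fr, ← cr_fr, key, tri_fr]; rfl

end PencilExistence

/-! ### The curve and its places at smooth points -/

section Places

/-- The vector `(y₀, y₁, 1)`. -/
def hpt {R : Type*} [CommRing R] (y : Fin 2 → R) : Fin 3 → R := ![y 0, y 1, 1]

/-- The function `a₀ y₀ + a₁ y₁ + a₂`: the value of the linear form `a` at the generic point
`(y₀, y₁, 1)`. -/
def lf {k L : Type*} [Field k] [Field L] [Algebra k L] (y : Fin 2 → L) (a : Fin 3 → k) : L :=
  dt (fr (algebraMap k L) a) (hpt y)

theorem fr_frob {p n : ℕ} [Fact p.Prime] {k L : Type*} [CommRing k] [CommRing L] [ExpChar k p]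
    [ExpChar L p] (f : k →+* L) (v : Fin 3 → k) :
    fr (frob p n L) (fr f v) = fr f (fr (frob p n k) v) := by
  funext i; simp [iterateFrobenius_def]

theorem d1_fr {p n : ℕ} [Fact p.Prime] {k L : Type*} [CommRing k] [CommRing L] [ExpChar k p]
    [ExpChar L p] (f : k →+* L) (v : Fin 3 → k) :
    d1 (frob p n L) (fr f v) = f (d1 (frob p n k) v) := by
  simp only [d1, fr_frob, tri_fr]

theorem d2_fr {p n : ℕ} [Fact p.Prime] {k L : Type*} [CommRing k] [CommRing L] [ExpChar k p]
    [ExpChar L p] (f : k →+* L) (v : Fin 3 → k) :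
    d2 (frob p n L) (fr f v) = f (d2 (frob p n k) v) := by
  simp only [d2, fr_frob, tri_fr]

theorem d1_self {k : Type*} [CommRing k] (σ : k →+* k) (v : Fin 3 → k) :
    d1 σ (fr σ v) = σ (d1 σ v) := by simp only [d1, tri_fr]

theorem d2_self {k : Type*} [CommRing k] (σ : k →+* k) (v : Fin 3 → k) :
    d2 σ (fr σ v) = σ (d2 σ v) := by simp only [d2, tri_fr]

theorem d1_smul {k : Type*} [CommRing k] (σ : k →+* k) (c : k) (v : Fin 3 → k) :
    d1 σ (c • v) = c * σ c * σ (σ (σ c)) * d1 σ v := by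
  simp only [d1, fr_smul, tri_smul₁, tri_smul₂, tri_smul₃]; ring

theorem d2_smul {k : Type*} [CommRing k] (σ : k →+* k) (c : k) (v : Fin 3 → k) :
    d2 σ (c • v) = c * σ c * σ (σ c) * d2 σ v := by
  simp only [d2, fr_smul, tri_smul₁, tri_smul₂, tri_smul₃]; ring

/-- `D₁` at `Q + ε`, up to terms containing a Frobenius image of `ε`, is `D₁(Q)` plus the tangent
form at `Q` evaluated at `ε`. -/
theorem d1_expand {k : Type*} [CommRing k] (σ : k →+* k) (Q ε : Fin 3 → k) :
    tri ε (fr σ Q) (fr σ (fr σ (fr σ Q))) = d1 σ (Q + ε) - d1 σ Q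
      - (tri (Q + ε) (fr σ ε) (fr σ (fr σ (fr σ (Q + ε))))
        + tri (Q + ε) (fr σ Q) (fr σ (fr σ (fr σ ε)))) := by
  simp only [d1, fr_add, tri_add₁, tri_add₂, tri_add₃]; ring

/-- The functions `y₀, y₁` are affine coordinates on the Dickson–Guralnick–Zieve curve, with function
field `L`: the generic point `(y₀, y₁, 1)` satisfies `D₁ = 0` (`d1_eq`), every affine point with
`D₁ = 0` and `D₂ ≠ 0` is a specialization of it (`center`), and `y₀, y₁` generate `L` as a field of
fractions (`frac`). Nothing else about the curve is used. -/
structure IsDGZ (p n : ℕ) [Fact p.Prime] {k L : Type*} [Field k] [Field L] [Algebra k L]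
    [CharP k p] [CharP L p] (y : Fin 2 → L) : Prop where
  pos : 0 < n
  d1_eq : d1 (frob p n L) (hpt y) = 0
  center : ∀ Q : Fin 3 → k, Q 2 = 1 → d1 (frob p n k) Q = 0 → d2 (frob p n k) Q ≠ 0 →
    ∀ h : MvPolynomial (Fin 2) k, aeval y h = 0 → eval ![Q 0, Q 1] h = 0
  frac : ∀ z : L, ∃ a b : MvPolynomial (Fin 2) k, aeval y b ≠ 0 ∧ z = aeval y a / aeval y b

variable {p n : ℕ} [Fact p.Prime] {k L : Type*} [Field k] [Field L] [Algebra k L]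
    [CharP k p] [CharP L p] {y : Fin 2 → L}

theorem third_ne_zero {Q : Fin 3 → k} (h2 : d2 (frob p n k) Q ≠ 0) : Q 2 ≠ 0 := by
  intro h
  apply h2
  simp [d2, tri, h]

theorem lf_eq (y : Fin 2 → L) (Q : Fin 3 → k) (ℓ : Fin 3 → k) :
    lf y ℓ = algebraMap k L (dt ℓ Q) +
      dt (fr (algebraMap k L) ℓ) (hpt y - fr (algebraMap k L) Q) := by
  rw [lf, dt_sub₂, dt_fr]; ring

theorem val_tri_le (V : ValuationSubring L) {u v w : Fin 3 → L} {A B D : V.ValueGroup}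
    (hu : ∀ i, V.valuation (u i) ≤ A) (hv : ∀ i, V.valuation (v i) ≤ B)
    (hw : ∀ i, V.valuation (w i) ≤ D) : V.valuation (tri u v w) ≤ A * B * D := by
  have h : ∀ i j l, V.valuation (u i * (v j * w l)) ≤ A * B * D := fun i j l => by
    rw [map_mul, map_mul, ← mul_assoc]
    exact mul_le_mul' (mul_le_mul' (hu _) (hv _)) (hw _)
  have e : tri u v w = u 0 * (v 1 * w 2) - u 0 * (v 2 * w 1) - (u 1 * (v 0 * w 2) -
      u 1 * (v 2 * w 0)) + (u 2 * (v 0 * w 1) - u 2 * (v 1 * w 0)) := by simp [tri]; ring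
  rw [e]
  exact V.valuation.map_add_le (V.valuation.map_sub_le (V.valuation.map_sub_le (h _ _ _)
    (h _ _ _)) (V.valuation.map_sub_le (h _ _ _) (h _ _ _)))
    (V.valuation.map_sub_le (h _ _ _) (h _ _ _))

theorem val_dt_le (V : ValuationSubring L) {u v : Fin 3 → L} {A B : V.ValueGroup}
    (hu : ∀ i, V.valuation (u i) ≤ A) (hv : ∀ i, V.valuation (v i) ≤ B) :
    V.valuation (dt u v) ≤ A * B := by
  have h : ∀ i, V.valuation (u i * v i) ≤ A * B := fun i => by
    rw [map_mul]; exact mul_le_mul' (hu _) (hv _)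
  exact V.valuation.map_add_le (V.valuation.map_add_le (h _) (h _)) (h _)

theorem val_const (V : ValuationSubring L) (hk : ∀ a : k, V.valuation (algebraMap k L a) ≤ 1)
    (c : k) (hc : c ≠ 0) : V.valuation (algebraMap k L c) = 1 := by
  refine le_antisymm (hk c) ?_
  by_contra! h
  have h1 := mul_lt_one_of_nonneg_of_lt_one_right (hk c⁻¹) zero_le h
  rw [← map_mul, ← map_mul, inv_mul_cancel₀ hc, map_one, map_one] at h1
  exact lt_irrefl _ h1

/-- A point `Q` with `D₁(Q) = 0` and `D₂(Q) ≠ 0` is the centre of a place of `L`. -/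
theorem IsDGZ.exists_center (hC : IsDGZ p n (k := k) y) (Q : Fin 3 → k) (hQ : Q 2 = 1)
    (h1 : d1 (frob p n k) Q = 0) (h2 : d2 (frob p n k) Q ≠ 0) :
    ∃ V : ValuationSubring L, (∀ a : k, V.valuation (algebraMap k L a) ≤ 1) ∧
      ∀ i, V.valuation ((hpt y - fr (algebraMap k L) Q) i) < 1 := by
  obtain ⟨V, hk, hV⟩ := exists_valuationSubring_center y ![Q 0, Q 1] (hC.center Q hQ h1 h2)
  refine ⟨V, hk, fun i => ?_⟩
  have h0 := hV 0
  have h1 := hV 1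
  fin_cases i <;> simp [hpt, hQ] at h0 h1 ⊢ <;> assumption

theorem val_lf {V : ValuationSubring L} (hk : ∀ a : k, V.valuation (algebraMap k L a) ≤ 1)
    {Q : Fin 3 → k} (hV : ∀ i, V.valuation ((hpt y - fr (algebraMap k L) Q) i) < 1)
    (ℓ : Fin 3 → k) : (dt ℓ Q = 0 → V.valuation (lf y ℓ) < 1) ∧
      (dt ℓ Q ≠ 0 → V.valuation (lf y ℓ) = 1) := by
  have h : V.valuation (dt (fr (algebraMap k L) ℓ) (hpt y - fr (algebraMap k L) Q)) < 1 := by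
    have h : ∀ i, V.valuation (fr (algebraMap k L) ℓ i * (hpt y - fr (algebraMap k L) Q) i) < 1 :=
      fun i => by
        rw [map_mul]; exact mul_lt_one_of_nonneg_of_lt_one_right (hk _) zero_le (hV i)
    exact V.valuation.map_add_lt (V.valuation.map_add_lt (h _) (h _)) (h _)
  rw [lf_eq y Q]
  constructor
  · intro h0
    rwa [h0, map_zero, zero_add]
  · intro h0
    rw [V.valuation.map_add_eq_of_lt_left, val_const V hk _ h0]
    rwa [val_const V hk _ h0]

theorem exists_max (V : ValuationSubring L) (ε : Fin 3 → L) :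
    ∃ i, ∀ j, V.valuation (ε j) ≤ V.valuation (ε i) := by
  obtain ⟨i, -, hi⟩ := Finset.exists_max_image Finset.univ (fun j => V.valuation (ε j))
    ⟨0, Finset.mem_univ _⟩
  exact ⟨i, fun j => hi j (Finset.mem_univ _)⟩

theorem pow_le_pow_of_le_one'' {Γ : Type*} [LinearOrderedCommGroupWithZero Γ] {a : Γ} (h : a ≤ 1)
    {m n : ℕ} (hmn : m ≤ n) : a ^ n ≤ a ^ m := pow_le_pow_right_of_le_one' h hmn

/-- At a place centred at `Q` the tangent form at `Q` vanishes to order at least two: by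
`d1_expand` it is a sum of terms divisible by `q`-th powers of the displacement from `Q`. -/
theorem IsDGZ.ramified (hC : IsDGZ p n (k := k) y) (Q : Fin 3 → k) (hQ : Q 2 = 1)
    (h1 : d1 (frob p n k) Q = 0) (h2 : d2 (frob p n k) Q ≠ 0) :
    ∃ V : ValuationSubring L, (∀ a : k, V.valuation (algebraMap k L a) ≤ 1) ∧
      (∀ ℓ : Fin 3 → k, dt ℓ Q ≠ 0 → V.valuation (lf y ℓ) = 1) ∧
      ∃ t, V.valuation t < 1 ∧ V.valuation (lf y (cr (fr (frob p n k) Q) (fr (frob p n k)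
        (fr (frob p n k) (fr (frob p n k) Q))))) ≤ V.valuation t ^ 2 := by
  obtain ⟨V, hk, hV⟩ := hC.exists_center Q hQ h1 h2
  have hq : 2 ≤ p ^ n :=
    (Fact.out : p.Prime).two_le.trans (Nat.le_self_pow hC.pos.ne' p)
  set ε := hpt y - fr (algebraMap k L) Q with hε
  obtain ⟨i, hi⟩ := exists_max V ε
  refine ⟨V, hk, fun ℓ => (val_lf hk hV ℓ).2, ε i, hV i, ?_⟩
  have hx : fr (algebraMap k L) Q + ε = hpt y := by rw [hε]; abel
  have hfr : ∀ i, V.valuation (fr (frob p n L) ε i) = V.valuation (ε i) ^ (p ^ n) := fun i => by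
    simp [iterateFrobenius_def]
  have hfr2 : ∀ i, V.valuation (fr (frob p n L) (fr (frob p n L) (fr (frob p n L) ε)) i)
      = V.valuation (ε i) ^ (p ^ n * p ^ n * p ^ n) := fun i => by
    simp [iterateFrobenius_def, pow_mul]
  have hx1 : ∀ i, V.valuation (hpt y i) ≤ 1 := fun i => by
    rw [← hx]; exact V.valuation.map_add_le (hk _) (hV i).le
  have hx3 : ∀ i, V.valuation (fr (frob p n L) (fr (frob p n L) (fr (frob p n L) (hpt y))) i) ≤ 1 :=
    fun i => by
      simp only [fr_apply, iterateFrobenius_def, map_pow]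
      exact pow_le_one' (pow_le_one' (pow_le_one' (hx1 i) _) _) _
  rw [lf_eq y Q, cr_dt, tri_rotate (fr _ Q), tri_rotate _ Q, ← hε]
  have e0 : tri Q (fr (frob p n k) Q) (fr (frob p n k) (fr (frob p n k) (fr (frob p n k) Q))) = 0 :=
    h1
  rw [e0, map_zero, zero_add, ← cr_fr, cr_dt, tri_rotate, tri_rotate]
  simp only [← fr_frob (p := p) (n := n)]
  rw [d1_expand, hx, hC.d1_eq, d1_fr, h1, map_zero, sub_zero, zero_sub,
    Valuation.map_neg]
  refine V.valuation.map_add_le ?_ ?_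
  · refine (val_tri_le V hx1 (B := V.valuation (ε i) ^ 2) ?_ hx3).trans (by simp)
    intro j
    rw [hfr]
    exact (pow_le_pow_left' (hi j) _).trans (pow_le_pow_of_le_one'' (hV i).le hq)
  · refine (val_tri_le V hx1 (B := 1) (D := V.valuation (ε i) ^ 2) ?_ ?_).trans (by simp)
    · intro j; rw [fr_frob]; exact hk _
    · intro j
      rw [hfr2]
      exact (pow_le_pow_left' (hi j) _).trans (pow_le_pow_of_le_one'' (hV i).le (by nlinarith))

end Places

section Tangent

variable {p n : ℕ} [Fact p.Prime] {k L : Type*} [Field k] [Field L] [Algebra k L]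
    [CharP k p] [CharP L p] {y : Fin 2 → L}

/-- The coefficients of the tangent line at `Q`. As `q`-th powers have derivative zero, it is the
line `det (x, Q^q, Q^(q³)) = 0` through `Q^q` and `Q^(q³)`. -/
def tl (σ : k →+* k) (Q : Fin 3 → k) : Fin 3 → k := cr (fr σ Q) (fr σ (fr σ (fr σ Q)))

theorem lf_smul (y : Fin 2 → L) (c : k) (a : Fin 3 → k) :
    lf y (c • a) = algebraMap k L c * lf y a := by
  rw [lf, fr_smul, dt_smul₁]; rfl

theorem lf_add (y : Fin 2 → L) (a b : Fin 3 → k) : lf y (a + b) = lf y a + lf y b := by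
  rw [lf, fr_add, dt_add₁]; rfl

/-- The polynomial `a₀ X + a₁ Y + a₂` attached to the linear form `a`. -/
noncomputable def lpoly (a : Fin 3 → k) : MvPolynomial (Fin 2) k :=
  C (a 0) * X 0 + C (a 1) * X 1 + C (a 2)

theorem aeval_lpoly (y : Fin 2 → L) (a : Fin 3 → k) : aeval y (lpoly a) = lf y a := by
  simp [lpoly, lf, dt, hpt]

theorem exists_normalize {Q : Fin 3 → k} (h1 : d1 (frob p n k) Q = 0) (h2 : d2 (frob p n k) Q ≠ 0) :
    ∃ c : k, c ≠ 0 ∧ (c • Q) 2 = 1 ∧ d1 (frob p n k) (c • Q) = 0 ∧ d2 (frob p n k) (c • Q) ≠ 0 := by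
  have h := third_ne_zero h2
  refine ⟨(Q 2)⁻¹, inv_ne_zero h, by simp [h], by rw [d1_smul, h1, mul_zero], ?_⟩
  rw [d2_smul]
  refine mul_ne_zero ?_ h2
  simp [h]

theorem tl_smul (σ : k →+* k) (c : k) (Q : Fin 3 → k) :
    tl σ (c • Q) = (σ c * σ (σ (σ c))) • tl σ Q := by
  simp only [tl, fr_smul, cr_smul₁, cr_smul₂, smul_smul, mul_comm]

theorem dt_tl (σ : k →+* k) (Q w : Fin 3 → k) :
    dt (tl σ Q) w = tri w (fr σ Q) (fr σ (fr σ (fr σ Q))) := by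
  rw [tl, cr_dt, tri_rotate, tri_rotate]

theorem dt_tl_self {σ : k →+* k} {Q : Fin 3 → k} (h1 : d1 σ Q = 0) : dt (tl σ Q) Q = 0 := by
  rw [dt_tl]; exact h1

theorem tl_ne_zero {σ : k →+* k} {Q : Fin 3 → k} (h2 : d2 σ Q ≠ 0) : tl σ Q ≠ 0 := by
  rw [tl, cr_fr, Ne, fr_eq_zero]
  intro h
  apply h2
  rw [d2, tri_swap', tri_rotate, tri_rotate, ← dt_cr, h]
  simp [dt]

/-- `IsDGZ.ramified` without the normalization `Q 2 = 1`. -/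
theorem IsDGZ.ramified' (hC : IsDGZ p n (k := k) y) (Q : Fin 3 → k)
    (h1 : d1 (frob p n k) Q = 0) (h2 : d2 (frob p n k) Q ≠ 0) :
    ∃ V : ValuationSubring L, (∀ a : k, V.valuation (algebraMap k L a) ≤ 1) ∧
      (∀ ℓ : Fin 3 → k, dt ℓ Q ≠ 0 → V.valuation (lf y ℓ) = 1) ∧
      ∃ t, V.valuation t < 1 ∧ V.valuation (lf y (tl (frob p n k) Q)) ≤ V.valuation t ^ 2 := by
  obtain ⟨c, hc, g0, g1, g2⟩ := exists_normalize h1 h2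
  obtain ⟨V, hk, hV, t, ht, hst⟩ := hC.ramified (c • Q) g0 g1 g2
  refine ⟨V, hk, fun ℓ hℓ => hV ℓ ?_, t, ht, ?_⟩
  · rw [dt_smul₂]; exact mul_ne_zero hc hℓ
  · change V.valuation (lf y (tl (frob p n k) (c • Q))) ≤ _ at hst
    rw [tl_smul, lf_smul, map_mul, val_const V hk _ (by simp [hc]), one_mul] at hst
    exact hst

theorem tri_mem {R : Type*} [CommRing R] (I : Ideal R) (u v w : Fin 3 → R) (h : ∀ i, v i ∈ I) :
    tri u v w ∈ I := by
  have e : tri u v w = v 0 * (u 2 * w 1 - u 1 * w 2) + v 1 * (u 0 * w 2 - u 2 * w 0) +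
      v 2 * (u 1 * w 0 - u 0 * w 1) := by simp [tri]; ring
  rw [e]
  exact add_mem (add_mem (I.mul_mem_right _ (h 0)) (I.mul_mem_right _ (h 1)))
    (I.mul_mem_right _ (h 2))

/-- At a place centred at `Q`, a linear form through `Q` that is not proportional to the tangent
form is a uniformizer, since together with the tangent form it spans the cotangent space of the plane
at `Q`. -/
theorem IsDGZ.unramified (hC : IsDGZ p n (k := k) y) (Q : Fin 3 → k) (hQ : Q 2 = 1)
    (h1 : d1 (frob p n k) Q = 0) (h2 : d2 (frob p n k) Q ≠ 0) (a : Fin 3 → k) (ha : dt a Q = 0)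
    (hδ : cr a (tl (frob p n k) Q) ≠ 0) :
    ∃ V : ValuationSubring L, (∀ a : k, V.valuation (algebraMap k L a) ≤ 1) ∧
      (∀ ℓ : Fin 3 → k, dt ℓ Q ≠ 0 → V.valuation (lf y ℓ) = 1) ∧
      V.valuation (lf y a) < 1 ∧ ∀ z, V.valuation z < 1 → V.valuation z ≤ V.valuation (lf y a) := by
  obtain ⟨V, hk, hV⟩ := hC.exists_center Q hQ h1 h2
  have hq : 2 ≤ p ^ n :=
    (Fact.out : p.Prime).two_le.trans (Nat.le_self_pow hC.pos.ne' p)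
  refine ⟨V, hk, fun ℓ => (val_lf hk hV ℓ).2, (val_lf hk hV a).1 ha, fun z hz => ?_⟩
  set δ := tl (frob p n k) Q with hδdef
  have hδQ : dt δ Q = 0 := dt_tl_self h1
  have hQ0 : Q ≠ 0 := by rintro rfl; simp at hQ
  have hΔ : a 0 * δ 1 - a 1 * δ 0 ≠ 0 := by
    intro h0
    apply hδ
    have e1 : a 2 = -(a 0 * Q 0 + a 1 * Q 1) := by
      have := ha; simp only [dt, hQ] at this; linear_combination this
    have e2 : δ 2 = -(δ 0 * Q 0 + δ 1 * Q 1) := by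
      have := hδQ; simp only [dt, hQ] at this; linear_combination this
    funext i
    fin_cases i
    · simp only [cr, e1, e2]
      change a 1 * _ - _ * δ 1 = 0
      linear_combination (Q 0) * h0
    · simp only [cr, e1, e2]
      change _ * δ 0 - a 0 * _ = 0
      linear_combination (Q 1) * h0
    · exact h0
  set Δ := a 0 * δ 1 - a 1 * δ 0 with hΔdef
  set c : Fin 2 → k := ![Q 0, Q 1] with hc
  set N := RingHom.ker (eval c) with hN
  -- the displacement from `Q`, over the polynomial ring
  set E : Fin 3 → MvPolynomial (Fin 2) k := hpt X - fr C Q with hE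
  have hE0 : E 0 = X 0 - C (Q 0) := rfl
  have hE1 : E 1 = X 1 - C (Q 1) := rfl
  have hE2 : E 2 = 0 := by
    change 1 - C (Q 2) = 0
    rw [hQ, C_1, sub_self]
  have hEN : ∀ i, E i ∈ N := by
    intro i
    rw [hN, RingHom.mem_ker]
    fin_cases i <;> simp [hE0, hE1, hE2, hc]
  set τ := frob p n (MvPolynomial (Fin 2) k) with hτ
  set w : MvPolynomial (Fin 2) k := -(tri (fr C Q + E) (fr τ E) (fr τ (fr τ (fr τ (fr C Q + E))))
        + tri (fr C Q + E) (fr τ (fr C Q)) (fr τ (fr τ (fr τ E)))) with hw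
  have hpow : ∀ f ∈ N, ∀ m, 2 ≤ m → f ^ m ∈ N * N := by
    intro f hf m hm
    obtain ⟨m', rfl⟩ := Nat.exists_eq_add_of_le hm
    rw [pow_add, pow_two]
    exact Ideal.mul_mem_right _ _ (Ideal.mul_mem_mul hf hf)
  have hwN : w ∈ N * N := by
    refine neg_mem (add_mem (tri_mem _ _ _ _ ?_) ?_)
    · intro i
      simpa [hτ, iterateFrobenius_def] using hpow _ (hEN i) _ hq
    · rw [tri_swap', neg_mem_iff]
      refine tri_mem _ _ _ _ fun i => ?_
      simp only [fr_apply, hτ, iterateFrobenius_def, ← pow_mul]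
      exact hpow _ (hEN i) _ (by nlinarith)
  have hx : fr C Q + E = hpt X := by rw [hE]; abel
  have hsum : ∀ ℓ : Fin 3 → k, dt ℓ Q = 0 → lpoly ℓ = C (ℓ 0) * E 0 + C (ℓ 1) * E 1 := by
    intro ℓ hℓ
    have : ℓ 2 = -(ℓ 0 * Q 0 + ℓ 1 * Q 1) := by
      simp only [dt, hQ] at hℓ; linear_combination hℓ
    simp [lpoly, this, hE0, hE1]
    ring
  have hδE : C (δ 0) * E 0 + C (δ 1) * E 1 = tri E (fr τ (fr C Q)) (fr τ (fr τ (fr τ (fr C Q)))) := by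
    simp only [hτ, fr_frob]
    rw [tri_rotate, ← cr_dt, cr_fr]
    simp only [dt, hE2, mul_zero, add_zero]
    rfl
  have haev : aeval y (lpoly δ - w) = 0 := by
    rw [hsum δ hδQ, hδE, d1_expand, hw, hx]
    rw [show d1 τ (fr C Q) = 0 by rw [hτ, d1_fr, h1, map_zero]]
    have e : d1 (frob p n L) (fr (aeval y : MvPolynomial (Fin 2) k →ₐ[k] L).toRingHom (hpt X)) = 0 := by
      rw [← hC.d1_eq]; congr 1; funext i; fin_cases i <;> simp [hpt]
    rw [d1_fr] at e
    refine Eq.trans (congrArg (aeval y) ?_) e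
    ring
  have hS : eval c (lpoly a) = 0 := by
    rw [hsum a ha, map_add, map_mul, map_mul, (RingHom.mem_ker).1 (hEN 0),
      (RingHom.mem_ker).1 (hEN 1)]; simp
  have hCΔ : (C Δ⁻¹ : MvPolynomial (Fin 2) k) * (C (a 0) * C (δ 1) - C (a 1) * C (δ 0)) = 1 := by
    rw [← C_mul, ← C_mul, ← C_sub, ← C_mul, inv_mul_cancel₀ hΔ, C_1]
  rw [← aeval_lpoly]
  refine valuation_le_of_span y c hC.frac V hk ?_ (lpoly a) hS ?_ z hz
  · intro i
    have h0 := hV 0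
    have h1 := hV 1
    fin_cases i <;> simp [hpt, hc] at h0 h1 ⊢ <;> assumption
  · intro i
    have key : ∀ (F u r : MvPolynomial (Fin 2) k), F - u * lpoly a = r * lpoly δ →
        aeval y (F - u * lpoly a - r * w) = 0 := by
      intro F u r h
      rw [h, ← mul_sub, map_mul, haev, mul_zero]
    fin_cases i
    · refine ⟨C Δ⁻¹ * C (δ 1), -(C Δ⁻¹ * C (a 1)) * w, Ideal.mul_mem_left _ _ hwN, key _ _ _ ?_⟩
      change X 0 - C (Q 0) - _ = _
      rw [← hE0, hsum a ha, hsum δ hδQ]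
      linear_combination (-E 0) * hCΔ
    · refine ⟨-(C Δ⁻¹ * C (δ 0)), (C Δ⁻¹ * C (a 0)) * w, Ideal.mul_mem_left _ _ hwN, key _ _ _ ?_⟩
      change X 1 - C (Q 1) - _ = _
      rw [← hE1, hsum a ha, hsum δ hδQ]
      linear_combination (-E 1) * hCΔ

/-- `IsDGZ.unramified` without the normalization `Q 2 = 1`. -/
theorem IsDGZ.unramified' (hC : IsDGZ p n (k := k) y) (Q : Fin 3 → k)
    (h1 : d1 (frob p n k) Q = 0) (h2 : d2 (frob p n k) Q ≠ 0) (a : Fin 3 → k) (ha : dt a Q = 0)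
    (hδ : cr a (tl (frob p n k) Q) ≠ 0) :
    ∃ V : ValuationSubring L, (∀ a : k, V.valuation (algebraMap k L a) ≤ 1) ∧
      (∀ ℓ : Fin 3 → k, dt ℓ Q ≠ 0 → V.valuation (lf y ℓ) = 1) ∧
      V.valuation (lf y a) < 1 ∧ ∀ z, V.valuation z < 1 → V.valuation z ≤ V.valuation (lf y a) := by
  obtain ⟨c, hc, g0, g1, g2⟩ := exists_normalize h1 h2
  obtain ⟨V, hk, hV, hs⟩ := hC.unramified (c • Q) g0 g1 g2 a (by rw [dt_smul₂, ha, mul_zero])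
    (by rw [tl_smul, cr_smul₂]; exact smul_ne_zero (by simp [hc]) hδ)
  exact ⟨V, hk, fun ℓ hℓ => hV ℓ (by rw [dt_smul₂]; exact mul_ne_zero hc hℓ), hs⟩

/-- The curve has a point with `D₂ ≠ 0`, obtained from `exists_line_of_d2` for a point
`(α, 1, 0)` with `α ∉ 𝔽_(q²)`. -/
theorem exists_good [IsAlgClosed k] (hn : 0 < n) : ∃ Q : Fin 3 → k, d1 (frob p n k) Q = 0 ∧
    d2 (frob p n k) Q ≠ 0 := by
  have hq : 2 ≤ p ^ n := (Fact.out : p.Prime).two_le.trans (Nat.le_self_pow hn.ne' p)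
  have hne : ∀ m, 2 ≤ m → (Polynomial.X ^ m - Polynomial.X : Polynomial k) ≠ 0 := by
    intro m hm h
    have := congrArg (Polynomial.coeff · m) h
    simp only [Polynomial.coeff_sub, Polynomial.coeff_X_pow, Polynomial.coeff_X,
      if_neg (by omega : ¬ 1 = m), Polynomial.coeff_zero] at this
    simp at this
  have hne' := mul_ne_zero (hne _ hq) (hne (p ^ n * p ^ n) (by nlinarith))
  obtain ⟨α, hα⟩ : ∃ α : k, Polynomial.eval α ((Polynomial.X ^ (p ^ n) - Polynomial.X) *
      (Polynomial.X ^ (p ^ n * p ^ n) - Polynomial.X) : Polynomial k) ≠ 0 := by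
    by_contra! h
    exact hne' (Polynomial.funext fun r => by rw [h r, Polynomial.eval_zero])
  simp only [Polynomial.eval_mul, Polynomial.eval_sub, Polynomial.eval_pow, Polynomial.eval_X] at hα
  obtain ⟨m, -, g2, g1⟩ := exists_line_of_d2 p n hn ![α, 1, 0] (by simp [d2, tri])
    (by
      intro h
      have := congrFun h 2
      simp [cr, iterateFrobenius_def] at this
      apply left_ne_zero_of_mul hα
      linear_combination -this)
    (by
      intro h
      have := congrFun h 2
      simp [cr, iterateFrobenius_def] at this
      apply right_ne_zero_of_mul hα
      rw [pow_mul]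
      linear_combination -this)
  obtain ⟨e2, e1⟩ := good_of_line (frob p n k) m
  refine ⟨cr m (fr (frob p n k) m), by rw [e1, g1, map_zero, mul_zero], ?_⟩
  rw [e2]
  exact mul_ne_zero g2 (by rwa [Ne, map_eq_zero])

/-- No nonzero linear form vanishes on the curve, because a point `Q` with `D₂(Q) ≠ 0` and its first
two Frobenius conjugates are not collinear. -/
theorem IsDGZ.eq_zero_of_lf [IsAlgClosed k] (hC : IsDGZ p n (k := k) y) {a : Fin 3 → k}
    (ha : lf y a = 0) : a = 0 := by
  have key : ∀ Q : Fin 3 → k, d1 (frob p n k) Q = 0 → d2 (frob p n k) Q ≠ 0 → dt Q a = 0 := by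
    intro Q h1 h2
    obtain ⟨V, hk, hV, -⟩ := hC.ramified' Q h1 h2
    by_contra h
    have := hV a (by rwa [dt_comm])
    rw [ha, map_zero] at this
    exact zero_ne_one this
  obtain ⟨Q, h1, h2⟩ := exists_good (p := p) (n := n) (k := k) hC.pos
  have h2' : d2 (frob p n k) (fr (frob p n k) Q) ≠ 0 := by rwa [d2_self, Ne, map_eq_zero]
  have h1' : d1 (frob p n k) (fr (frob p n k) Q) = 0 := by rw [d1_self, h1, map_zero]
  have h := cramer_dual Q (fr (frob p n k) Q) (fr (frob p n k) (fr (frob p n k) Q)) a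
  rw [key Q h1 h2, key _ h1' h2', key _ (by rw [d1_self, h1', map_zero])
    (by rwa [d2_self, Ne, map_eq_zero])] at h
  simp only [zero_smul, add_zero] at h
  exact (smul_eq_zero.1 h).resolve_left h2

end Tangent

/-! ### Excluding non-rational points -/

section NonRational

variable {p n : ℕ} [Fact p.Prime] {k L : Type*} [Field k] [Field L] [Algebra k L]
    [CharP k p] [CharP L p] {y : Fin 2 → L}

/-- `[v]` is a Galois point, with linear independence of the two forms expressed by their cross
product. -/
def GalPt (y : Fin 2 → L) (v : Fin 3 → k) : Prop :=
  ∀ a b : Fin 3 → k, dt a v = 0 → dt b v = 0 → cr a b ≠ 0 →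
    IsGalois (IntermediateField.adjoin k {lf y a / lf y b}) L

theorem GalPt.smul {v : Fin 3 → k} (h : GalPt y v) {c : k} (hc : c ≠ 0) : GalPt y (c • v) := by
  intro a b ha hb hab
  rw [dt_smul₂] at ha hb
  exact h a b ((mul_eq_zero.1 ha).resolve_left hc) ((mul_eq_zero.1 hb).resolve_left hc) hab

theorem tri_ne_zero_of_dt {v Q e a : Fin 3 → k} (hvQ : cr v Q ≠ 0) (hv : dt a v = 0)
    (hQ : dt a Q = 0) (he : dt a e ≠ 0) : tri v e Q ≠ 0 := by
  intro h
  apply he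
  obtain ⟨α, β, rfl⟩ := exists_eq_add hvQ (w := e) (by rw [tri_swap', h, neg_zero])
  rw [dt_add₂, dt_smul₂, dt_smul₂, hv, hQ, mul_zero, mul_zero, add_zero]

/-- `[v]` is not a Galois point if the tangent line at a point `Q` of the curve passes through `v`
and through another point `Q'` of the curve, without being the tangent line there: the projection from
`v` is ramified at `Q`, unramified at `Q'`, and maps `Q` and `Q'` to the same point. -/
theorem IsDGZ.not_galPt_of_good [IsAlgClosed k] (hC : IsDGZ p n (k := k) y) {v : Fin 3 → k}
    (hG : GalPt y v) (Q Q' : Fin 3 → k)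
    (h1 : d1 (frob p n k) Q = 0) (h2 : d2 (frob p n k) Q ≠ 0)
    (h1' : d1 (frob p n k) Q' = 0) (h2' : d2 (frob p n k) Q' ≠ 0)
    (hv : dt (tl (frob p n k) Q) v = 0) (hQ' : dt (tl (frob p n k) Q) Q' = 0)
    (hv' : dt (tl (frob p n k) Q') v ≠ 0) (hvQ : cr v Q ≠ 0) (hvQ' : cr v Q' ≠ 0) : False := by
  set a := tl (frob p n k) Q with ha
  have ha0 : a ≠ 0 := tl_ne_zero h2
  obtain ⟨i, hi, -⟩ := exists_dt_ne_zero ha0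
  set e : Fin 3 → k := Pi.single i 1 with he
  set b := cr v e with hb
  have hv0 : v ≠ 0 := by rintro rfl; apply hvQ; funext i; fin_cases i <;> simp [cr]
  have hab : cr a b ≠ 0 := by
    have : cr a b = dt a e • v := by
      rw [cr_anti, hb, cr_cr_left, dt_comm v a, hv, zero_smul, zero_sub, dt_comm e, smul_neg,
        neg_one_smul, neg_neg]
    rw [this]
    exact smul_ne_zero hi hv0
  have hbv : dt b v = 0 := by rw [hb, cr_dt, tri_self₁₃]
  have hbQ : dt b Q ≠ 0 := by
    rw [hb, cr_dt]; exact tri_ne_zero_of_dt hvQ hv (dt_tl_self h1) hi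
  have hbQ' : dt b Q' ≠ 0 := by
    rw [hb, cr_dt]; exact tri_ne_zero_of_dt hvQ' hv hQ' hi
  have hcr : cr a (tl (frob p n k) Q') ≠ 0 := by
    intro h
    obtain ⟨c, hc⟩ := exists_eq_smul ha0 h
    apply hv'
    rw [hc, dt_smul₁, hv, mul_zero]
  obtain ⟨V₀, hk₀, hV₀, t, ht, hst⟩ := hC.ramified' Q h1 h2
  obtain ⟨V₁, hk₁, hV₁, hs₁, hgen⟩ := hC.unramified' Q' h1' h2' a hQ' hcr
  have e0 : V₀.valuation (lf y a / lf y b) = V₀.valuation (lf y a) := by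
    rw [map_div₀, hV₀ b hbQ, div_one]
  have e1 : V₁.valuation (lf y a / lf y b) = V₁.valuation (lf y a) := by
    rw [map_div₀, hV₁ b hbQ', div_one]
  have hb0 : b ≠ 0 := by
    rintro h; apply hbQ; rw [h]; simp [dt]
  have hs : lf y a / lf y b ≠ 0 :=
    div_ne_zero (fun h => ha0 (hC.eq_zero_of_lf h)) (fun h => hb0 (hC.eq_zero_of_lf h))
  have := hG a b hv hbv hab
  have := finiteDimensional_of_isAlgebraic y hC.frac
    (IntermediateField.adjoin k {lf y a / lf y b})
  exact not_isGalois_of_ramified_of_unramified (lf y a / lf y b) hs V₀ V₁ hk₀ hk₁ t ht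
    (by rw [e0]; exact hst) (by rw [e1]; exact hs₁) (by rw [e1]; exact hgen)

theorem fr_frob_surjective [IsAlgClosed k] (v : Fin 3 → k) : ∃ w, fr (frob p n k) w = v := by
  have : ∀ c : k, ∃ t : k, frob p n k t = c := fun c => by
    obtain ⟨t, ht⟩ := IsAlgClosed.exists_pow_nat_eq c
      (n := p ^ n) (pow_pos (Fact.out : p.Prime).pos n)
    exact ⟨t, by rw [iterateFrobenius_def, ht]⟩
  choose f hf using this
  exact ⟨fun i => f (v i), by funext i; exact hf _⟩

/-- A line `m` through `v` as in `exists_line` shows that `v^q` is not a Galois point. With `Q` the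
intersection of `m` and `m^q`, the line `m^q` passes through `v^q`, `Q`, `Q^q` and `Q^(q³)`; so it is
tangent to the curve at `Q`, but it is not tangent at `Q^q`. -/
theorem IsDGZ.not_galPt_of_line [IsAlgClosed k] (hC : IsDGZ p n (k := k) y) {v : Fin 3 → k}
    (hG : GalPt y (fr (frob p n k) v)) (m : Fin 3 → k) (hm : dt m v = 0)
    (hm2 : d2 (frob p n k) m ≠ 0)
    (hm1 : tri m (fr (frob p n k) (fr (frob p n k) m))
        (fr (frob p n k) (fr (frob p n k) (fr (frob p n k) m))) = 0)
    (hvQ : ∀ Q : Fin 3 → k, d1 (frob p n k) Q = 0 → d2 (frob p n k) Q ≠ 0 →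
      cr (fr (frob p n k) v) Q ≠ 0) : False := by
  obtain ⟨e2, e1⟩ := good_of_line (frob p n k) m
  set σ := frob p n k with hσ
  set Q := cr m (fr σ m) with hQ
  have h2 : d2 σ Q ≠ 0 := by
    rw [e2]; exact mul_ne_zero hm2 (by rwa [Ne, map_eq_zero])
  have h1 : d1 σ Q = 0 := by rw [e1, hm1, map_zero, mul_zero]
  have h2' : d2 σ (fr σ Q) ≠ 0 := by rwa [d2_self, Ne, map_eq_zero]
  have h1' : d1 σ (fr σ Q) = 0 := by rw [d1_self, h1, map_zero]
  set w := fr σ v with hw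
  have hm0 : m ≠ 0 := by rintro rfl; apply hm2; simp [d2, tri]
  have hΦm0 : fr σ m ≠ 0 := by rwa [Ne, fr_eq_zero]
  have k0 : dt (fr σ m) Q = 0 := by rw [hQ, dt_cr, tri_self₁₃]
  have k1 : dt (fr σ m) (fr σ Q) = 0 := by rw [dt_fr, hQ, dt_cr, tri_self₁₂, map_zero]
  have kw : dt (fr σ m) w = 0 := by rw [hw, dt_fr, hm, map_zero]
  have k3 : dt (fr σ m) (fr σ (fr σ (fr σ Q))) = 0 := by
    rw [dt_fr, hQ, ← cr_fr, ← cr_fr, dt_cr, hm1, map_zero]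
  refine hC.not_galPt_of_good hG Q (fr σ Q) h1 h2 h1' h2' ?_ ?_ ?_ (hvQ _ h1 h2) (hvQ _ h1' h2')
  · rw [dt_tl]; exact tri_eq_zero_of_dt hΦm0 kw k1 k3
  · rw [dt_tl, tri_self₁₂]
  · rw [dt_tl]
    have hQQ : cr Q (fr σ Q) ≠ 0 := cr_ne_zero_of_tri h2
    obtain ⟨α, β, hαβ⟩ := exists_eq_add hQQ (w := w) (tri_eq_zero_of_dt hΦm0 k0 k1 kw)
    have hα : α ≠ 0 := by
      rintro rfl
      apply hvQ _ h1' h2'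
      rw [hαβ, zero_smul, zero_add, cr_smul₁, cr_self, smul_zero]
    have hQQ' : cr (fr σ Q) (fr σ (fr σ Q)) ≠ 0 := cr_ne_zero_of_tri h2'
    obtain ⟨l, μ, hlμ⟩ := exists_eq_add hQQ (w := fr σ (fr σ (fr σ Q))) h1
    have hl : l ≠ 0 := by
      rintro rfl
      have : cr (fr σ Q) (fr σ (fr σ (fr σ Q))) = 0 := by
        rw [hlμ, zero_smul, zero_add, cr_smul₂, cr_self, smul_zero]
      exact tl_ne_zero h2 this
    have e4 : fr σ (fr σ (fr σ (fr σ Q))) = σ l • fr σ Q + σ μ • fr σ (fr σ Q) := by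
      conv_lhs => rw [hlμ]
      rw [fr_add, fr_smul, fr_smul]
    have e5 : tri (fr σ Q) (fr σ (fr σ Q)) (fr σ (fr σ (fr σ (fr σ Q)))) = 0 := h1'
    rw [hαβ, tri_add₁, tri_smul₁, tri_smul₁, e5, mul_zero, add_zero, e4, tri_add₃, tri_smul₃,
      tri_smul₃, tri_self₂₃, mul_zero, add_zero, tri_swap' Q]
    have h2n : tri Q (fr σ Q) (fr σ (fr σ Q)) ≠ 0 := h2
    exact mul_ne_zero hα (mul_ne_zero (by rwa [Ne, map_eq_zero]) (neg_ne_zero.2 h2n))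

/-- Points off the curve `D₁ = 0` are not Galois points. -/
theorem IsDGZ.not_galPt_of_d1 [IsAlgClosed k] (hC : IsDGZ p n (k := k) y) {v : Fin 3 → k}
    (hG : GalPt y v) (h1 : d1 (frob p n k) v ≠ 0) (h2 : d2 (frob p n k) v ≠ 0) : False := by
  obtain ⟨w, rfl⟩ := fr_frob_surjective (p := p) (n := n) v
  rw [d1_self, Ne, map_eq_zero] at h1
  rw [d2_self, Ne, map_eq_zero] at h2
  obtain ⟨m, hm, hm2, hm1⟩ := exists_line_of_d1 p n hC.pos w h1 h2
  refine hC.not_galPt_of_line hG m hm hm2 hm1 fun Q g1 _ h => ?_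
  have hw0 : fr (frob p n k) w ≠ 0 := by
    rw [Ne, fr_eq_zero]; rintro rfl; apply h1; simp [d1, tri]
  obtain ⟨c, rfl⟩ := exists_eq_smul hw0 h
  rw [d1_smul, d1_self, mul_eq_zero, map_eq_zero] at g1
  rcases g1.resolve_right h1 with g
  have hc : c = 0 := by simpa using g
  rename_i g2
  rw [hc, zero_smul] at g2
  apply g2; simp [d2, tri]

/-- Points of a line over `𝔽_q` that are not defined over `𝔽_q` or `𝔽_(q²)` are not Galois points. -/
theorem IsDGZ.not_galPt_of_d2 [IsAlgClosed k] (hC : IsDGZ p n (k := k) y) {v : Fin 3 → k}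
    (hG : GalPt y v) (h2 : d2 (frob p n k) v = 0) (hv1 : cr v (fr (frob p n k) v) ≠ 0)
    (hv2 : cr v (fr (frob p n k) (fr (frob p n k) v)) ≠ 0) : False := by
  obtain ⟨w, rfl⟩ := fr_frob_surjective (p := p) (n := n) v
  rw [d2_self, map_eq_zero] at h2
  rw [cr_fr, Ne, fr_eq_zero] at hv1
  rw [cr_fr, Ne, fr_eq_zero] at hv2
  obtain ⟨m, hm, hm2, hm1⟩ := exists_line_of_d2 p n hC.pos w h2 hv1 hv2
  refine hC.not_galPt_of_line hG m hm hm2 hm1 fun Q _ g2 h => g2 ?_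
  have hw0 : fr (frob p n k) w ≠ 0 := by
    rw [Ne, fr_eq_zero]; rintro rfl; apply hv1; funext i; fin_cases i <;> simp [cr]
  obtain ⟨c, rfl⟩ := exists_eq_smul hw0 h
  rw [d2_smul, d2_self, h2, map_zero, mul_zero]

/-- Points of the curve that are not defined over `𝔽_(q³)` are not Galois points. If `v = Q^q`, the
tangent line at `Q` passes through `Q^q` and `Q^(q³)`, and it is not tangent at `Q^(q³)`. -/
theorem IsDGZ.not_galPt_of_ne [IsAlgClosed k] (hC : IsDGZ p n (k := k) y) {v : Fin 3 → k}
    (hG : GalPt y v) (h1 : d1 (frob p n k) v = 0) (h2 : d2 (frob p n k) v ≠ 0)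
    (h3 : cr v (fr (frob p n k) (fr (frob p n k) (fr (frob p n k) v))) ≠ 0) : False := by
  obtain ⟨Q, rfl⟩ := fr_frob_surjective (p := p) (n := n) v
  set σ := frob p n k with hσ
  rw [d1_self, map_eq_zero] at h1
  rw [d2_self, Ne, map_eq_zero] at h2
  rw [cr_fr, Ne, fr_eq_zero] at h3
  have h2' : d2 σ (fr σ (fr σ (fr σ Q))) ≠ 0 := by simpa [d2_self] using h2
  have h1' : d1 σ (fr σ (fr σ (fr σ Q))) = 0 := by simp [d1_self, h1]
  have hQQ : cr Q (fr σ Q) ≠ 0 := cr_ne_zero_of_tri h2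
  refine hC.not_galPt_of_good hG Q (fr σ (fr σ (fr σ Q))) h1 h2 h1' h2' ?_ ?_ ?_ ?_ ?_
  · rw [dt_tl, tri_self₁₂]
  · rw [dt_tl, tri_self₁₃]
  · rw [dt_tl, tri_fr, ← hσ]
    obtain ⟨α, β, hαβ⟩ := exists_eq_add hQQ (w := fr σ (fr σ (fr σ Q))) h1
    have hα : α ≠ 0 := by
      rintro rfl
      have : cr (fr σ Q) (fr σ (fr σ (fr σ Q))) = 0 := by
        rw [hαβ, zero_smul, zero_add, cr_smul₂, cr_self, smul_zero]
      exact tl_ne_zero h2 this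
    have hβ : β ≠ 0 := by
      rintro rfl
      apply h3
      rw [hαβ, zero_smul, add_zero, cr_smul₂, cr_self, smul_zero]
    have e5 : fr σ (fr σ (fr σ (fr σ (fr σ Q)))) =
        σ (σ α) • fr σ (fr σ Q) + σ (σ β) • fr σ (fr σ (fr σ Q)) := by
      conv_lhs => rw [hαβ]
      simp only [fr_add, fr_smul]
    have e : tri Q (fr σ (fr σ (fr σ Q))) (fr σ (fr σ (fr σ (fr σ (fr σ Q))))) =
        β * (σ (σ α) * d2 σ Q) := by
      rw [e5, tri_add₃, tri_smul₃, tri_smul₃, tri_self₂₃, mul_zero, add_zero, hαβ, tri_add₂,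
        tri_smul₂, tri_smul₂, tri_self₁₂, d2]
      ring
    rw [e]
    simp only [map_mul]
    refine mul_ne_zero ?_ (mul_ne_zero ?_ ?_) <;> simpa
  · rw [cr_anti]; exact smul_ne_zero (by simp) hQQ
  · exact tl_ne_zero h2

/-- Points defined over `𝔽_(q³)` with `D₂ ≠ 0` are not Galois points. The line `a` through `v` and
`v^q` is tangent at `v`, to order at least `q + 1`, so that `a / b` still vanishes to order at least
`q` at `v` for a general form `b` through `v`; but `a` is not tangent at `v^q`. -/
theorem IsDGZ.not_galPt_of_eq [IsAlgClosed k] (hC : IsDGZ p n (k := k) y) {v : Fin 3 → k}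
    (hG : GalPt y v) (h2 : d2 (frob p n k) v ≠ 0) (hv2 : v 2 = 1)
    (h3 : fr (frob p n k) (fr (frob p n k) (fr (frob p n k) v)) = v) : False := by
  have h1 : d1 (frob p n k) v = 0 := by rw [d1, h3, tri_self₁₃]
  have hq : 2 ≤ p ^ n :=
    (Fact.out : p.Prime).two_le.trans (Nat.le_self_pow hC.pos.ne' p)
  set σ := frob p n k with hσ
  have h2' : d2 σ (fr σ v) ≠ 0 := by rwa [d2_self, Ne, map_eq_zero]
  have h1' : d1 σ (fr σ v) = 0 := by rw [d1_self, h1, map_zero]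
  set a := cr v (fr σ v) with ha
  have ha0 : a ≠ 0 := cr_ne_zero_of_tri h2
  obtain ⟨i, hi, -⟩ := exists_dt_ne_zero ha0
  set e : Fin 3 → k := Pi.single i 1 with he
  set b := cr v e with hb
  have hv0 : v ≠ 0 := by rintro rfl; simp at hv2
  have hav : dt a v = 0 := by rw [ha, cr_dt, tri_self₁₃]
  have hab' : cr a b = (dt a e) • v := by
    rw [cr_anti, hb, cr_cr_left, dt_comm v a, hav, zero_smul, zero_sub, dt_comm e, smul_neg,
      neg_one_smul, neg_neg]
  have hab : cr a b ≠ 0 := by rw [hab']; exact smul_ne_zero hi hv0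
  have hbv : dt b v = 0 := by rw [hb, cr_dt, tri_self₁₃]
  have haQ : dt a (fr σ v) = 0 := by rw [ha, cr_dt, tri_self₂₃]
  have hbQ' : dt b (fr σ v) ≠ 0 := by
    rw [hb, cr_dt]; exact tri_ne_zero_of_dt ha0 hav haQ hi
  have hcr : cr a (tl σ (fr σ v)) ≠ 0 := by
    intro h
    obtain ⟨c, hc⟩ := exists_eq_smul ha0 h
    have : dt (tl σ (fr σ v)) v = 0 := by rw [hc, dt_smul₁, hav, mul_zero]
    rw [dt_tl, h3, tri_swap'] at this
    exact h2 (neg_eq_zero.1 this)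
  have hb0 : b ≠ 0 := by
    rintro h; apply hbQ'; rw [h]; simp [dt]
  have hs : lf y a / lf y b ≠ 0 :=
    div_ne_zero (fun h => ha0 (hC.eq_zero_of_lf h)) (fun h => hb0 (hC.eq_zero_of_lf h))
  obtain ⟨V₁, hk₁, hV₁, hs₁, hgen⟩ := hC.unramified' (fr σ v) h1' h2' a haQ hcr
  have e1 : V₁.valuation (lf y a / lf y b) = V₁.valuation (lf y a) := by
    rw [map_div₀, hV₁ b hbQ', div_one]
  obtain ⟨V, hk, hV⟩ := hC.exists_center v hv2 h1 h2
  set f := algebraMap k L with hf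
  set ε := hpt y - fr f v with hε
  obtain ⟨j, hj⟩ := exists_max V ε
  set t := ε j with ht
  have ht1 : V.valuation t < 1 := hV j
  have hx : fr f v + ε = hpt y := by rw [hε]; abel
  set τ := frob p n L with hτ
  have hlf : ∀ ℓ, dt ℓ v = 0 → lf y ℓ = dt (fr f ℓ) ε := fun ℓ hℓ => by
    rw [lf_eq y v, hℓ, map_zero, zero_add]
  have hfr : ∀ i, V.valuation (fr τ ε i) ≤ V.valuation t ^ (p ^ n) := fun i => by
    simp only [fr_apply, hτ, iterateFrobenius_def, map_pow]
    exact pow_le_pow_left' (hj i) _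
  have hε3 : ∀ i, V.valuation (fr τ (fr τ (fr τ ε)) i) ≤ V.valuation t ^ (p ^ n + 1) := fun i => by
    simp only [fr_apply, hτ, iterateFrobenius_def, ← pow_mul, map_pow]
    refine (pow_le_pow_left' (hj i) _).trans (pow_le_pow_of_le_one'' ht1.le ?_)
    nlinarith
  have hε3' : ∀ i, V.valuation (fr τ (fr τ (fr τ ε)) i) ≤ V.valuation t := fun i =>
    (hε3 i).trans ((pow_le_pow_of_le_one'' ht1.le (by omega : 1 ≤ p ^ n + 1)).trans (pow_one _).le)
  have hdiff : ∀ i, V.valuation ((fr τ (fr τ (fr τ ε)) - ε) i) ≤ V.valuation t := fun i =>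
    V.valuation.map_sub_le (hε3' i) (hj i)
  -- the equation of the curve, expanded at `v`, using that `v` is fixed by the cube of Frobenius
  have hexp : dt (fr f a) ε = tri (fr f v) (fr τ (fr f v)) (fr τ (fr τ (fr τ ε)))
      + tri (fr f v) (fr τ ε) (fr τ (fr τ (fr τ ε)) - ε)
      + tri ε (fr τ (fr f v)) (fr τ (fr τ (fr τ ε)))
      + tri ε (fr τ ε) (fr τ (fr τ (fr τ ε))) := by
    have h := hC.d1_eq
    have e3 : fr τ (fr τ (fr τ (fr f v))) = fr f v := by
      rw [hτ, fr_frob f, fr_frob f, fr_frob f]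
      exact congrArg (fr f) h3
    rw [← hx, d1, fr_add, fr_add, fr_add, e3] at h
    have key : ∀ A B E E1 E3 : Fin 3 → L, tri A B E = tri A B E3 + tri A E1 (E3 - E) + tri E B E3
        + tri E E1 E3 - tri (A + E) (B + E1) (A + E3) := fun A B E E1 E3 => by
      simp only [tri, Pi.add_apply, Pi.sub_apply]; ring
    have ea : dt (fr f a) ε = tri (fr f v) (fr τ (fr f v)) ε := by
      rw [ha, ← cr_fr, cr_dt, hτ, fr_frob]
    rw [ea, key _ _ _ (fr τ ε) (fr τ (fr τ (fr τ ε))), h, sub_zero]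
  have hone : ∀ i, V.valuation (fr f v i) ≤ 1 := fun i => hk _
  have hone' : ∀ i, V.valuation (fr τ (fr f v) i) ≤ 1 := fun i => by
    rw [hτ, fr_frob]; exact hk _
  have hVa : V.valuation (lf y a) ≤ V.valuation t ^ (p ^ n + 1) := by
    rw [hlf a hav, hexp]
    refine V.valuation.map_add_le (V.valuation.map_add_le (V.valuation.map_add_le ?_ ?_) ?_) ?_
    · exact (val_tri_le V hone hone' hε3).trans (by simp)
    · exact (val_tri_le V hone hfr hdiff).trans (by rw [one_mul, ← pow_succ])
    · exact (val_tri_le V (fun i => (hV i).le) hone' hε3).trans (by simp)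
    · exact (val_tri_le V (fun i => (hV i).le) (fun i => (hfr i).trans (pow_le_one' ht1.le _))
        hε3).trans (by simp)
  have ht0 : t ≠ 0 := by
    intro h0
    rw [h0, map_zero, zero_pow (by omega)] at hVa
    have : lf y a = 0 := by simpa using hVa
    exact ha0 (hC.eq_zero_of_lf this)
  -- `ε` lies in the span of the values of `a` and `b`
  have hVb : V.valuation t ≤ V.valuation (lf y b) := by
    have hc := cramer_dual (fr f a) (fr f b) (Pi.single 2 1) ε
    rw [← hlf a hav, ← hlf b hbv] at hc
    have ε2 : dt (Pi.single 2 1) ε = 0 := by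
      have : ε 2 = 0 := by rw [hε, Pi.sub_apply, fr_apply, hv2, map_one]; exact sub_self _
      simp [dt, this]
    rw [ε2, zero_smul, add_zero, ← cr_dt, cr_fr, hab', fr_smul, dt_smul₁] at hc
    have e2 : dt (fr f v) (Pi.single 2 1) = 1 := by simp [dt, Pi.single_apply, hv2]
    rw [e2, mul_one] at hc
    have hcj := congrArg V.valuation (congrFun hc j)
    rw [Pi.smul_apply, smul_eq_mul, map_mul, val_const V hk _ hi, one_mul] at hcj
    have hcb : ∀ (ℓ : Fin 3 → k) (i : Fin 3), V.valuation (cr (fr f ℓ) (Pi.single 2 1) i) ≤ 1 ∧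
        V.valuation (cr (Pi.single 2 1) (fr f ℓ) i) ≤ 1 := fun ℓ i => by
      rw [← fr_single f, cr_fr, cr_fr]; exact ⟨hk _, hk _⟩
    have h4 : V.valuation t ≤ max (V.valuation (lf y a)) (V.valuation (lf y b)) := by
      rw [ht, hcj]
      refine (V.valuation.map_add _ _).trans (max_le_max ?_ ?_)
      · rw [Pi.smul_apply, smul_eq_mul, map_mul]
        exact mul_le_of_le_one_right' (hcb b j).1
      · rw [Pi.smul_apply, smul_eq_mul, map_mul]
        exact mul_le_of_le_one_right' (hcb a j).2
    rcases le_max_iff.1 h4 with h | h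
    · exfalso
      have h5 := h.trans hVa
      rw [pow_succ] at h5
      have hp : 0 < V.valuation t := zero_lt_iff.2 (by simpa using ht0)
      have : V.valuation t ^ (p ^ n) * V.valuation t < 1 * V.valuation t :=
        mul_lt_mul_of_pos_right (pow_lt_one₀ zero_le ht1 (by omega)) hp
      rw [one_mul] at this
      exact absurd h5 (not_le.2 this)
    · exact h
  have := hG a b hav hbv hab
  have := finiteDimensional_of_isAlgebraic y hC.frac
    (IntermediateField.adjoin k {lf y a / lf y b})
  refine not_isGalois_of_ramified_of_unramified (lf y a / lf y b) hs V V₁ hk hk₁ t ht1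
    ?_ (by rw [e1]; exact hs₁) (by rw [e1]; exact hgen)
  rw [map_div₀]
  have hp : 0 < V.valuation t := zero_lt_iff.2 (by simpa using ht0)
  refine div_le_of_le_mul₀ zero_le zero_le ?_
  refine hVa.trans ?_
  rw [pow_succ]
  exact mul_le_mul' (pow_le_pow_of_le_one'' ht1.le hq) hVb

end NonRational

/-! ### Points defined over the quadratic extension -/

section Quadratic

/-- The local equation, obtained from `D₁` by dividing by `ν` in coordinates `α = a / a'`,
`ν = m / a'` in which Frobenius exchanges the linear forms `a` and `a'` and maps `m` to `-m`. -/
def gI {R : Type*} [CommRing R] (q : ℕ) (α ν : R) : R :=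
  ν ^ (q - 1) * (1 - α ^ (q ^ 3 + 1)) - ν ^ (q ^ 3 - 1) * (1 - α ^ (q + 1))
    + (α ^ q - α ^ (q ^ 3))

/-- `D₂` divided by `ν`, in the same coordinates as `gI`. -/
def θI {R : Type*} [CommRing R] (q : ℕ) (α ν : R) : R :=
  ν ^ (q ^ 2 - 1) * (α ^ (q + 1) - 1) + ν ^ (q - 1) * (α - α ^ (q ^ 2)) + (1 - α ^ (q ^ 2 + q))

theorem tri_lin {R : Type*} [CommRing R] (a b c x y z : Fin 3 → R) :
    tri ![dt a x, dt b x, dt c x] ![dt a y, dt b y, dt c y] ![dt a z, dt b z, dt c z]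
      = tri a b c * tri x y z := by
  simp [tri, dt]; ring

/-- `D₁` and `D₂` in the coordinates `α = a / a'` and `ν = m / a'`, up to a constant factor. -/
theorem d1_gI {R : Type*} [CommRing R] {q : ℕ} (hq : 2 ≤ q) (σ : R →+* R) (hσ : ∀ t, σ t = t ^ q)
    {a a' m x : Fin 3 → R} (ha : fr σ a = a') (ha' : fr σ a' = a) (hm : fr σ m = -m)
    (hx : dt a' x = 1) :
    tri a a' m * d1 σ x = -(dt m x * gI q (dt a x) (dt m x)) ∧
      tri a a' m * d2 σ x = dt m x * θI q (dt a x) (dt m x) := by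
  have h1 : ∀ z, dt a (fr σ z) = σ (dt a' z) := fun z => by rw [← ha', dt_fr]
  have h2 : ∀ z, dt a' (fr σ z) = σ (dt a z) := fun z => by
    conv_lhs => rw [← ha]
    rw [dt_fr]
  have h3 : ∀ z, dt m (fr σ z) = -σ (dt m z) := fun z => by
    rw [← dt_fr, hm]; simp [dt]; ring
  have e1 : q ^ 3 = q * q * q := by ring
  have e2 : q ^ 2 = q * q := by ring
  have p1 : ∀ t : R, t ^ q = t * t ^ (q - 1) := fun t => by
    rw [← pow_succ']; congr 1; omega
  have hq3 : 1 ≤ q ^ 3 := Nat.one_le_pow _ _ (by omega)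
  have hq2 : 1 ≤ q ^ 2 := Nat.one_le_pow _ _ (by omega)
  have p3 : ∀ t : R, t ^ (q ^ 3) = t * t ^ (q ^ 3 - 1) := fun t => by
    rw [← pow_succ']; congr 1; omega
  have p2 : ∀ t : R, t ^ (q ^ 2) = t * t ^ (q ^ 2 - 1) := fun t => by
    rw [← pow_succ']; congr 1; omega
  constructor
  · rw [d1, ← tri_lin]
    simp only [h1, h2, h3, hx, map_neg, map_one, neg_neg]
    simp only [hσ, ← pow_mul, ← e1]
    simp only [tri, gI, pow_succ _ (q ^ 3), pow_succ _ q, Matrix.cons_val]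
    rw [p1 (dt m x), p3 (dt m x)]
    ring
  · rw [d2, ← tri_lin]
    simp only [h1, h2, h3, hx, map_neg, map_one, neg_neg]
    simp only [hσ, ← pow_mul, ← e2]
    simp only [tri, θI, pow_add, pow_one, Matrix.cons_val]
    rw [p1 (dt m x), p2 (dt m x)]
    ring

variable {p n : ℕ} [Fact p.Prime] {k L : Type*} [Field k] [Field L] [Algebra k L]
    [CharP k p] [CharP L p] {y : Fin 2 → L}

theorem val_aeval_sub (V : ValuationSubring L) (hk : ∀ a : k, V.valuation (algebraMap k L a) ≤ 1)
    (z : Fin 2 → L) (c : Fin 2 → k) (hV : ∀ i, V.valuation (z i - algebraMap k L (c i)) < 1)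
    (h : MvPolynomial (Fin 2) k) : V.valuation (aeval z h - algebraMap k L (eval c h)) < 1 := by
  have hle : ∀ h : MvPolynomial (Fin 2) k,
      V.valuation (aeval z h - algebraMap k L (eval c h)) < 1 → V.valuation (aeval z h) ≤ 1 := by
    intro h hh
    have := V.valuation.map_add_le hh.le (hk (eval c h))
    rwa [sub_add_cancel] at this
  induction h using MvPolynomial.induction_on with
  | C a => simp
  | add f g hf hg =>
    have := V.valuation.map_add_lt hf hg
    convert this using 2
    simp only [map_add]; ring
  | mul_X f i hf =>
    have h1 : V.valuation ((aeval z f - algebraMap k L (eval c f)) * z i) < 1 := by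
      rw [map_mul]
      refine mul_lt_one_of_lt_of_le hf ?_
      have := V.valuation.map_add_le (hV i).le (hk (c i))
      rwa [sub_add_cancel] at this
    have h2 : V.valuation (algebraMap k L (eval c f) * (z i - algebraMap k L (c i))) < 1 := by
      rw [map_mul]
      exact mul_lt_one_of_nonneg_of_lt_one_right (hk _) zero_le (hV i)
    convert V.valuation.map_add_lt h1 h2 using 2
    simp only [map_mul, aeval_X, eval_X]; ring

theorem exists_gI_zero_ne [IsAlgClosed k] {q : ℕ} (hq : 2 ≤ q) :
    ∃ t : k, t ^ q - t ^ (q ^ 3) ≠ 0 := by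
  by_contra! h
  have h3 : q < q ^ 3 := by nlinarith [sq_nonneg (q : ℤ), pow_succ q 2, pow_two q]
  have : (Polynomial.X ^ q - Polynomial.X ^ (q ^ 3) : Polynomial k) = 0 :=
    Polynomial.funext fun r => by simpa using h r
  have := congrArg (Polynomial.coeff · q) this
  simp [Polynomial.coeff_X_pow, h3.ne] at this

/-- The generic point satisfies the local equation `gI`, and `L` has a place centred at
`α = ν = 0`. This is a point with `D₂ = 0`, so it is not covered by `IsDGZ.exists_center`; a relation
between `α` and `ν` is seen to vanish there through the points with `D₂ ≠ 0` and the Nullstellensatz. -/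
theorem IsDGZ.exists_center_I [IsAlgClosed k] (hC : IsDGZ p n (k := k) y) {a a' m : Fin 3 → k}
    (ha : fr (frob p n k) a = a') (ha' : fr (frob p n k) a' = a) (hm : fr (frob p n k) m = -m)
    (hT : tri a a' m ≠ 0) :
    gI (p ^ n) (lf y a / lf y a') (lf y m / lf y a') = 0 ∧
    ∃ V : ValuationSubring L, (∀ a : k, V.valuation (algebraMap k L a) ≤ 1) ∧
      V.valuation (lf y a / lf y a') < 1 ∧ V.valuation (lf y m / lf y a') < 1 := by
  have hq : 2 ≤ p ^ n :=
    (Fact.out : p.Prime).two_le.trans (Nat.le_self_pow hC.pos.ne' p)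
  have hσ : ∀ t : k, frob p n k t = t ^ p ^ n := fun t => iterateFrobenius_def ..
  have hτ : ∀ t : L, frob p n L t = t ^ p ^ n := fun t => iterateFrobenius_def ..
  have ha'0 : a' ≠ 0 := by rintro rfl; apply hT; simp [tri]
  have hm0 : m ≠ 0 := by rintro rfl; apply hT; simp [tri]
  have hA' : lf y a' ≠ 0 := fun h => ha'0 (hC.eq_zero_of_lf h)
  have hN : lf y m ≠ 0 := fun h => hm0 (hC.eq_zero_of_lf h)
  set f := algebraMap k L with hf
  constructor
  · have h := (d1_gI hq (frob p n L) hτ (a := fr f a) (a' := fr f a') (m := fr f m)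
      (x := (lf y a')⁻¹ • hpt y) (by rw [fr_frob f, ha]) (by rw [fr_frob f, ha'])
      (by rw [fr_frob f, hm]; funext i; simp) (by rw [dt_smul₂]; exact inv_mul_cancel₀ hA')).1
    rw [d1_smul, hC.d1_eq, mul_zero, mul_zero, dt_smul₂, dt_smul₂, inv_mul_eq_div, inv_mul_eq_div,
      zero_eq_neg] at h
    exact (mul_eq_zero.1 h).resolve_left (div_ne_zero hN hA')
  · suffices H : ∀ h : MvPolynomial (Fin 2) k,
        aeval ![lf y a / lf y a', lf y m / lf y a'] h = 0 → eval ![0, 0] h = 0 by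
      obtain ⟨V, hk, hV⟩ := exists_valuationSubring_center _ _ H
      exact ⟨V, hk, by simpa using hV 0, by simpa using hV 1⟩
    intro h hh
    let g : MvPolynomial (Fin 2) k := gI (p ^ n) (X 0) (X 1)
    let θ : MvPolynomial (Fin 2) k := θI (p ^ n) (X 0) (X 1)
    have hg : ∀ c : Fin 2 → k, eval c g = gI (p ^ n) (c 0) (c 1) := fun c => by simp [g, gI]
    have hθ : ∀ c : Fin 2 → k, eval c θ = θI (p ^ n) (c 0) (c 1) := fun c => by simp [θ, θI]
    have hvan : ∀ c : Fin 2 → k, eval c g = 0 → eval c (X 1 * (θ * h)) = 0 := by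
      intro c hc
      rw [hg] at hc
      simp only [map_mul, eval_X, hθ]
      by_contra hne
      have hc1 : c 1 ≠ 0 := left_ne_zero_of_mul hne
      have hc2 : θI (p ^ n) (c 0) (c 1) ≠ 0 := left_ne_zero_of_mul (right_ne_zero_of_mul hne)
      apply right_ne_zero_of_mul (right_ne_zero_of_mul hne)
      -- the point at which the forms `a, a', m` take the values `c 0, 1, c 1`
      let Q : Fin 3 → k := (tri a a' m)⁻¹ • (c 0 • cr a' m + (1 : k) • cr m a + c 1 • cr a a')
      have hQ : dt a Q = c 0 ∧ dt a' Q = 1 ∧ dt m Q = c 1 := by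
        have e1 : tri a' m a = tri a a' m := (tri_rotate _ _ _).symm
        have e2 : tri m a a' = tri a a' m := tri_rotate _ _ _
        refine ⟨?_, ?_, ?_⟩ <;>
        · simp only [Q, dt_smul₂, dt_add₂, dt_cr, tri_self₁₂, tri_self₁₃, e1, e2]
          field_simp; ring
      obtain ⟨hQa, hQa', hQm⟩ := hQ
      have hd := d1_gI hq (frob p n k) hσ ha ha' hm hQa'
      rw [hQa, hQm, hc, mul_zero, neg_zero] at hd
      have h1 : d1 (frob p n k) Q = 0 := (mul_eq_zero.1 hd.1).resolve_left hT
      have h2 : d2 (frob p n k) Q ≠ 0 := by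
        intro h0
        rw [h0, mul_zero] at hd
        exact mul_ne_zero hc1 hc2 hd.2.symm
      obtain ⟨r, hr, g0, g1, g2⟩ := exists_normalize h1 h2
      obtain ⟨V, hk, hV⟩ := hC.exists_center (r • Q) g0 g1 g2
      have hVa' : V.valuation (lf y a') = 1 := (val_lf hk hV a').2 (by
        rw [dt_smul₂, hQa', mul_one]; exact hr)
      have hz : ∀ i, V.valuation (![lf y a / lf y a', lf y m / lf y a'] i - f (c i)) < 1 := by
        have aux : ∀ (b : Fin 3 → k) (d : k), dt b Q = d →
            V.valuation (lf y b / lf y a' - f d) < 1 := by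
          intro b d hb
          have e : lf y b / lf y a' - f d = lf y (b + (-d) • a') / lf y a' := by
            rw [lf, lf, lf, fr_add, fr_smul, dt_add₁, dt_smul₁]
            rw [lf] at hA'
            rw [eq_div_iff hA', sub_mul, div_mul_cancel₀ _ hA', map_neg]; ring
          rw [e, map_div₀, hVa', div_one]
          apply (val_lf hk hV _).1
          rw [dt_smul₂, dt_add₁, dt_smul₁, hb, hQa']; ring
        intro i
        fin_cases i
        · exact aux _ _ hQa
        · exact aux _ _ hQm
      have hfin := val_aeval_sub V hk _ c hz h
      rw [hh, zero_sub, Valuation.map_neg] at hfin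
      by_contra hne0
      exact absurd (val_const V hk _ hne0) hfin.ne
    -- by the Nullstellensatz, `ν * θ * h` lies in the radical of `(g)`; as `ν ∤ g`, the power of `ν`
    -- cancels, and `g` vanishes at the origin while `θ` is `1` there
    have hrad : X 1 * (θ * h) ∈ (Ideal.span {g}).radical := by
      rw [← vanishingIdeal_zeroLocus_eq_radical (K := k), mem_vanishingIdeal_iff]
      intro c hc
      rw [mem_zeroLocus_iff] at hc
      have := hvan c (by simpa using hc g (Ideal.mem_span_singleton_self g))
      simpa using this
    obtain ⟨N, hN⟩ := hrad
    rw [Ideal.mem_span_singleton, mul_pow] at hN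
    obtain ⟨u, hu⟩ := hN
    have hX : ¬ (X 1 : MvPolynomial (Fin 2) k) ∣ g := by
      rintro ⟨w, hw⟩
      obtain ⟨t, ht⟩ := exists_gI_zero_ne (k := k) hq
      apply ht
      have := congrArg (eval ![t, 0]) hw
      rw [hg, map_mul] at this
      have hq3 : p ^ n < (p ^ n) ^ 3 := by nlinarith [pow_succ (p ^ n) 2, pow_two (p ^ n)]
      simpa [gI, zero_pow (show p ^ n - 1 ≠ 0 by omega),
        zero_pow (show (p ^ n) ^ 3 - 1 ≠ 0 by omega)] using this
    have hdvd : (X 1 : MvPolynomial (Fin 2) k) ^ N ∣ u :=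
      (X_prime (i := (1 : Fin 2))).pow_dvd_of_dvd_mul_left N hX ⟨_, hu.symm⟩
    obtain ⟨w, rfl⟩ := hdvd
    have hX0 : (X 1 : MvPolynomial (Fin 2) k) ^ N ≠ 0 := pow_ne_zero _ (X_ne_zero _)
    have hfin : (θ * h) ^ N = g * w := by
      apply mul_left_cancel₀ hX0
      rw [hu]; ring
    have := congrArg (eval ![0, 0]) hfin
    have hq3 : p ^ n < (p ^ n) ^ 3 := by nlinarith [pow_succ (p ^ n) 2, pow_two (p ^ n)]
    have hq2 : p ^ n < (p ^ n) ^ 2 := by nlinarith [pow_two (p ^ n)]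
    have hg0 : eval ![0, 0] g = 0 := by
      rw [hg]
      simp [gI, zero_pow (show p ^ n - 1 ≠ 0 by omega), zero_pow (show p ^ n ≠ 0 by omega),
        zero_pow (show (p ^ n) ^ 3 - 1 ≠ 0 by omega), zero_pow (show (p ^ n) ^ 3 ≠ 0 by omega)]
    have hθ0 : eval ![0, 0] θ = 1 := by
      rw [hθ]
      simp [θI, zero_pow (show p ^ n - 1 ≠ 0 by omega), 
        zero_pow (show (p ^ n) ^ 2 - 1 ≠ 0 by omega), zero_pow (show (p ^ n) ^ 2 + p ^ n ≠ 0 by omega)]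
    rw [map_pow, map_mul, map_mul, hg0, hθ0, zero_mul, one_mul] at this
    exact eq_zero_of_pow_eq_zero this

end Quadratic

section Quadratic

variable {p n : ℕ} [Fact p.Prime] {k L : Type*} [Field k] [Field L] [Algebra k L]
    [CharP k p] [CharP L p] {y : Fin 2 → L}

/-- Near `α = ν = 0` the local equation reads `ν^(q-1) = α^q` up to units. -/
theorem val_of_gI (V : ValuationSubring L) {q : ℕ} (hq : 2 ≤ q) {α ν : L} (h : gI q α ν = 0)
    (hα : V.valuation α < 1) (hν : V.valuation ν < 1) :
    V.valuation ν ^ (q - 1) = V.valuation α ^ q := by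
  have hq3 : q < q ^ 3 := by nlinarith [pow_succ q 2, pow_two q]
  have hp : ∀ {t : L} {m : ℕ}, V.valuation t < 1 → m ≠ 0 → V.valuation (t ^ m) < 1 :=
    fun ht hm => by rw [map_pow]; exact pow_lt_one₀ zero_le ht hm
  have e : ν ^ (q - 1) * (1 - (α ^ (q ^ 3 + 1) + ν ^ (q ^ 3 - q) * (1 - α ^ (q + 1)))) =
      -(α ^ q * (1 - α ^ (q ^ 3 - q))) := by
    have e1 : ν ^ (q ^ 3 - 1) = ν ^ (q - 1) * ν ^ (q ^ 3 - q) := by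
      rw [← pow_add]; congr 1; omega
    have e2 : α ^ (q ^ 3) = α ^ q * α ^ (q ^ 3 - q) := by
      rw [← pow_add]; congr 1; omega
    rw [gI, e1, e2] at h
    linear_combination h
  have h1 : V.valuation (1 - (α ^ (q ^ 3 + 1) + ν ^ (q ^ 3 - q) * (1 - α ^ (q + 1)))) = 1 := by
    apply V.valuation.map_one_sub_of_lt
    refine V.valuation.map_add_lt (hp hα (by omega)) ?_
    rw [map_mul, V.valuation.map_one_sub_of_lt (hp hα (by omega)), mul_one]
    exact hp hν (by omega)
  have := congrArg V.valuation e
  rwa [Valuation.map_neg, map_mul, map_mul, h1,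
    V.valuation.map_one_sub_of_lt (hp hα (by omega)), mul_one, mul_one, map_pow, map_pow] at this

/-- `m / a` and `a / a'` generate `L` as a field of fractions. -/
theorem IsDGZ.frac_I (hC : IsDGZ p n (k := k) y) {a a' m : Fin 3 → k}
    (hT : tri a a' m ≠ 0) (ha : lf y a ≠ 0) (ha' : lf y a' ≠ 0) (z : L) :
    ∃ r s : MvPolynomial (Fin 2) k, aeval ![lf y m / lf y a, lf y a / lf y a'] s ≠ 0 ∧
      z = aeval ![lf y m / lf y a, lf y a / lf y a'] r /
        aeval ![lf y m / lf y a, lf y a / lf y a'] s := by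
  set y' := ![lf y m / lf y a, lf y a / lf y a'] with hy'
  set K := IntermediateField.adjoin k (Set.range y') with hK
  have h0 : lf y m / lf y a ∈ K := IntermediateField.subset_adjoin _ _ ⟨0, rfl⟩
  have h1 : lf y a / lf y a' ∈ K := IntermediateField.subset_adjoin _ _ ⟨1, rfl⟩
  have h2 : lf y m / lf y a' ∈ K := by
    have := K.mul_mem h0 h1
    rwa [div_mul_div_cancel₀ ha] at this
  have hx : ∀ i, hpt y i / lf y a' ∈ K := by
    intro i
    have hc := congrFun (cramer_dual (fr (algebraMap k L) a) (fr (algebraMap k L) a')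
      (fr (algebraMap k L) m) (hpt y)) i
    simp only [cr_fr, tri_fr, Pi.smul_apply, Pi.add_apply, smul_eq_mul, fr_apply] at hc
    have hT' : algebraMap k L (tri a a' m) ≠ 0 := by rwa [Ne, map_eq_zero]
    have e : hpt y i / lf y a' = (algebraMap k L (tri a a' m))⁻¹ *
        (lf y a / lf y a' * algebraMap k L (cr a' m i) + algebraMap k L (cr m a i) +
          lf y m / lf y a' * algebraMap k L (cr a a' i)) := by
      simp only [lf] at ha' ⊢
      field_simp
      linear_combination hc
    rw [e]
    exact K.mul_mem (K.inv_mem (K.algebraMap_mem _)) (K.add_mem (K.add_mem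
      (K.mul_mem h1 (K.algebraMap_mem _)) (K.algebraMap_mem _)) (K.mul_mem h2 (K.algebraMap_mem _)))
  have hyK : ∀ i, y i ∈ K := by
    have h := fun i => K.div_mem (hx i) (hx 2)
    have e : hpt y 2 = 1 := rfl
    simp only [div_div_div_cancel_right₀ ha', e, div_one] at h
    intro i
    fin_cases i
    · exact h 0
    · exact h 1
  have hae : ∀ r : MvPolynomial (Fin 2) k, aeval y r ∈ K := by
    intro r
    have : (aeval y r : L) = aeval (fun i => (⟨y i, hyK i⟩ : K)) r := by
      rw [← IntermediateField.coe_val, ← AlgHom.comp_apply, comp_aeval]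
      rfl
    rw [this]
    exact SetLike.coe_mem _
  obtain ⟨r, s, -, rfl⟩ := hC.frac z
  obtain ⟨r₁, s₁, h⟩ := (IntermediateField.mem_adjoin_range_iff k y' _).1
    (K.div_mem (hae r) (hae s))
  by_cases hs : aeval y' s₁ = 0
  · exact ⟨0, 1, by simp, by rw [h, hs]; simp⟩
  · exact ⟨r₁, s₁, hs, h⟩

/-- Points defined over `𝔽_(q²)` but not over `𝔽_q` are not Galois points. Let `a, a'` be conjugate
lines through `v` and `v^q` respectively, and `m` the line through both points. In terms of
`s = m / a`, the local equation makes `s^(q-1)` equal to `α = a / a'` up to units at the place centred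
at `v`, where `s` is therefore a uniformizer. At the place centred at `v^q` it makes `s^(q-1)` equal
to `(a' / a)^q` up to units, so `s` vanishes there to order at least two. -/
theorem IsDGZ.not_galPt_I [IsAlgClosed k] (hC : IsDGZ p n (k := k) y) {v : Fin 3 → k}
    (hG : GalPt y v) (h2 : fr (frob p n k) (fr (frob p n k) v) = v)
    (h1 : cr v (fr (frob p n k) v) ≠ 0) : False := by
  have hq : 2 ≤ p ^ n :=
    (Fact.out : p.Prime).two_le.trans (Nat.le_self_pow hC.pos.ne' p)
  set σ := frob p n k with hσ
  set m := cr v (fr σ v) with hm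
  obtain ⟨i, hi, -⟩ := exists_dt_ne_zero h1
  set e : Fin 3 → k := Pi.single i 1 with he
  set a := cr v e with ha
  set a' := cr (fr σ v) e with ha'
  have hσe : fr σ e = e := fr_single σ i
  have hσa : fr σ a = a' := by rw [ha, ← cr_fr, hσe]
  have hσa' : fr σ a' = a := by rw [ha', ← cr_fr, hσe, h2]
  have hσm : fr σ m = -m := by rw [hm, ← cr_fr, h2, cr_anti, neg_one_smul]
  have hT : tri a a' m ≠ 0 := by
    have e1 : cr a a' = dt m e • e := by
      rw [ha, ha', cr_cr, tri_self₂₃, hm, cr_dt, tri_swap' v (fr σ v), zero_smul, zero_sub, neg_smul]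
    rw [← cr_dt, e1, dt_smul₁, dt_comm e]
    exact mul_ne_zero hi hi
  have hT' : tri a' a m ≠ 0 := by rw [tri_swap]; exact neg_ne_zero.2 hT
  have ha0 : a ≠ 0 := by rintro h; apply hT; rw [h]; simp [tri]
  have ha'0 : a' ≠ 0 := by rintro h; apply hT; rw [h]; simp [tri]
  have hA : lf y a ≠ 0 := fun h => ha0 (hC.eq_zero_of_lf h)
  have hA' : lf y a' ≠ 0 := fun h => ha'0 (hC.eq_zero_of_lf h)
  have hN : lf y m ≠ 0 := fun h => h1 (hC.eq_zero_of_lf h)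
  have hmv : dt m v = 0 := by rw [hm, cr_dt, tri_self₁₃]
  have hav : dt a v = 0 := by rw [ha, cr_dt, tri_self₁₃]
  have hma : cr m a ≠ 0 := by
    apply cr_ne_zero_of_tri (w := a'); rwa [tri_rotate]
  set s := lf y m / lf y a with hs
  have hs0 : s ≠ 0 := div_ne_zero hN hA
  obtain ⟨g₁, V₁, hk₁, hα₁, hν₁⟩ := hC.exists_center_I hσa hσa' hσm hT
  obtain ⟨g₀, V₀, hk₀, hα₀, hν₀⟩ := hC.exists_center_I hσa' hσa hσm hT'
  have r₁ := val_of_gI V₁ hq g₁ hα₁ hν₁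
  have r₀ := val_of_gI V₀ hq g₀ hα₀ hν₀
  rw [← hs] at g₀ r₀ hν₀
  set α := lf y a / lf y a' with hα
  set α' := lf y a' / lf y a with hα'
  have hα0 : α ≠ 0 := div_ne_zero hA hA'
  have hα'0 : α' ≠ 0 := div_ne_zero hA' hA
  have hsα : lf y m / lf y a' = s * α := by rw [hs, hα, div_mul_div_cancel₀ hA]
  rw [hsα] at g₁ r₁ hν₁
  have := hG m a hmv hav hma
  have := finiteDimensional_of_isAlgebraic y hC.frac (IntermediateField.adjoin k {s})
  have hq1 : p ^ n - 1 ≠ 0 := by omega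
  -- near the conjugate point, `s` vanishes to order at least two
  have H₀ : ∃ t, V₀.valuation t < 1 ∧ V₀.valuation s ≤ V₀.valuation t ^ 2 := by
    rcases le_or_gt (V₀.valuation s) (V₀.valuation α' ^ 2) with h | h
    · exact ⟨α', hα₀, h⟩
    · have hp : 0 < V₀.valuation α' := zero_lt_iff.2 (by simpa using hα'0)
      have hp' : 0 < V₀.valuation s := zero_lt_iff.2 (by simpa using hs0)
      refine ⟨s / α', ?_, ?_⟩
      · rw [map_div₀]
        refine (div_lt_one₀ hp).2 (lt_of_pow_lt_pow_left₀ (p ^ n - 1) zero_le ?_)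
        rw [r₀]
        exact pow_lt_pow_right_of_lt_one₀ hp hα₀ (by omega)
      · rw [map_div₀ V₀.valuation s α', div_pow, le_div_iff₀ (pow_pos hp 2), pow_two (V₀.valuation s)]
        exact mul_le_mul' le_rfl h.le
  obtain ⟨t, ht, hst⟩ := H₀
  have hs₁' : V₁.valuation s ^ (p ^ n - 1) = V₁.valuation α := by
    have hp : V₁.valuation α ≠ 0 := by simpa using hα0
    rw [map_mul, mul_pow] at r₁
    apply mul_right_cancel₀ (pow_ne_zero (p ^ n - 1) hp)
    rw [r₁, ← pow_succ']
    congr 1; omega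
  have hs₁ : V₁.valuation s < 1 := by
    refine lt_of_pow_lt_pow_left₀ (p ^ n - 1) zero_le ?_
    rwa [hs₁', one_pow]
  refine not_isGalois_of_ramified_of_unramified s hs0 V₀ V₁ hk₀ hk₁ t ht hst hs₁ fun z hz => ?_
  have hgen := valuation_le_of_span ![s, α] 0 (hC.frac_I hT hA hA') V₁ hk₁
    (by intro i; fin_cases i <;> simpa) (X 0) (by simp) ?_ z hz
  · simpa using hgen
  intro i
  have hq3 : p ^ n < (p ^ n) ^ 3 := by nlinarith [pow_succ (p ^ n) 2, pow_two (p ^ n)]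
  fin_cases i
  · exact ⟨1, 0, Ideal.zero_mem _, by simp⟩
  · -- `α` is a combination of `s` and a multiple of `α ^ 2` by the equation of the curve
    obtain ⟨r, hr⟩ : ∃ r, p ^ n = r + 2 := ⟨p ^ n - 2, by omega⟩
    generalize p ^ n = q at *
    refine ⟨-(X 0 ^ r * (1 - X 1 ^ (q ^ 3 + 1))) +
      X 0 ^ (q ^ 3 - 2) * X 1 ^ (q ^ 3 - q) * (1 - X 1 ^ (q + 1)), X 1 ^ (q ^ 3 - q + 1), ?_, ?_⟩
    · have : (X 1 : MvPolynomial (Fin 2) k) ^ (q ^ 3 - q + 1) = X 1 * X 1 ^ (q ^ 3 - q) := by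
        rw [pow_succ']
      rw [this]
      refine Ideal.mul_mem_mul (by simp) ?_
      simp; omega
    · have e1 : α ^ (q - 1) ≠ 0 := pow_ne_zero _ hα0
      apply mul_left_cancel₀ e1
      rw [gI, mul_pow, mul_pow] at g₁
      have e2 : α ^ (q ^ 3 - 1) = α ^ (q - 1) * α ^ (q ^ 3 - q) := by
        rw [← pow_add]; congr 1; omega
      have e3 : α ^ (q ^ 3) = α ^ (q - 1) * (α * α ^ (q ^ 3 - q)) := by
        rw [← pow_succ', ← pow_add]; congr 1; omega
      have e4 : α ^ q = α ^ (q - 1) * α := by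
        rw [← pow_succ]; congr 1; omega
      have e5 : s ^ (q - 1) = s ^ r * s := by
        rw [← pow_succ]; congr 1; omega
      have e6 : s ^ (q ^ 3 - 1) = s ^ (q ^ 3 - 2) * s := by
        rw [← pow_succ]; congr 1; omega
      rw [e2, e3, e4, e5, e6] at g₁
      simp only [map_sub, map_mul, map_add, map_neg, map_pow, map_one, aeval_X, Fin.mk_one,
        Matrix.cons_val, Pi.zero_apply, map_zero, sub_zero, mul_zero]
      rw [pow_succ' α (q ^ 3 - q)]
      linear_combination g₁

end Quadratic

/-! ### Galois points are rational -/

section Forward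

variable {p n : ℕ} [Fact p.Prime] {k L : Type*} [Field k] [Field L] [Algebra k L]
    [CharP k p] [CharP L p] {y : Fin 2 → L}

theorem exists_normalize_coord {v : Fin 3 → k} (hv : v ≠ 0) :
    ∃ c : k, ∃ i, c ≠ 0 ∧ (c • v) i = 1 := by
  obtain ⟨i, hi⟩ := Function.ne_iff.1 hv
  exact ⟨(v i)⁻¹, i, inv_ne_zero hi, by simpa using inv_mul_cancel₀ hi⟩

theorem eq_of_cr_of_one {u v : Fin 3 → k} (h : cr v u = 0) {i : Fin 3}
    (hv : v i = 1) (hu : u i = 1) : u = v := by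
  have hv0 : v ≠ 0 := by rintro rfl; simp at hv
  obtain ⟨c, hc⟩ := exists_eq_smul hv0 h
  have := congrFun hc i
  rw [hu, Pi.smul_apply, hv, smul_eq_mul, mul_one] at this
  rw [hc, ← this, one_smul]

/-- Galois points are fixed by Frobenius. -/
theorem IsDGZ.cr_frob_eq_zero_of_galPt [IsAlgClosed k] (hC : IsDGZ p n (k := k) y)
    {v : Fin 3 → k} (hG : GalPt y v) : cr v (fr (frob p n k) v) = 0 := by
  by_contra h0
  have hv : v ≠ 0 := by rintro rfl; apply h0; funext i; fin_cases i <;> simp [cr]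
  set σ := frob p n k with hσ
  by_cases h2 : d2 σ v = 0
  · by_cases h : cr v (fr σ (fr σ v)) = 0
    · obtain ⟨c, i, hc, hi⟩ := exists_normalize_coord hv
      refine hC.not_galPt_I (hG.smul hc) (eq_of_cr_of_one (i := i) ?_ hi ?_) ?_
      · rw [← hσ, fr_smul, fr_smul, cr_smul₁, cr_smul₂, h, smul_zero, smul_zero]
      · rw [fr_apply, fr_apply, hi, map_one, map_one]
      · rw [← hσ, fr_smul, cr_smul₁, cr_smul₂]
        exact smul_ne_zero hc (smul_ne_zero (by simpa using hc) h0)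
    · exact hC.not_galPt_of_d2 hG h2 h0 h
  · by_cases h1 : d1 σ v = 0
    · by_cases h : cr v (fr σ (fr σ (fr σ v))) = 0
      · obtain ⟨c, hc, g2, -, g⟩ := exists_normalize h1 h2
        refine hC.not_galPt_of_eq (hG.smul hc) g g2
          (eq_of_cr_of_one (i := 2) ?_ g2 ?_)
        · rw [← hσ, fr_smul, fr_smul, fr_smul, cr_smul₁, cr_smul₂, h, smul_zero, smul_zero]
        · rw [fr_apply, fr_apply, fr_apply, g2, map_one, map_one, map_one]
      · exact hC.not_galPt_of_ne hG h1 h2 h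
    · exact hC.not_galPt_of_d1 hG h1 h2

theorem exists_fixed_of_cr {σ : k →+* k} {v : Fin 3 → k} (hv : v ≠ 0) (h : cr v (fr σ v) = 0) :
    ∃ (w : Fin 3 → k) (c : k), c ≠ 0 ∧ v = c • w ∧ fr σ w = w := by
  obtain ⟨c, i, hc, hi⟩ := exists_normalize_coord hv
  refine ⟨c • v, c⁻¹, inv_ne_zero hc, by rw [smul_smul, inv_mul_cancel₀ hc, one_smul],
    eq_of_cr_of_one (i := i) ?_ hi (by rw [fr_apply, hi, map_one])⟩
  rw [fr_smul, cr_smul₁, cr_smul₂, h, smul_zero, smul_zero]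

end Forward

/-! ### Rational points are Galois -/

section Backward

/-- If a polynomial has as many roots in `L` as its degree and these generate `L`, then `L` is the
splitting field of a separable polynomial. -/
theorem isGalois_of_card_le {K L : Type*} [Field K] [Field L] [Algebra K L] (P : Polynomial K)
    (hP : P ≠ 0) (S : Finset L) (hS : P.natDegree ≤ S.card)
    (hroot : ∀ s ∈ S, Polynomial.aeval s P = 0)
    (htop : IntermediateField.adjoin K (S : Set L) = ⊤) : IsGalois K L := by
  classical
  have hPm : P.map (algebraMap K L) ≠ 0 := Polynomial.map_ne_zero hP
  have hsub : S ⊆ (P.map (algebraMap K L)).roots.toFinset := fun s hs => by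
    rw [Multiset.mem_toFinset, Polynomial.mem_roots hPm, Polynomial.IsRoot.def,
      Polynomial.eval_map_algebraMap]
    exact hroot s hs
  have h1 := Finset.card_le_card hsub
  have h2 := Multiset.toFinset_card_le (P.map (algebraMap K L)).roots
  have h3 := Polynomial.card_roots' (P.map (algebraMap K L))
  have h4 := Polynomial.natDegree_map (p := P) (algebraMap K L)
  have hsplit : (P.map (algebraMap K L)).Splits :=
    Polynomial.splits_iff_card_roots.2 (by omega)
  have hsep : P.Separable := by
    rw [← Polynomial.separable_map (algebraMap K L),
      ← Polynomial.nodup_roots_iff_of_splits hPm hsplit,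
      ← Multiset.toFinset_card_eq_card_iff_nodup]
    omega
  have : P.IsSplittingField K L := by
    rw [isSplittingField_iff_intermediateField]
    refine ⟨hsplit, top_le_iff.1 ?_⟩
    rw [← htop]
    apply IntermediateField.adjoin.mono
    intro s hs
    rw [Polynomial.mem_rootSet]
    exact ⟨hP, hroot s hs⟩
  exact IsGalois.of_separable_splitting_field hsep

theorem aeval_mem_intermediateField {k L : Type*} [Field k] [Field L] [Algebra k L]
    (K : IntermediateField k L) {y : Fin 2 → L} (hy : ∀ i, y i ∈ K) (r : MvPolynomial (Fin 2) k) :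
    aeval y r ∈ K := by
  have : (aeval y r : L) = aeval (fun i => (⟨y i, hy i⟩ : K)) r := by
    rw [← IntermediateField.coe_val, ← AlgHom.comp_apply, comp_aeval]
    rfl
  rw [this]
  exact SetLike.coe_mem _

variable {p n : ℕ} [Fact p.Prime] {k L : Type*} [Field k] [Field L] [Algebra k L]
    [CharP k p] [CharP L p] {y : Fin 2 → L}

/-- For linear forms `a, b, l` over `𝔽_q`, the quotient `r = l / b` is a root of a trinomial of
degree `q³` over `k(t)`, where `t = a / b`: the trinomial is `D₁(t, 1, r)` up to sign, and `D₁` is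
multiplied by a constant under linear substitutions over `𝔽_q`. -/
theorem IsDGZ.moore (hC : IsDGZ p n (k := k) y) {a b l : Fin 3 → k}
    (ha : fr (frob p n k) a = a) (hb : fr (frob p n k) b = b) (hl : fr (frob p n k) l = l)
    (hB : lf y b ≠ 0) (t r : L) (ht : t = lf y a / lf y b) (hr : r = lf y l / lf y b) :
    (t - t ^ p ^ n) * r ^ (p ^ n) ^ 3 - (t - t ^ (p ^ n) ^ 3) * r ^ p ^ n +
      (t ^ p ^ n - t ^ (p ^ n) ^ 3) * r = 0 := by
  set f := algebraMap k L with hf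
  set τ := frob p n L with hτ
  have hpow : ∀ t : L, τ t = t ^ p ^ n := fun t => iterateFrobenius_def ..
  have hd : ∀ {c : Fin 3 → k}, fr (frob p n k) c = c → ∀ z : Fin 3 → L,
      dt (fr f c) (fr τ z) = τ (dt (fr f c) z) := fun {c} hc z => by
    conv_lhs => rw [← hc, ← fr_frob f]
    rw [dt_fr]
  have h := tri_lin (fr f a) (fr f b) (fr f l) ((lf y b)⁻¹ • hpt y)
    (fr τ ((lf y b)⁻¹ • hpt y)) (fr τ (fr τ (fr τ ((lf y b)⁻¹ • hpt y))))
  have hd1 : tri ((lf y b)⁻¹ • hpt y) (fr τ ((lf y b)⁻¹ • hpt y))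
      (fr τ (fr τ (fr τ ((lf y b)⁻¹ • hpt y)))) = 0 := by
    change d1 τ _ = 0
    rw [d1_smul, hC.d1_eq, mul_zero]
  have e1 : dt (fr f a) ((lf y b)⁻¹ • hpt y) = t := by
    rw [dt_smul₂, inv_mul_eq_div, ht]; rfl
  have e2 : dt (fr f b) ((lf y b)⁻¹ • hpt y) = 1 := by
    rw [dt_smul₂]; exact inv_mul_cancel₀ hB
  have e3 : dt (fr f l) ((lf y b)⁻¹ • hpt y) = r := by
    rw [dt_smul₂, inv_mul_eq_div, hr]; rfl
  rw [hd1, mul_zero] at h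
  simp only [hd ha, hd hb, hd hl, e1, e2, e3, hpow, ← pow_mul, one_pow] at h
  rw [show (p ^ n) * (p ^ n) * (p ^ n) = (p ^ n) ^ 3 by ring] at h
  simp only [tri, Matrix.cons_val] at h
  linear_combination h

theorem aeval_trinomial {K L : Type*} [Field K] [Field L] [Algebra K L] (T : K) (r : L)
    (q : ℕ) :
    Polynomial.aeval r (Polynomial.C (T - T ^ q) * Polynomial.X ^ q ^ 3 -
      Polynomial.C (T - T ^ q ^ 3) * Polynomial.X ^ q +
      Polynomial.C (T ^ q - T ^ q ^ 3) * Polynomial.X) =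
    (algebraMap K L T - algebraMap K L T ^ q) * r ^ q ^ 3 -
      (algebraMap K L T - algebraMap K L T ^ q ^ 3) * r ^ q +
      (algebraMap K L T ^ q - algebraMap K L T ^ q ^ 3) * r := by
  simp only [map_add, map_sub, map_mul, map_pow, Polynomial.aeval_C, Polynomial.aeval_X]

/-- Rational points are Galois. All `q³` quotients `l / b`, for `l` a linear form over `𝔽_q`, are
roots of the trinomial of `IsDGZ.moore`, and they generate the function field. -/
theorem IsDGZ.galPt_of_fixed [IsAlgClosed k] (hC : IsDGZ p n (k := k) y)
    (F : Type*) [Field F] [Finite F] (hF : Nat.card F = p ^ n) [Algebra F k]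
    {v : Fin 3 → k} (hv : v ≠ 0) (hvF : fr (frob p n k) v = v) : GalPt y v := by
  classical
  have := Fintype.ofFinite F
  have hq : 2 ≤ p ^ n :=
    (Fact.out : p.Prime).two_le.trans (Nat.le_self_pow hC.pos.ne' p)
  have hq3 : p ^ n < (p ^ n) ^ 3 := by nlinarith [pow_succ (p ^ n) 2, pow_two (p ^ n)]
  set f := algebraMap k L with hf
  have hFix : ∀ l : Fin 3 → F, fr (frob p n k) (fr (algebraMap F k) l) = fr (algebraMap F k) l := by
    intro l
    funext i
    rw [fr_apply, fr_apply, iterateFrobenius_def, ← hF, Nat.card_eq_fintype_card, ← map_pow,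
      FiniteField.pow_card]
  -- two independent forms over `F` vanishing at `v`
  obtain ⟨a₀, b₀, ha₀, hb₀, hab₀, hav₀, hbv₀⟩ : ∃ a₀ b₀ : Fin 3 → k, fr (frob p n k) a₀ = a₀ ∧
      fr (frob p n k) b₀ = b₀ ∧ cr a₀ b₀ ≠ 0 ∧ dt a₀ v = 0 ∧ dt b₀ v = 0 := by
    obtain ⟨i, hi⟩ := Function.ne_iff.1 hv
    refine ⟨cr v (Pi.single (i + 1) 1), cr v (Pi.single (i + 2) 1), ?_, ?_, ?_, ?_, ?_⟩
    · rw [← cr_fr, hvF, fr_single]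
    · rw [← cr_fr, hvF, fr_single]
    · rw [cr_cr, tri_self₁₃, zero_smul, sub_zero]
      refine smul_ne_zero ?_ hv
      fin_cases i <;> simpa [tri, Pi.single_apply] using hi
    · rw [cr_dt, tri_self₁₃]
    · rw [cr_dt, tri_self₁₃]
  have hb₀0 : b₀ ≠ 0 := by
    rintro rfl; apply hab₀; funext i; fin_cases i <;> simp [cr]
  have hB₀ : lf y b₀ ≠ 0 := fun h => hb₀0 (hC.eq_zero_of_lf h)
  intro a b ha hb hab
  have hb0 : b ≠ 0 := by
    rintro rfl; apply hab; funext i; fin_cases i <;> simp [cr]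
  have hB : lf y b ≠ 0 := fun h => hb0 (hC.eq_zero_of_lf h)
  set K := IntermediateField.adjoin k {lf y a / lf y b} with hK
  have htK : lf y a / lf y b ∈ K := IntermediateField.mem_adjoin_simple_self k _
  have hKform : ∀ c, dt c v = 0 → lf y c / lf y b ∈ K := by
    intro c hc
    obtain ⟨α, β, rfl⟩ := exists_eq_add hab (w := c)
      (tri_eq_zero_of_dt hv (by rwa [dt_comm]) (by rwa [dt_comm]) (by rwa [dt_comm]))
    rw [lf_add, lf_smul, lf_smul, add_div, mul_div_assoc, mul_div_assoc, div_self hB, mul_one]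
    exact K.add_mem (K.mul_mem (K.algebraMap_mem _) htK) (K.algebraMap_mem _)
  have ht₀ : lf y a₀ / lf y b₀ ∈ K := by
    have := K.div_mem (hKform a₀ hav₀) (hKform b₀ hbv₀)
    rwa [div_div_div_cancel_right₀ hB] at this
  set t₀ := lf y a₀ / lf y b₀ with ht₀def
  have htrans : ∀ c : k, t₀ ≠ f c := by
    intro c hc
    rw [ht₀def, div_eq_iff hB₀] at hc
    have : lf y (a₀ + (-c) • b₀) = 0 := by
      rw [lf_add, lf_smul, hc, map_neg]; ring
    have h0 := hC.eq_zero_of_lf this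
    apply hab₀
    have : a₀ = c • b₀ := by
      rw [neg_smul, ← sub_eq_add_neg, sub_eq_zero] at h0; exact h0
    rw [this, cr_smul₁, cr_self, smul_zero]
  have hlead : t₀ - t₀ ^ p ^ n ≠ 0 := by
    intro h
    have ht_int : IsIntegral k t₀ := by
      refine ⟨Polynomial.X ^ p ^ n - Polynomial.X, ?_, ?_⟩
      · apply Polynomial.monic_X_pow_sub
        rw [Polynomial.degree_X]; exact_mod_cast hq
      · rw [Polynomial.eval₂_sub, Polynomial.eval₂_X_pow, Polynomial.eval₂_X]
        rw [← neg_sub, h, neg_zero]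
    obtain ⟨c, hc⟩ := minpoly.mem_range_of_degree_eq_one k t₀
      (IsAlgClosed.degree_eq_one_of_irreducible k (minpoly.irreducible ht_int))
    exact htrans c hc.symm
  let T : K := ⟨t₀, ht₀⟩
  let P : Polynomial K := Polynomial.C (T - T ^ p ^ n) * Polynomial.X ^ (p ^ n) ^ 3 -
    Polynomial.C (T - T ^ (p ^ n) ^ 3) * Polynomial.X ^ p ^ n +
    Polynomial.C (T ^ p ^ n - T ^ (p ^ n) ^ 3) * Polynomial.X
  have hP : P ≠ 0 := by
    intro h
    have := congrArg (Polynomial.coeff · ((p ^ n) ^ 3)) h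
    have h1 : (p ^ n) ^ 3 ≠ 1 := by omega
    simp only [P, Polynomial.coeff_add, Polynomial.coeff_sub, Polynomial.coeff_C_mul,
      Polynomial.coeff_X_pow, Polynomial.coeff_X, if_neg hq3.ne', if_neg h1.symm, if_true,
      Polynomial.coeff_zero, mul_one, mul_zero, sub_zero, add_zero] at this
    exact hlead (congrArg Subtype.val this)
  have hdeg : P.natDegree ≤ (p ^ n) ^ 3 := by
    refine Polynomial.natDegree_add_le_of_degree_le ((Polynomial.natDegree_sub_le_of_le
      (Polynomial.natDegree_C_mul_X_pow_le _ _)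
      ((Polynomial.natDegree_C_mul_X_pow_le _ _).trans hq3.le)).trans (max_self _).le) ?_
    exact (Polynomial.natDegree_C_mul_le _ _).trans (Polynomial.natDegree_X_le.trans (by omega))
  let ι : (Fin 3 → F) → L := fun l => lf y (fr (algebraMap F k) l) / lf y b₀
  have hι : Function.Injective ι := by
    intro l l' h
    have h' : lf y (fr (algebraMap F k) l) = lf y (fr (algebraMap F k) l') :=
      (div_left_inj' hB₀).1 h
    have h0 : lf y (fr (algebraMap F k) l + (-1 : k) • fr (algebraMap F k) l') = 0 := by
      rw [lf_add, lf_smul, h', map_neg, map_one]; ring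
    have h1 := hC.eq_zero_of_lf h0
    funext i
    have h2 := congrFun h1 i
    simp only [Pi.add_apply, Pi.smul_apply, fr_apply, smul_eq_mul, Pi.zero_apply] at h2
    apply (algebraMap F k).injective
    linear_combination h2
  refine isGalois_of_card_le P hP (Finset.univ.image ι) ?_ ?_ ?_
  · rw [Finset.card_image_of_injective _ hι, Finset.card_univ, Fintype.card_fun, Fintype.card_fin,
      ← Nat.card_eq_fintype_card, hF]
    exact hdeg
  · intro s hs
    obtain ⟨l, -, rfl⟩ := Finset.mem_image.1 hs
    rw [aeval_trinomial]
    exact hC.moore ha₀ hb₀ (hFix l) hB₀ t₀ (ι l) ht₀def rfl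
  · set M := IntermediateField.adjoin K ((Finset.univ.image ι : Finset L) : Set L) with hM
    have hMι : ∀ l, ι l ∈ M.restrictScalars k := by
      intro l
      rw [IntermediateField.mem_restrictScalars]
      apply IntermediateField.subset_adjoin
      exact Finset.mem_coe.2 (Finset.mem_image_of_mem ι (Finset.mem_univ l))
    have hx : ∀ i : Fin 3, hpt y i / lf y b₀ ∈ M.restrictScalars k := by
      intro i
      have := hMι (Pi.single i 1)
      have e : ι (Pi.single i 1) = hpt y i / lf y b₀ := by
        simp only [ι]
        congr 1
        rw [lf, fr_single, fr_single]
        fin_cases i <;> simp [dt]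
      rwa [e] at this
    have hy : ∀ i, y i ∈ M.restrictScalars k := by
      have h := fun i => (M.restrictScalars k).div_mem (hx i) (hx 2)
      have e : hpt y 2 = 1 := rfl
      simp only [div_div_div_cancel_right₀ hB₀, e, div_one] at h
      intro i
      fin_cases i
      · exact h 0
      · exact h 1
    rw [eq_top_iff]
    intro z _
    obtain ⟨r, s, -, rfl⟩ := hC.frac z
    exact (M.restrictScalars k).div_mem (aeval_mem_intermediateField _ hy r)
      (aeval_mem_intermediateField _ hy s)

end Backward

/-! ### The presentation of the function field, and counting -/

section Bridge

variable {p n : ℕ} [Fact p.Prime]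

theorem eval₂Hom_D1 {S : Type*} [CommRing S] [CharP S p] (f : GaloisField p n →+* S)
    (z : Fin 3 → S) : eval₂Hom f z (DGZ_D1 p n) = d1 (frob p n S) z := by
  rw [DGZ_D1, Matrix.det_fin_three]
  simp only [Matrix.of_apply, map_add, map_sub, map_mul, map_pow, eval₂Hom_X', Matrix.cons_val,
    d1, tri, fr_apply, iterateFrobenius_def, pow_one]
  ring

theorem eval₂Hom_D2 {S : Type*} [CommRing S] [CharP S p] (f : GaloisField p n →+* S)
    (z : Fin 3 → S) : eval₂Hom f z (DGZ_D2 p n) = d2 (frob p n S) z := by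
  rw [DGZ_D2, Matrix.det_fin_three]
  simp only [Matrix.of_apply, map_add, map_sub, map_mul, map_pow, eval₂Hom_X', Matrix.cons_val,
    d2, tri, fr_apply, iterateFrobenius_def, pow_one]
  ring

theorem map_affine {S : Type*} [CommRing S] (g : MvPolynomial (Fin 2) (DGZ_k p n) →+* S)
    (F : MvPolynomial (Fin 3) (GaloisField p n)) :
    g (DGZ_affine p n F) = eval₂Hom (g.comp (C.comp (algebraMap (GaloisField p n) (DGZ_k p n))))
      ![g (X 0), g (X 1), 1] F := by
  rw [DGZ_affine, DGZ_Fbar]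
  induction F using MvPolynomial.induction_on with
  | C a => simp [MvPolynomial.algebraMap_eq]
  | add a b ha hb => simp only [map_add, ha, hb]
  | mul_X a i ha =>
    simp only [map_mul, ha, map_X, aeval_X, eval₂Hom_X']
    congr 1
    fin_cases i <;> simp

/-- The presentation of the function field as the fraction field of `k[X, Y] / (F(X, Y, 1))`
provides coordinates as in `IsDGZ`. -/
theorem isDGZ_of_presentation (hn : 0 < n)
    (F : MvPolynomial (Fin 3) (GaloisField p n)) (hF : DGZ_D2 p n * F = DGZ_D1 p n)
    {L : Type} [Field L] [Algebra (DGZ_k p n) L] [CharP L p]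
    (φ : MvPolynomial (Fin 2) (DGZ_k p n) →ₐ[DGZ_k p n] L)
    (hker : RingHom.ker φ.toRingHom = Ideal.span {DGZ_affine p n F})
    (hfrac : ∀ y : L, ∃ a b : MvPolynomial (Fin 2) (DGZ_k p n), φ b ≠ 0 ∧ y = φ a / φ b) :
    IsDGZ p n (k := DGZ_k p n) (fun i => φ (X i)) := by
  have hφ : ∀ h, aeval (fun i => φ (X i)) h = φ h :=
    fun h => (DFunLike.congr_fun (aeval_unique φ) h).symm
  refine ⟨hn, ?_, ?_, ?_⟩
  · have h0 : φ.toRingHom (DGZ_affine p n F) = 0 :=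
      (RingHom.mem_ker).1 (hker ▸ Ideal.mem_span_singleton_self _)
    rw [map_affine] at h0
    have h1 := congrArg (eval₂Hom (φ.toRingHom.comp
      (C.comp (algebraMap (GaloisField p n) (DGZ_k p n))))
      ![φ.toRingHom (X 0), φ.toRingHom (X 1), 1]) hF
    rw [map_mul, h0, mul_zero, eval₂Hom_D1] at h1
    exact h1.symm
  · intro Q hQ h1 h2 h hh
    rw [hφ] at hh
    have hmem : h ∈ Ideal.span {DGZ_affine p n F} := hker ▸ (RingHom.mem_ker).2 hh
    obtain ⟨g, rfl⟩ := Ideal.mem_span_singleton'.1 hmem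
    have hz : ![eval ![Q 0, Q 1] (X 0), eval ![Q 0, Q 1] (X 1), 1] = Q := by
      funext i
      fin_cases i <;> simp [hQ]
    have h3 := congrArg (eval₂Hom ((eval ![Q 0, Q 1]).comp
      (C.comp (algebraMap (GaloisField p n) (DGZ_k p n)))) Q) hF
    rw [map_mul, eval₂Hom_D1, eval₂Hom_D2, h1] at h3
    rw [map_mul, map_affine, hz, (mul_eq_zero.1 h3).resolve_left h2, mul_zero]
  · intro z
    obtain ⟨a, b, hb, hz⟩ := hfrac z
    exact ⟨a, b, by rwa [hφ], by rw [hφ, hφ, hz]⟩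

theorem isGaloisPoint_iff {L : Type} [Field L] [Algebra (DGZ_k p n) L]
    (φ : MvPolynomial (Fin 2) (DGZ_k p n) →ₐ[DGZ_k p n] L) (v : Fin 3 → DGZ_k p n) :
    DGZ_IsGaloisPoint p n L φ v ↔ GalPt (fun i => φ (X i)) v := by
  have hlf : ∀ a : Fin 3 → DGZ_k p n,
      φ (C (a 0) * X 0 + C (a 1) * X 1 + C (a 2)) = lf (fun i => φ (X i)) a := fun a => by
    rw [← aeval_lpoly]
    exact DFunLike.congr_fun (aeval_unique φ) (lpoly a)
  have hdt : ∀ a : Fin 3 → DGZ_k p n, ∑ i : Fin 3, a i * v i = dt a v := fun a => by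
    rw [Fin.sum_univ_three, dt]
  unfold DGZ_IsGaloisPoint GalPt
  simp only [hdt]
  constructor
  · intro h a b ha hb hab
    have := h a b ha hb (linearIndependent_of_cr hab)
    rwa [hlf, hlf] at this
  · intro h a b ha hb hab
    rw [hlf, hlf]
    exact h a b ha hb (cr_ne_zero_of_linearIndependent hab)

theorem exists_of_frob_eq {F k : Type*} [Field F] [Finite F] [Field k] [Algebra F k]
    {q : ℕ} (hF : Nat.card F = q) {x : k} (hx : x ^ q = x) : ∃ a : F, algebraMap F k a = x := by
  classical
  have := Fintype.ofFinite F
  have hq : 1 < Fintype.card F := Fintype.one_lt_card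
  rw [Nat.card_eq_fintype_card] at hF
  subst hF
  have h0 := FiniteField.X_pow_card_sub_X_ne_zero k hq
  have hsub : Finset.univ.image (algebraMap F k) ⊆
      (Polynomial.X ^ Fintype.card F - Polynomial.X : Polynomial k).roots.toFinset := by
    intro y hy
    obtain ⟨a, -, rfl⟩ := Finset.mem_image.1 hy
    rw [Multiset.mem_toFinset, Polynomial.mem_roots h0]
    simp [← map_pow, FiniteField.pow_card]
  have hcard : (Polynomial.X ^ Fintype.card F - Polynomial.X : Polynomial k).roots.toFinset.card ≤
      (Finset.univ.image (algebraMap F k)).card := by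
    rw [Finset.card_image_of_injective _ (algebraMap F k).injective, Finset.card_univ]
    refine (Multiset.toFinset_card_le _).trans ((Polynomial.card_roots' _).trans ?_)
    rw [FiniteField.X_pow_card_sub_X_natDegree_eq k hq]
  have hmem : x ∈ (Polynomial.X ^ Fintype.card F - Polynomial.X : Polynomial k).roots.toFinset := by
    rw [Multiset.mem_toFinset, Polynomial.mem_roots h0]
    simp [hx]
  rw [← Finset.eq_of_subset_of_card_le hsub hcard] at hmem
  obtain ⟨a, -, ha⟩ := Finset.mem_image.1 hmem
  exact ⟨a, ha⟩

/-- The Galois points are the points with a representative over `𝔽_q`. -/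
theorem IsDGZ.galPt_iff {k L : Type*} [Field k] [Field L] [Algebra k L]
    [CharP k p] [CharP L p] {y : Fin 2 → L} [IsAlgClosed k] (hC : IsDGZ p n (k := k) y)
    (F : Type*) [Field F] [Finite F] (hF : Nat.card F = p ^ n) [Algebra F k]
    {v : Fin 3 → k} (hv : v ≠ 0) :
    GalPt y v ↔ ∃ (w : Fin 3 → F) (c : k), c ≠ 0 ∧ v = c • fun i => algebraMap F k (w i) := by
  constructor
  · intro hG
    obtain ⟨w, c, hc, rfl, hw⟩ := exists_fixed_of_cr hv (hC.cr_frob_eq_zero_of_galPt hG)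
    have h : ∀ i, ∃ a : F, algebraMap F k a = w i := fun i => by
      refine exists_of_frob_eq hF ?_
      rw [← iterateFrobenius_def]
      exact congrFun hw i
    choose w' hw' using h
    exact ⟨w', c, hc, by simp only [hw']⟩
  · rintro ⟨w, c, hc, rfl⟩
    refine GalPt.smul (hC.galPt_of_fixed F hF ?_ ?_) hc
    · rintro h
      exact hv (by rw [h, smul_zero])
    · funext i
      have := Fintype.ofFinite F
      rw [fr_apply, iterateFrobenius_def, ← hF, Nat.card_eq_fintype_card, ← map_pow,
        FiniteField.pow_card]

/-- The coordinatewise inclusion `F³ → k³`. -/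
def incl (F k : Type*) [Field F] [Field k] [Algebra F k] :
    (Fin 3 → F) →ₛₗ[algebraMap F k] (Fin 3 → k) where
  toFun w i := algebraMap F k (w i)
  map_add' w w' := by funext i; simp
  map_smul' c w := by funext i; simp

theorem incl_injective (F k : Type*) [Field F] [Field k] [Algebra F k] :
    Function.Injective (incl F k) := fun _ _ h =>
  funext fun i => (algebraMap F k).injective (congrFun h i)

theorem projectivization_map_incl_injective (F k : Type*) [Field F] [Field k] [Algebra F k] :
    Function.Injective (Projectivization.map (incl F k) (incl_injective F k)) := by
  intro P P' h
  induction P using Projectivization.ind with | h w hw =>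
  induction P' using Projectivization.ind with | h w' hw' =>
  rw [Projectivization.map_mk, Projectivization.map_mk, Projectivization.mk_eq_mk_iff'] at h
  obtain ⟨c, hc⟩ := h
  obtain ⟨i, hi⟩ := Function.ne_iff.1 hw'
  have hi' : w' i ≠ 0 := hi
  have hci : ∀ j, c * algebraMap F k (w' j) = algebraMap F k (w j) := congrFun hc
  have hcF : c = algebraMap F k (w i / w' i) := by
    rw [map_div₀, ← hci i, mul_div_cancel_right₀]
    simpa using hi'
  rw [Projectivization.mk_eq_mk_iff']
  refine ⟨w i / w' i, funext fun j => (algebraMap F k).injective ?_⟩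
  rw [← hci j, hcF, ← map_mul]
  rfl

/-- If `G` holds exactly on the vectors proportional to an `F`-rational one, then the points all of
whose representatives satisfy `G` are those of `ℙ²(F)`. -/
theorem card_rational_points {F k : Type*} [Field F] [Finite F] [Field k] [Algebra F k]
    {q : ℕ} (hF : Nat.card F = q) (G : (Fin 3 → k) → Prop)
    (hG : ∀ v, v ≠ 0 →
      (G v ↔ ∃ (w : Fin 3 → F) (c : k), c ≠ 0 ∧ v = c • fun i => algebraMap F k (w i))) :
    Nat.card {P : Projectivization k (Fin 3 → k) //
      ∀ (v : Fin 3 → k) (hv : v ≠ 0), Projectivization.mk k v hv = P → G v} = q ^ 2 + q + 1 := by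
  have hcard : Nat.card (Projectivization F (Fin 3 → F)) = q ^ 2 + q + 1 := by
    rw [Projectivization.card_of_finrank F (Fin 3 → F) (n := 3) (by simp), hF]
    simp [Finset.sum_range_succ]; ring
  rw [← hcard]
  symm
  refine Nat.card_congr (Equiv.ofBijective (fun P => ⟨Projectivization.map (incl F k)
    (incl_injective F k) P, ?_⟩) ⟨fun P P' h => projectivization_map_incl_injective F k
      (congrArg Subtype.val h), ?_⟩)
  · intro v hv h
    induction P using Projectivization.ind with | h w hw =>
    rw [Projectivization.map_mk, Projectivization.mk_eq_mk_iff] at h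
    obtain ⟨c, hc⟩ := h
    exact (hG v hv).2 ⟨w, c, c.ne_zero, hc.symm⟩
  · rintro ⟨P, hP⟩
    obtain ⟨w, c, hc, h⟩ := (hG P.rep P.rep_nonzero).1 (hP _ P.rep_nonzero P.mk_rep)
    have hw : w ≠ 0 := by
      rintro rfl
      apply P.rep_nonzero
      rw [h]; funext i; simp
    refine ⟨Projectivization.mk F w hw, Subtype.ext ?_⟩
    change Projectivization.map (incl F k) (incl_injective F k) (Projectivization.mk F w hw) = P
    rw [Projectivization.map_mk]
    conv_rhs => rw [← P.mk_rep]
    rw [eq_comm, Projectivization.mk_eq_mk_iff']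
    exact ⟨c, h.symm⟩

end Bridge

/-- The set of Galois points for the DGZ curve `C` is exactly the set of `𝔽_q`-rational
points of the projective plane, `Δ(C) = ℙ²(𝔽_q)`; in particular the number of Galois
points for `C` is exactly `q² + q + 1`. -/
theorem DGZ_galois_points_eq_rational_points (p n : ℕ) [Fact p.Prime] (hn : 0 < n)
    (F : MvPolynomial (Fin 3) (GaloisField p n)) (hF : DGZ_D2 p n * F = DGZ_D1 p n)
    (L : Type) [Field L] [Algebra (DGZ_k p n) L]
    (φ : MvPolynomial (Fin 2) (DGZ_k p n) →ₐ[DGZ_k p n] L)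
    (hker : RingHom.ker φ.toRingHom = Ideal.span {DGZ_affine p n F})
    (hfrac : ∀ y : L, ∃ a b : MvPolynomial (Fin 2) (DGZ_k p n), φ b ≠ 0 ∧ y = φ a / φ b) :
    (∀ v : Fin 3 → DGZ_k p n, v ≠ 0 →
      (DGZ_IsGaloisPoint p n L φ v ↔
        ∃ (w : Fin 3 → GaloisField p n) (c : DGZ_k p n), c ≠ 0 ∧
          v = c • fun i => algebraMap (GaloisField p n) (DGZ_k p n) (w i))) ∧
    Nat.card {P : Projectivization (DGZ_k p n) (Fin 3 → DGZ_k p n) //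
        ∀ (v : Fin 3 → DGZ_k p n) (hv : v ≠ 0),
          Projectivization.mk (DGZ_k p n) v hv = P → DGZ_IsGaloisPoint p n L φ v}
      = (p ^ n) ^ 2 + p ^ n + 1 := by
  have : CharP L p := charP_of_injective_algebraMap (algebraMap (DGZ_k p n) L).injective p
  have hcard : Nat.card (GaloisField p n) = p ^ n := GaloisField.card p n hn.ne'
  have hC := isDGZ_of_presentation hn F hF φ hker hfrac
  have h : ∀ v : Fin 3 → DGZ_k p n, v ≠ 0 → (DGZ_IsGaloisPoint p n L φ v ↔
      ∃ (w : Fin 3 → GaloisField p n) (c : DGZ_k p n), c ≠ 0 ∧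
        v = c • fun i => algebraMap (GaloisField p n) (DGZ_k p n) (w i)) := fun v hv =>
    (isGaloisPoint_iff φ v).trans (hC.galPt_iff (GaloisField p n) hcard hv)
  exact ⟨h, card_rational_points hcard _ h⟩
end

section
/- Let q be a prime power and let F ∈ 𝔽_q[x,y,z] be the defining polynomial of the Dickson–Guralnick–Zieve curve. For every matrix of the form σ_{γ,β} = [[1,0,0],[γ,1,β],[0,0,1]] with γ, β ∈ 𝔽_q and every matrix τ_μ = [[1,0,0],[0,μ,0],[0,0,1]] with μ ∈ 𝔽_q^×, substituting the corresponding linear change of variables into F leaves F unchanged, and the induced projective linear maps of ℙ² preserve the curve C and commute with the projection π_P from P = (0:1:0), i.e., π_P ∘ σ_{γ,β} = π_P and π_P ∘ τ_μ = π_P on C. -/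
/-!
Raising to the power `q ^ k` is a ring endomorphism of `𝔽_q[x,y,z]` fixing the constants, so
substituting `(x, y, z) ↦ M (x, y, z)` in a matrix whose columns are `(x, y, z)` raised to powers
`q ^ k` multiplies that matrix on the left by `M`. Hence the substitution multiplies both `D₁`
and `D₂` by `det M` (`DGZ_subst_det`). As `D₂ ≠ 0` (`DGZ_D2_ne_zero`), the quotient
`F = D₁ / D₂` is unchanged whenever `det M ≠ 0` (`DGZ_subst_eq_self`). This covers `σ_{γ,β}`
(determinant `1`) and `τ_μ` (determinant `μ`), and evaluating the identity at points over `k`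
shows that the induced maps preserve the curve.
-/

open MvPolynomial

/-- Substitution of the linear change of variables given by a matrix `M` into a polynomial. -/
noncomputable def DGZ_subst (p n : ℕ) [Fact p.Prime]
    (M : Matrix (Fin 3) (Fin 3) (GaloisField p n)) :
    MvPolynomial (Fin 3) (GaloisField p n) →ₐ[GaloisField p n]
      MvPolynomial (Fin 3) (GaloisField p n) :=
  MvPolynomial.bind₁ (fun i : Fin 3 => ∑ j : Fin 3, C (M i j) * X j)

lemma DGZ_subst_X_pow (p n : ℕ) [Fact p.Prime] (hn : 0 < n)
    (M : Matrix (Fin 3) (Fin 3) (GaloisField p n)) (i : Fin 3) (k : ℕ) :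
    DGZ_subst p n M (X i ^ (p ^ n) ^ k) = ∑ l : Fin 3, C (M i l) * X l ^ (p ^ n) ^ k := by
  have hcard : Nat.card (GaloisField p n) = p ^ n := GaloisField.card p n hn.ne'
  have hfix (a : GaloisField p n) : a ^ (p ^ n) ^ k = a := by
    let : Fintype (GaloisField p n) := Fintype.ofFinite _
    rw [← hcard, Nat.card_eq_fintype_card, FiniteField.pow_card_pow]
  rw [map_pow, DGZ_subst, bind₁_X_right, ← pow_mul, sum_pow_char_pow]
  refine Finset.sum_congr rfl fun l _ => ?_
  rw [pow_mul, mul_pow, ← C_pow, hfix]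

/-- The substitution given by `M` multiplies a determinant with columns `(x, y, z) ^ (q ^ k_j)`
by `det M`. -/
lemma DGZ_subst_det (p n : ℕ) [Fact p.Prime] (hn : 0 < n)
    (M : Matrix (Fin 3) (Fin 3) (GaloisField p n)) (e k : Fin 3 → ℕ)
    (he : ∀ j, e j = (p ^ n) ^ k j) :
    DGZ_subst p n M (Matrix.det (Matrix.of fun i j : Fin 3 =>
      (X i : MvPolynomial (Fin 3) (GaloisField p n)) ^ e j)) =
    C M.det * Matrix.det (Matrix.of fun i j : Fin 3 =>
      (X i : MvPolynomial (Fin 3) (GaloisField p n)) ^ e j) := by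
  rw [AlgHom.map_det, RingHom.map_det, ← Matrix.det_mul]
  congr 1
  ext1 i j
  simp only [AlgHom.mapMatrix_apply, RingHom.mapMatrix_apply, Matrix.map_apply, Matrix.of_apply,
    Matrix.mul_apply, he]
  exact DGZ_subst_X_pow p n hn M i (k j)

/-- Under `(x, y, z) ↦ (1, T, T²)` the term `x y^q z^{q²}` becomes `T^{q + 2q²}`, of higher degree
than the images of the other five terms of `D₂`. -/
lemma DGZ_D2_ne_zero (p n : ℕ) [Fact p.Prime] (hn : 0 < n) : DGZ_D2 p n ≠ 0 := by
  intro h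
  have hq : 2 ≤ p ^ n := (Fact.out : p.Prime).two_le.trans (Nat.le_self_pow hn.ne' p)
  have h1 := congrArg (fun f => (aeval (R := GaloisField p n)
    ![(1 : Polynomial (GaloisField p n)), Polynomial.X, Polynomial.X ^ 2] f).coeff
      (p ^ n + 2 * (p ^ n) ^ 2)) h
  simp only [DGZ_D2, Matrix.det_fin_three] at h1
  generalize p ^ n = q at h1 hq
  have e1 : q + 2 * q ^ 2 ≠ q ^ 2 + 2 * q := by nlinarith
  have e2 : q + 2 * q ^ 2 ≠ 1 + 2 * q ^ 2 := by omega
  have e3 : q + 2 * q ^ 2 ≠ q ^ 2 + 2 := by nlinarith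
  have e4 : q + 2 * q ^ 2 ≠ 1 + 2 * q := by nlinarith
  have e5 : q + 2 * q ^ 2 ≠ q + 2 := by nlinarith
  simp [← pow_mul, ← pow_add, ← pow_succ', Polynomial.coeff_X_pow] at h1
  grind

lemma DGZ_subst_eq_self (p n : ℕ) [Fact p.Prime] (hn : 0 < n)
    (F : MvPolynomial (Fin 3) (GaloisField p n)) (hF : DGZ_D2 p n * F = DGZ_D1 p n)
    (M : Matrix (Fin 3) (Fin 3) (GaloisField p n)) (hM : M.det ≠ 0) :
    DGZ_subst p n M F = F := by
  have h1 : DGZ_subst p n M (DGZ_D1 p n) = C M.det * DGZ_D1 p n :=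
    DGZ_subst_det p n hn M _ ![0, 1, 3] fun j => by fin_cases j <;> simp
  have h2 : DGZ_subst p n M (DGZ_D2 p n) = C M.det * DGZ_D2 p n :=
    DGZ_subst_det p n hn M _ ![0, 1, 2] fun j => by fin_cases j <;> simp
  have hne : C M.det * DGZ_D2 p n ≠ 0 :=
    mul_ne_zero ((map_ne_zero_iff _ (C_injective _ _)).2 hM) (DGZ_D2_ne_zero p n hn)
  apply mul_left_cancel₀ hne
  rw [← h2, ← map_mul, hF, h1, h2, mul_assoc, hF]

lemma DGZ_eval_mulVec (p n : ℕ) [Fact p.Prime] (F : MvPolynomial (Fin 3) (GaloisField p n))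
    (M : Matrix (Fin 3) (Fin 3) (GaloisField p n)) (u : Fin 3 → DGZ_k p n) :
    eval (Matrix.mulVec (M.map (algebraMap (GaloisField p n) (DGZ_k p n))) u) (DGZ_Fbar p n F) =
      eval u (DGZ_Fbar p n (DGZ_subst p n M F)) := by
  rw [DGZ_Fbar, DGZ_Fbar, eval_map, eval_map, ← aeval_def, ← aeval_def, DGZ_subst, aeval_bind₁]
  congr 2
  ext i
  simp [Matrix.mulVec, dotProduct]

/-- For every `σ_{γ,β} = [[1,0,0],[γ,1,β],[0,0,1]]` (`γ, β ∈ 𝔽_q`) and every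
`τ_μ = [[1,0,0],[0,μ,0],[0,0,1]]` (`μ ∈ 𝔽_q^×`), substituting the corresponding linear
change of variables into the defining polynomial `F` of the DGZ curve leaves `F` unchanged;
the induced projective maps preserve the curve `C ⊂ ℙ²(k)`, and they fix the first and
third coordinates of every vector, so they commute with the projection
`π_P : (x:y:z) ↦ (x:z)` from `P = (0:1:0)`, i.e. `π_P ∘ σ_{γ,β} = π_P` and
`π_P ∘ τ_μ = π_P` on `C`. -/
theorem DGZ_sigma_tau_invariance (p n : ℕ) [Fact p.Prime] (hn : 0 < n)
    (F : MvPolynomial (Fin 3) (GaloisField p n)) (hF : DGZ_D2 p n * F = DGZ_D1 p n)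
    (γ β μ : GaloisField p n) (hμ : μ ≠ 0) :
    DGZ_subst p n !![1, 0, 0; γ, 1, β; 0, 0, 1] F = F ∧
    DGZ_subst p n !![1, 0, 0; 0, μ, 0; 0, 0, 1] F = F ∧
    (∀ u : Fin 3 → DGZ_k p n,
      MvPolynomial.eval u (DGZ_Fbar p n F) = 0 →
        MvPolynomial.eval
          (Matrix.mulVec ((!![1, 0, 0; γ, 1, β; 0, 0, 1]).map
            (algebraMap (GaloisField p n) (DGZ_k p n))) u) (DGZ_Fbar p n F) = 0 ∧
        MvPolynomial.eval
          (Matrix.mulVec ((!![1, 0, 0; 0, μ, 0; 0, 0, 1]).map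
            (algebraMap (GaloisField p n) (DGZ_k p n))) u) (DGZ_Fbar p n F) = 0) ∧
    (∀ u : Fin 3 → DGZ_k p n,
      Matrix.mulVec ((!![1, 0, 0; γ, 1, β; 0, 0, 1]).map
          (algebraMap (GaloisField p n) (DGZ_k p n))) u 0 = u 0 ∧
      Matrix.mulVec ((!![1, 0, 0; γ, 1, β; 0, 0, 1]).map
          (algebraMap (GaloisField p n) (DGZ_k p n))) u 2 = u 2 ∧
      Matrix.mulVec ((!![1, 0, 0; 0, μ, 0; 0, 0, 1]).map
          (algebraMap (GaloisField p n) (DGZ_k p n))) u 0 = u 0 ∧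
      Matrix.mulVec ((!![1, 0, 0; 0, μ, 0; 0, 0, 1]).map
          (algebraMap (GaloisField p n) (DGZ_k p n))) u 2 = u 2) := by
  have hσ := DGZ_subst_eq_self p n hn F hF !![1, 0, 0; γ, 1, β; 0, 0, 1]
    (by simp [Matrix.det_fin_three])
  have hτ := DGZ_subst_eq_self p n hn F hF !![1, 0, 0; 0, μ, 0; 0, 0, 1]
    (by simpa [Matrix.det_fin_three] using hμ)
  refine ⟨hσ, hτ, fun u hu => ⟨?_, ?_⟩, fun u => ?_⟩
  · rw [DGZ_eval_mulVec, hσ, hu]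
  · rw [DGZ_eval_mulVec, hτ, hu]
  · simp [Matrix.mulVec, dotProduct, Fin.sum_univ_three]
end
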